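/- Let q be a power of 2. Then every irreducible complex character χ of SL_3(F_q) of even degree whose character field ℚ(χ) is not contained in ℝ has degree χ(1) = q(q²+q+1) and unitary discriminant (−1)^q·(q+1). -/

import Mathlib

open Matrix

noncomputable section

namespace Paper

/-- The character of a matrix representation. -/
def charOf {G : Type} [Group G] {n : ℕ} (ρ : G →* GL (Fin n) ℂ) : G → ℂ :=
  fun g => Matrix.trace ((ρ g : Matrix (Fin n) (Fin n) ℂ))

/-- Irreducibility of a complex matrix representation. -/
def IsIrredRep {G : Type} [Group G] {n : ℕ} (ρ : G →* GL (Fin n) ℂ) : Prop :=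
  0 < n ∧ ∀ W : Submodule ℂ (Fin n → ℂ),
    (∀ (g : G), ∀ v ∈ W, (ρ g : Matrix (Fin n) (Fin n) ℂ).mulVec v ∈ W) → W = ⊥ ∨ W = ⊤

/-- `χ` is an irreducible complex character of `G`. -/
def IsIrrChar {G : Type} [Group G] (χ : G → ℂ) : Prop :=
  ∃ (n : ℕ) (ρ : G →* GL (Fin n) ℂ), IsIrredRep ρ ∧ χ = charOf ρ

/-- The character field `ℚ(χ)`, as a subfield of `ℂ`. -/
def charField {G : Type} [Group G] (χ : G → ℂ) : Subfield ℂ :=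
  Subfield.closure (Set.range χ)

/-- The subfield of real numbers inside `ℂ`. -/
def realsIn : Subfield ℂ := Subfield.closure (Set.range ((↑) : ℝ → ℂ))

/-- The character field of `χ` is not contained in `ℝ`. -/
def NotReal {G : Type} [Group G] (χ : G → ℂ) : Prop := ¬ charField χ ≤ realsIn

/-- `χ` has unitary discriminant `d`. -/
def HasUnitaryDisc {G : Type} [Group G] (χ : G → ℂ) (d : ℂ) : Prop :=
  ∀ (n : ℕ) (ρ : G →* GL (Fin n) ℂ),
    χ = charOf ρ →
    (∀ g i j, ((ρ g : Matrix (Fin n) (Fin n) ℂ)) i j ∈ charField χ) →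
    ∀ H : Matrix (Fin n) (Fin n) ℂ,
      (∀ i j, H i j ∈ charField χ) →
      IsUnit H.det →
      H.conjTranspose = H →
      (∀ g, ((ρ g : Matrix (Fin n) (Fin n) ℂ)).conjTranspose * H *
        (ρ g : Matrix (Fin n) (Fin n) ℂ) = H) →
      ∃ z ∈ charField χ, z ≠ 0 ∧
        (-1 : ℂ) ^ (n * (n - 1) / 2) * H.det = d * (z * (starRingEnd ℂ) z)

/-- `χ` has orthogonal discriminant `d`. -/
def HasOrthDisc {G : Type} [Group G] (χ : G → ℂ) (d : ℂ) : Prop :=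
  ∀ (n : ℕ) (ρ : G →* GL (Fin n) ℂ),
    χ = charOf ρ →
    (∀ g i j, ((ρ g : Matrix (Fin n) (Fin n) ℂ)) i j ∈ charField χ) →
    ∀ H : Matrix (Fin n) (Fin n) ℂ,
      (∀ i j, H i j ∈ charField χ) →
      IsUnit H.det →
      H.transpose = H →
      (∀ g, ((ρ g : Matrix (Fin n) (Fin n) ℂ)).transpose * H *
        (ρ g : Matrix (Fin n) (Fin n) ℂ) = H) →
      ∃ z ∈ charField χ, z ≠ 0 ∧
        (-1 : ℂ) ^ (n * (n - 1) / 2) * H.det = d * z ^ 2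

/-- `χ` is a rational character. -/
def IsRationalChar {G : Type} [Group G] (χ : G → ℂ) : Prop :=
  ∀ g, ∃ r : ℚ, χ g = (r : ℂ)

/-- `χ` is the character of a representation over `ℚ`. -/
def RealizableOverQ {G : Type} [Group G] (χ : G → ℂ) : Prop :=
  ∃ (n : ℕ) (ρ : G →* GL (Fin n) ℂ), χ = charOf ρ ∧
    ∀ g i j, ∃ r : ℚ, ((ρ g : Matrix (Fin n) (Fin n) ℂ)) i j = (r : ℂ)

end Paper

namespace Paper


section General
variable {G : Type*} [Group G] {V : Type*} [AddCommGroup V] [Module ℂ V]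

/-- Irreducibility for a representation by linear maps. -/
def Irr (ρ : G →* (V →ₗ[ℂ] V)) : Prop :=
  Nontrivial V ∧ ∀ W : Submodule ℂ V, (∀ g, ∀ v ∈ W, ρ g v ∈ W) → W = ⊥ ∨ W = ⊤

lemma rho_mul (ρ : G →* (V →ₗ[ℂ] V)) (g h : G) (v : V) : ρ (g * h) v = ρ g (ρ h v) := by
  rw [map_mul]; rfl

lemma rho_one (ρ : G →* (V →ₗ[ℂ] V)) (v : V) : ρ 1 v = v := by
  rw [map_one]; rfl

lemma rho_inv_cancel (ρ : G →* (V →ₗ[ℂ] V)) (g : G) (v : V) : ρ g⁻¹ (ρ g v) = v := by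
  rw [← rho_mul, inv_mul_cancel, rho_one]

lemma rho_cancel_inv (ρ : G →* (V →ₗ[ℂ] V)) (g : G) (v : V) : ρ g (ρ g⁻¹ v) = v := by
  rw [← rho_mul, mul_inv_cancel, rho_one]

lemma rho_inj (ρ : G →* (V →ₗ[ℂ] V)) (g : G) : Function.Injective (ρ g) := by
  intro v w h
  have := congrArg (ρ g⁻¹) h
  rwa [rho_inv_cancel, rho_inv_cancel] at this

lemma schur [FiniteDimensional ℂ V] {ρ : G →* (V →ₗ[ℂ] V)} (hρ : Irr ρ) (A : V →ₗ[ℂ] V)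
    (hA : ∀ g v, A (ρ g v) = ρ g (A v)) : ∃ c : ℂ, ∀ v, A v = c • v := by
  have := hρ.1
  obtain ⟨c, hc⟩ := Module.End.exists_eigenvalue A
  refine ⟨c, ?_⟩
  have := hρ.2 (Module.End.eigenspace A c) (by
    intro g v hv
    rw [Module.End.mem_eigenspace_iff] at hv ⊢
    rw [hA, hv, map_smul])
  rcases this with h | h
  · exact absurd h hc
  · intro v
    have : v ∈ Module.End.eigenspace A c := by rw [h]; trivial
    exact Module.End.mem_eigenspace_iff.1 this

/-- a minimal nonzero subspace with a given property -/
lemma exists_min_sub [FiniteDimensional ℂ V] (p : Submodule ℂ V → Prop) (X : Submodule ℂ V)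
    (hX : X ≠ ⊥) (hp : p X) :
    ∃ Y ≤ X, Y ≠ ⊥ ∧ p Y ∧ ∀ Z ≤ Y, p Z → Z = ⊥ ∨ Z = Y := by
  obtain ⟨n, hn⟩ : ∃ n, n = Module.finrank ℂ X := ⟨_, rfl⟩
  induction n using Nat.strong_induction_on generalizing X with
  | _ n ih =>
    by_cases h : ∀ Z ≤ X, p Z → Z = ⊥ ∨ Z = X
    · exact ⟨X, le_rfl, hX, hp, h⟩
    · push Not at h
      obtain ⟨Z, hZX, hpZ, hZ, hne⟩ := h
      have hlt : Module.finrank ℂ Z < Module.finrank ℂ X :=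
        Submodule.finrank_lt_finrank_of_lt (lt_of_le_of_ne hZX hne)
      obtain ⟨Y, hYZ, hY⟩ := ih _ (by omega) Z hZ hpZ rfl
      exact ⟨Y, hYZ.trans hZX, hY⟩

lemma common_eig [FiniteDimensional ℂ V] {ι : Type*} (A : ι → (V →ₗ[ℂ] V)) (W : Submodule ℂ V)
    (hW : W ≠ ⊥) (hs : ∀ i, ∀ v ∈ W, A i v ∈ W)
    (hc : ∀ i j, ∀ v ∈ W, A i (A j v) = A j (A i v)) :
    ∃ v ∈ W, v ≠ 0 ∧ ∀ i, ∃ c : ℂ, A i v = c • v := by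
  obtain ⟨Y, hYW, hY, hpY, hmin⟩ := exists_min_sub (fun X => ∀ i, ∀ v ∈ X, A i v ∈ X) W hW hs
  obtain ⟨v, hv, hv0⟩ := (Submodule.ne_bot_iff _).1 hY
  refine ⟨v, hYW hv, hv0, fun i => ?_⟩
  have : Nontrivial Y := (Submodule.nontrivial_iff_ne_bot).2 hY
  let B : Y →ₗ[ℂ] Y := (A i).restrict (hpY i)
  obtain ⟨c, hc'⟩ := Module.End.exists_eigenvalue B
  refine ⟨c, ?_⟩
  have key := hmin (Y ⊓ Module.End.eigenspace (A i) c) inf_le_left (by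
    intro j w hw
    refine ⟨hpY j w hw.1, ?_⟩
    have h2 := Module.End.mem_eigenspace_iff.1 hw.2
    exact Module.End.mem_eigenspace_iff.2 (by rw [hc i j w (hYW hw.1), h2, map_smul]))
  rcases key with h | h
  · exfalso
    obtain ⟨w, hw⟩ := hc'.exists_hasEigenvector
    have h1 : A i w = c • (w : V) := by
      have := congrArg Subtype.val hw.apply_eq_smul
      simpa [B] using this
    have : (w : V) ∈ Y ⊓ Module.End.eigenspace (A i) c := ⟨w.2, Module.End.mem_eigenspace_iff.2 h1⟩
    rw [h] at this
    exact hw.2 (Subtype.ext this)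
  · have : v ∈ Y ⊓ Module.End.eigenspace (A i) c := by rw [h]; exact hv
    exact Module.End.mem_eigenspace_iff.1 this.2

/-- subrepresentation -/
def subRep (ρ : G →* (V →ₗ[ℂ] V)) (Y : Submodule ℂ V) (hY : ∀ g, ∀ v ∈ Y, ρ g v ∈ Y) :
    G →* (Y →ₗ[ℂ] Y) where
  toFun g := (ρ g).restrict (hY g)
  map_one' := by ext v; simp
  map_mul' g h := by ext v; simp

@[simp] lemma subRep_coe (ρ : G →* (V →ₗ[ℂ] V)) (Y : Submodule ℂ V)
    (hY : ∀ g, ∀ v ∈ Y, ρ g v ∈ Y) (g : G) (v : Y) : ((subRep ρ Y hY g v : Y) : V) = ρ g v := rfl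

lemma irr_subRep (ρ : G →* (V →ₗ[ℂ] V)) (Y : Submodule ℂ V) (hY : ∀ g, ∀ v ∈ Y, ρ g v ∈ Y)
    (h0 : Y ≠ ⊥) (hmin : ∀ Z ≤ Y, (∀ g, ∀ v ∈ Z, ρ g v ∈ Z) → Z = ⊥ ∨ Z = Y) :
    Irr (subRep ρ Y hY) := by
  refine ⟨(Submodule.nontrivial_iff_ne_bot).2 h0, fun W hW => ?_⟩
  have := hmin (W.map Y.subtype) (Submodule.map_subtype_le _ _) (by
    rintro g _ ⟨v, hv, rfl⟩
    exact ⟨subRep ρ Y hY g v, hW g v hv, rfl⟩)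
  rcases this with h | h
  · left
    exact Submodule.map_injective_of_injective Y.subtype_injective (h.trans (Submodule.map_bot _).symm)
  · right
    rw [eq_top_iff]
    rintro ⟨v, hv⟩ -
    rw [← h] at hv
    obtain ⟨w, hw, hwv⟩ := hv
    have : w = ⟨v, by rw [← h]; exact ⟨w, hw, hwv⟩⟩ := Subtype.ext hwv
    rwa [← this]

lemma irr_span {ρ : G →* (V →ₗ[ℂ] V)} (hρ : Irr ρ) {W : Submodule ℂ V} {w : V} (hw : w ≠ 0)
    (hm : ∀ g, ρ g w ∈ W) : (W = ⊤) := by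
  rcases hρ.2 (Submodule.span ℂ (Set.range fun g => ρ g w)) (by
    intro g v hv
    induction hv using Submodule.span_induction with
    | mem x hx =>
      obtain ⟨h, rfl⟩ := hx
      exact Submodule.subset_span ⟨g * h, rho_mul _ _ _ _⟩
    | zero => simp
    | add x y _ _ hx hy => rw [map_add]; exact Submodule.add_mem _ hx hy
    | smul a x _ hx => rw [map_smul]; exact Submodule.smul_mem _ _ hx) with h | h
  · exfalso
    apply hw
    have : w ∈ Submodule.span ℂ (Set.range fun g => ρ g w) :=
      Submodule.subset_span ⟨1, rho_one _ _⟩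
    rw [h] at this
    exact this
  · rw [eq_top_iff, ← h, Submodule.span_le]
    rintro _ ⟨g, rfl⟩
    exact hm g

/-- Gelfand's trick. -/
lemma gelfand [FiniteDimensional ℂ V] {ρ : G →* (V →ₗ[ℂ] V)} (hρ : Irr ρ)
    (U : Subgroup G) [Fintype U] (ψ : G → ℂ) (h1 : ψ 1 = 1)
    (hψ : ∀ u ∈ U, ∀ v ∈ U, ψ (u * v) = ψ u * ψ v)
    (τ : G → G) (hτ : ∀ g h, τ (g * h) = τ h * τ g) (hττ : ∀ g, τ (τ g) = g)
    (hτU : ∀ u ∈ U, τ u ∈ U) (hτψ : ∀ u ∈ U, ψ (τ u) = ψ u)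
    (hk : ∀ k, ∃ (u v n : G), u ∈ U ∧ v ∈ U ∧ k = u * n * v ∧
      (τ n = n ∨ ((∃ x ∈ U, ∃ y ∈ U, n * x = y * n ∧ ψ x ≠ ψ y) ∧
        (∃ x ∈ U, ∃ y ∈ U, τ n * x = y * τ n ∧ ψ x ≠ ψ y))))
    (E : Submodule ℂ V) (hE : ∀ v, v ∈ E ↔ ∀ u ∈ U, ρ u v = ψ u • v) :
    Module.finrank ℂ E ≤ 1 := by
  have hinv : ∀ u ∈ U, ψ u * ψ u⁻¹ = 1 := fun u hu => by
    rw [← hψ u hu _ (U.inv_mem hu), mul_inv_cancel, h1]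
  have hcard : (Fintype.card U : ℂ) ≠ 0 := by
    exact_mod_cast Fintype.card_ne_zero
  let e : V →ₗ[ℂ] V := (Fintype.card U : ℂ)⁻¹ • ∑ u : U, ψ (u : G)⁻¹ • ρ u
  have he : ∀ v, e v = (Fintype.card U : ℂ)⁻¹ • ∑ u : U, ψ (u : G)⁻¹ • ρ u v := by
    intro v; simp [e, LinearMap.sum_apply]
  have heE : ∀ v ∈ E, e v = v := by
    intro v hv
    rw [he, Finset.sum_congr rfl (g := fun _ => v)]
    · simp only [Finset.sum_const, Finset.card_univ]
      rw [← Nat.cast_smul_eq_nsmul ℂ, smul_smul, inv_mul_cancel₀ hcard, one_smul]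
    · intro u _
      rw [(hE v).1 hv u u.2, smul_smul, mul_comm, hinv u u.2, one_smul]
  have hue : ∀ u ∈ U, ∀ v, ρ u (e v) = ψ u • e v := by
    intro u hu v
    rw [he, map_smul, map_sum, smul_comm]
    congr 1
    rw [Finset.smul_sum]
    refine Fintype.sum_equiv (Equiv.mulLeft (⟨u, hu⟩ : U)) _ _ fun x => ?_
    simp only [Equiv.coe_mulLeft, Subgroup.coe_mul, _root_.mul_inv_rev]
    rw [map_smul, ← rho_mul, smul_smul, hψ _ (U.inv_mem x.2) _ (U.inv_mem hu)]
    congr 1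
    rw [mul_comm (ψ (x : G)⁻¹), ← mul_assoc, hinv u hu, one_mul]
  have heu : ∀ u ∈ U, ∀ v, e (ρ u v) = ψ u • e v := by
    intro u hu v
    rw [he, he, smul_comm]
    congr 1
    rw [Finset.smul_sum]
    refine Fintype.sum_equiv (Equiv.mulRight (⟨u, hu⟩ : U)) _ _ fun x => ?_
    simp only [Equiv.coe_mulRight, Subgroup.coe_mul, _root_.mul_inv_rev]
    rw [← rho_mul, smul_smul, hψ _ (U.inv_mem hu) _ (U.inv_mem x.2), ← mul_assoc, hinv u hu,
      one_mul]
  have hemem : ∀ v, e v ∈ E := fun v => (hE _).2 fun u hu => hue u hu v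
  -- vanishing
  have hvan : ∀ n, (∃ x ∈ U, ∃ y ∈ U, n * x = y * n ∧ ψ x ≠ ψ y) →
      ∀ v, e (ρ n (e v)) = 0 := by
    rintro n ⟨x, hx, y, hy, hxy, hne⟩ v
    have a1 : e (ρ (n * x) (e v)) = ψ x • e (ρ n (e v)) := by
      rw [rho_mul, hue x hx, map_smul, map_smul]
    have a2 : e (ρ (n * x) (e v)) = ψ y • e (ρ n (e v)) := by
      rw [hxy, rho_mul, heu y hy]
    have : (ψ x - ψ y) • e (ρ n (e v)) = 0 := by rw [sub_smul, ← a1, ← a2, sub_self]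
    exact (smul_eq_zero.1 this).resolve_left (sub_ne_zero.2 hne)
  have hA : ∀ k v, e (ρ (τ k) (e v)) = e (ρ k (e v)) := by
    intro k v
    obtain ⟨u, u', n, hu, hu', rfl, hn⟩ := hk k
    have b1 : e (ρ (u * n * u') (e v)) = ψ u • ψ u' • e (ρ n (e v)) := by
      rw [rho_mul, rho_mul, hue u' hu', heu u hu, map_smul, map_smul]
    have b2 : e (ρ (τ (u * n * u')) (e v)) = ψ u • ψ u' • e (ρ (τ n) (e v)) := by
      rw [hτ, hτ, ← mul_assoc, rho_mul, rho_mul, hue _ (hτU u hu), heu _ (hτU u' hu'), map_smul,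
        map_smul, hτψ u hu, hτψ u' hu', smul_comm]
    rw [b1, b2]
    rcases hn with h | ⟨h, h'⟩
    · rw [h]
    · rw [hvan n h, hvan _ h']
  have hprod : ∀ g h v, e (ρ g (e (ρ h (e v)))) =
      (Fintype.card U : ℂ)⁻¹ • ∑ u : U, ψ (u : G)⁻¹ • e (ρ (g * u * h) (e v)) := by
    intro g h v
    conv_lhs => rw [he (ρ h (e v))]
    simp only [map_smul, map_sum, rho_mul]
  let τU : U ≃ U :=
    { toFun := fun u => ⟨τ u, hτU u u.2⟩
      invFun := fun u => ⟨τ u, hτU u u.2⟩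
      left_inv := fun u => Subtype.ext (hττ u)
      right_inv := fun u => Subtype.ext (hττ u) }
  have hτinv : ∀ u ∈ U, ψ (τ u)⁻¹ = ψ u⁻¹ := by
    intro u hu
    have p1 := hinv u hu
    have p2 := hinv _ (hτU u hu)
    rw [hτψ u hu] at p2
    have h0 : ψ u ≠ 0 := left_ne_zero_of_mul_eq_one p1
    exact mul_left_cancel₀ h0 (p2.trans p1.symm)
  have hcomm : ∀ g h v, e (ρ g (e (ρ h (e v)))) = e (ρ h (e (ρ g (e v)))) := by
    intro g h v
    have : ∀ v, e (ρ g (e (ρ h (e v)))) = e (ρ (τ h) (e (ρ (τ g) (e v)))) := by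
      intro v
      rw [hprod, hprod]
      congr 1
      refine Fintype.sum_equiv τU _ _ fun u => ?_
      change _ = ψ (τ u)⁻¹ • e (ρ (τ h * τ u * τ g) (e v))
      rw [hτinv u u.2, ← hA (g * u * h), hτ, hτ, mul_assoc]
    rw [this, hA, ← heE _ (hemem (ρ (τ g) (e v))), hA, heE _ (hemem _)]
  by_cases hE0 : E = ⊥
  · rw [hE0]; simp
  obtain ⟨v, hv, hv0, hev⟩ := common_eig (fun g : G => e ∘ₗ ρ g ∘ₗ e) E hE0
    (fun g v _ => hemem _) (by
      intro g h v hv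
      simp only [LinearMap.comp_apply]
      rw [heE _ (hemem (ρ h (e v))), heE _ (hemem (ρ g (e v)))]
      exact hcomm g h v)
  have htop : (Submodule.comap e (Submodule.span ℂ {v})) = ⊤ := by
    refine irr_span hρ hv0 fun g => ?_
    obtain ⟨c, hc⟩ := hev g
    simp only [LinearMap.comp_apply, heE v hv] at hc
    rw [Submodule.mem_comap, hc]
    exact Submodule.smul_mem _ _ (Submodule.mem_span_singleton_self v)
  have hle : E ≤ Submodule.span ℂ {v} := by
    intro x hx
    have : x ∈ Submodule.comap e (Submodule.span ℂ {v}) := by rw [htop]; trivial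
    rw [Submodule.mem_comap, heE x hx] at this
    exact this
  exact (Submodule.finrank_mono hle).trans (by simpa using finrank_span_le_card ({v} : Set V))

end General


section General2
variable {G : Type*} [Group G]

lemma finrank_le_of_rho {V : Type*} [AddCommGroup V] [Module ℂ V] [FiniteDimensional ℂ V]
    (ρ : G →* (V →ₗ[ℂ] V)) (g : G) (S S' : Submodule ℂ V) (h : ∀ v ∈ S, ρ g v ∈ S') :
    Module.finrank ℂ S ≤ Module.finrank ℂ S' := by
  have := LinearMap.finrank_le_finrank_of_injective (f := (ρ g).restrict h)
  apply this
  intro a b hab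
  have := congrArg Subtype.val hab
  exact Subtype.ext (rho_inj ρ g this)

lemma finrank_eq_of_rho {V : Type*} [AddCommGroup V] [Module ℂ V] [FiniteDimensional ℂ V]
    (ρ : G →* (V →ₗ[ℂ] V)) (g : G) (S S' : Submodule ℂ V) (h : ∀ v ∈ S, ρ g v ∈ S')
    (hback : ∀ v ∈ S', ρ g⁻¹ v ∈ S) :
    Module.finrank ℂ S = Module.finrank ℂ S' :=
  le_antisymm (finrank_le_of_rho ρ g S S' h) (finrank_le_of_rho ρ g⁻¹ S' S hback)

/-- dimension of a representation with a system of imprimitivity -/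
lemma imprim {V : Type*} [NormedAddCommGroup V] [InnerProductSpace ℂ V] [FiniteDimensional ℂ V]
    [Finite G] {ρ : G →* (V →ₗ[ℂ] V)} (hρ : Irr ρ)
    (hu : ∀ g v w, inner ℂ (ρ g v) (ρ g w) = inner ℂ v w)
    (P : Subgroup G) (W : Submodule ℂ V) (hW0 : W ≠ ⊥) (hW : ∀ p ∈ P, ∀ v ∈ W, ρ p v ∈ W)
    (hor : ∀ g, g ∉ P → ∀ v ∈ W, ∀ v' ∈ W, inner ℂ v (ρ g v') = 0) :
    Module.finrank ℂ V = P.index * Module.finrank ℂ W := by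
  classical
  have : Fintype (G ⧸ P) := Fintype.ofFinite _
  let S : G ⧸ P → Submodule ℂ V := fun i => W.map (ρ i.out)
  have hS : ∀ i, Module.finrank ℂ (S i) = Module.finrank ℂ W := fun i =>
    (LinearEquiv.finrank_eq (Submodule.equivMapOfInjective (ρ i.out) (rho_inj ρ _) W)).symm
  have hmem : ∀ g, ∀ v ∈ W, ρ g v ∈ S (QuotientGroup.mk g) := by
    intro g v hv
    obtain ⟨p, hp⟩ := QuotientGroup.mk_out_eq_mul P g
    refine ⟨ρ (p : G)⁻¹ v, hW _ (P.inv_mem p.2) v hv, ?_⟩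
    rw [← rho_mul, hp, mul_inv_cancel_right]
  have horth : OrthogonalFamily ℂ (fun i => S i) fun i => (S i).subtypeₗᵢ := by
    rintro i j hij ⟨_, v, hv, rfl⟩ ⟨_, w, hw, rfl⟩
    change inner ℂ (ρ i.out v) (ρ j.out w) = 0
    have : inner ℂ (ρ i.out v) (ρ j.out w) = inner ℂ v (ρ (i.out⁻¹ * j.out) w) := by
      rw [← hu i.out v, ← rho_mul, mul_inv_cancel_left]
    rw [this]
    refine hor _ ?_ v hv w hw
    intro hmem
    apply hij
    rw [← QuotientGroup.out_eq' i, ← QuotientGroup.out_eq' j]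
    exact QuotientGroup.eq.2 hmem
  obtain ⟨w, hw, hw0⟩ := (Submodule.ne_bot_iff _).1 hW0
  have htop : iSup S = ⊤ := irr_span hρ hw0 fun g =>
    (le_iSup S (QuotientGroup.mk g)) (hmem g w hw)
  have hintern := DirectSum.isInternal_submodule_of_iSupIndep_of_iSup_eq_top horth.independent htop
  have := LinearEquiv.finrank_eq (LinearEquiv.ofBijective (DirectSum.coeLinearMap S) hintern)
  rw [← this, Module.finrank_directSum]
  simp only [hS]
  rw [Finset.sum_const, Finset.card_univ, smul_eq_mul, Subgroup.index, Nat.card_eq_fintype_card]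

/-- eigenspaces of a one-parameter group -/
def eigS {V : Type*} [AddCommGroup V] [Module ℂ V] {F : Type*} (X : F → (V →ₗ[ℂ] V))
    (c : F → ℂ) : Submodule ℂ V where
  carrier := {v | ∀ y, X y v = c y • v}
  add_mem' := by
    intro a b ha hb y
    rw [map_add, ha y, hb y, smul_add]
  zero_mem' := by intro y; simp
  smul_mem' := by
    intro r a ha y
    rw [map_smul, ha y, smul_comm]

lemma mem_eigS {V : Type*} [AddCommGroup V] [Module ℂ V] {F : Type*} {X : F → (V →ₗ[ℂ] V)}
    {c : F → ℂ} {v : V} : v ∈ eigS X c ↔ ∀ y, X y v = c y • v := Iff.rfl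

lemma finrank_decomp0 {V : Type*} [AddCommGroup V] [Module ℂ V] [FiniteDimensional ℂ V]
    {F : Type*} [Field F] [Fintype F] (φ : AddChar F ℂ) (hφ : φ.IsPrimitive)
    (X : F → (V →ₗ[ℂ] V)) (h0 : ∀ v, X 0 v = v) (hX : ∀ y z v, X (y + z) v = X y (X z v)) :
    Module.finrank ℂ V = ∑ a : F, Module.finrank ℂ (eigS X fun y => φ (a * y)) := by
  classical
  have hcard : (Fintype.card F : ℂ) ≠ 0 := by exact_mod_cast Fintype.card_ne_zero
  let e : F → (V →ₗ[ℂ] V) := fun a => (Fintype.card F : ℂ)⁻¹ • ∑ y : F, φ (a * (-y)) • X y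
  have he : ∀ a v, e a v = (Fintype.card F : ℂ)⁻¹ • ∑ y : F, φ (a * (-y)) • X y v := by
    intro a v; simp [e, LinearMap.sum_apply]
  have hproj : ∀ a, LinearMap.IsProj (eigS X fun y => φ (a * y)) (e a) := by
    intro a
    constructor
    · intro v z
      rw [he, map_smul, map_sum, smul_comm]
      congr 1
      rw [Finset.smul_sum]
      refine Fintype.sum_equiv (Equiv.addLeft z) _ _ fun y => ?_
      simp only [Equiv.coe_addLeft]
      rw [map_smul, ← hX, smul_smul, ← AddChar.map_add_eq_mul]
      congr 2
      ring
    · intro v hv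
      rw [he, Finset.sum_congr rfl (g := fun _ => v)]
      · simp only [Finset.sum_const, Finset.card_univ]
        rw [← Nat.cast_smul_eq_nsmul ℂ, smul_smul, inv_mul_cancel₀ hcard, one_smul]
      · intro y _
        rw [mem_eigS.1 hv y, smul_smul, ← AddChar.map_add_eq_mul]
        ring_nf
        simp
  have hsum : ∑ a, e a = LinearMap.id := by
    ext v
    rw [LinearMap.sum_apply]
    simp only [he]
    rw [← Finset.smul_sum, Finset.sum_comm]
    simp_rw [← Finset.sum_smul]
    have : ∀ y : F, ∑ a, φ (a * (-y)) = if y = 0 then (Fintype.card F : ℂ) else 0 := by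
      intro y
      rw [AddChar.sum_mulShift _ hφ]
      simp
    simp_rw [this]
    simp [h0, smul_smul]
  have htr := congrArg (LinearMap.trace ℂ V) hsum
  rw [map_sum, LinearMap.trace_id] at htr
  have h2 : ∀ a, LinearMap.trace ℂ V (e a) =
      (Module.finrank ℂ (eigS X fun y => φ (a * y)) : ℂ) := fun a => (hproj a).trace
  simp_rw [h2] at htr
  exact_mod_cast htr.symm

lemma finrank_decomp {V : Type*} [AddCommGroup V] [Module ℂ V] [FiniteDimensional ℂ V]
    {F : Type*} [Field F] [Fintype F] (φ : AddChar F ℂ) (hφ : φ.IsPrimitive)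
    (X : F → (V →ₗ[ℂ] V)) (h0 : ∀ v, X 0 v = v) (hX : ∀ y z v, X (y + z) v = X y (X z v))
    (Y : Submodule ℂ V) (hY : ∀ y, ∀ v ∈ Y, X y v ∈ Y) :
    Module.finrank ℂ Y =
      ∑ a : F, Module.finrank ℂ (Y ⊓ eigS X fun y => φ (a * y) : Submodule ℂ V) := by
  rw [finrank_decomp0 φ hφ (fun y => (X y).restrict (hY y)) (fun v => Subtype.ext (h0 _))
    (fun y z v => Subtype.ext (hX _ _ _))]
  refine Finset.sum_congr rfl fun a _ => ?_
  have : (eigS (fun y => (X y).restrict (hY y)) fun y => φ (a * y)) =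
      (Y ⊓ eigS X fun y => φ (a * y) : Submodule ℂ V).comap Y.subtype := by
    ext v
    simp only [mem_eigS, Submodule.mem_comap, Submodule.mem_inf, Submodule.subtype_apply,
      SetLike.coe_mem, true_and]
    refine forall_congr' fun y => ?_
    rw [Subtype.ext_iff]
    rfl
  rw [this]
  exact LinearEquiv.finrank_eq (Submodule.comapSubtypeEquivOfLe inf_le_left)

/-- averaged inner product -/
abbrev avgCore [Fintype G] {V : Type*} [AddCommGroup V] [Module ℂ V] [FiniteDimensional ℂ V]
    (ρ : G →* (V →ₗ[ℂ] V)) : InnerProductSpace.Core ℂ V where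
  inner v w := ∑ g, ∑ i, star ((Module.finBasis ℂ V).repr (ρ g v) i) *
    (Module.finBasis ℂ V).repr (ρ g w) i
  conj_inner_symm v w := by
    simp [map_sum, mul_comm]
  re_inner_nonneg v := by
    simp only [map_sum]
    refine Finset.sum_nonneg fun g _ => Finset.sum_nonneg fun i _ => ?_
    rw [RCLike.star_def, RCLike.conj_mul]
    norm_cast
    positivity
  add_left x y z := by
    simp [add_mul, Finset.sum_add_distrib]
  smul_left x y r := by
    simp [Finset.mul_sum, mul_assoc]
  definite v h := by
    have h1 : ∑ g : G, ∑ i, ‖(Module.finBasis ℂ V).repr (ρ g v) i‖ ^ 2 = 0 := by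
      have h' : ((∑ g : G, ∑ i, ‖(Module.finBasis ℂ V).repr (ρ g v) i‖ ^ 2 : ℝ) : ℂ) = 0 := by
        rw [← h]
        push_cast
        refine Finset.sum_congr rfl fun g _ => Finset.sum_congr rfl fun i _ => ?_
        rw [RCLike.star_def, RCLike.conj_mul]
        rfl
      exact_mod_cast h'
    rw [Finset.sum_eq_zero_iff_of_nonneg
      (fun g _ => Finset.sum_nonneg fun i _ => by positivity)] at h1
    have h2 := h1 1 (Finset.mem_univ _)
    rw [Finset.sum_eq_zero_iff_of_nonneg (fun i _ => by positivity)] at h2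
    rw [← (Module.finBasis ℂ V).repr.map_eq_zero_iff]
    ext i
    have := h2 i (Finset.mem_univ _)
    rw [rho_one] at this
    simpa using this

lemma avgCore_inv [Fintype G] {V : Type*} [AddCommGroup V] [Module ℂ V] [FiniteDimensional ℂ V]
    (ρ : G →* (V →ₗ[ℂ] V)) (g : G) (v w : V) :
    (avgCore ρ).inner (ρ g v) (ρ g w) = (avgCore ρ).inner v w := by
  change ∑ h, ∑ i, _ = ∑ h, ∑ i, _
  refine Fintype.sum_equiv (Equiv.mulRight g) _ _ fun h => ?_
  simp only [Equiv.coe_mulRight, rho_mul]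

end General2


section Elements
variable {F : Type} [Field F]

/-- upper unitriangular matrix -/
def Um (a b c : F) : Matrix (Fin 3) (Fin 3) F := !![1, a, b; 0, 1, c; 0, 0, 1]

lemma Um_mul (a b c a' b' c' : F) :
    Um a b c * Um a' b' c' = Um (a + a') (b + b' + a * c') (c + c') := by
  ext i j
  fin_cases i <;> fin_cases j <;> simp [Um, Matrix.mul_apply, Matrix.vecMul, dotProduct, Fin.sum_univ_three] <;> ring

lemma Um_zero : Um (0 : F) 0 0 = 1 := by
  ext i j
  fin_cases i <;> fin_cases j <;> simp [Um]

/-- underlying matrix -/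
def mt (g : SpecialLinearGroup (Fin 3) F) : Matrix (Fin 3) (Fin 3) F := g.1

lemma mt_mul (g h : SpecialLinearGroup (Fin 3) F) : mt (g * h) = mt g * mt h := rfl
lemma mt_one : mt (1 : SpecialLinearGroup (Fin 3) F) = 1 := rfl
lemma mt_inj {g h : SpecialLinearGroup (Fin 3) F} (e : mt g = mt h) : g = h := Subtype.ext e
lemma mt_det (g : SpecialLinearGroup (Fin 3) F) : (mt g).det = 1 := g.2

/-- unitriangular elements -/
def ux (a b c : F) : SpecialLinearGroup (Fin 3) F := ⟨Um a b c, by simp [Um, Matrix.det_fin_three]⟩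

lemma ux_val (a b c : F) : mt (ux a b c) = Um a b c := rfl

lemma ux_mul (a b c a' b' c' : F) :
    ux a b c * ux a' b' c' = ux (a + a') (b + b' + a * c') (c + c') :=
  Subtype.ext (Um_mul ..)

lemma ux_zero : ux (0 : F) 0 0 = 1 := Subtype.ext Um_zero

lemma ux_inv (a b c : F) : (ux a b c)⁻¹ = ux (-a) (a * c - b) (-c) := by
  rw [inv_eq_iff_mul_eq_one, ux_mul, ← ux_zero]
  congr 1 <;> ring

variable [CharP F 2]

lemma neg1 : (-1 : F) = 1 := by
  rw [CharTwo.neg_eq]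

/-- first simple reflection -/
def sS : SpecialLinearGroup (Fin 3) F :=
  ⟨!![0, 1, 0; 1, 0, 0; 0, 0, 1], by simp [Matrix.det_fin_three, neg1]⟩

/-- second simple reflection -/
def rS : SpecialLinearGroup (Fin 3) F :=
  ⟨!![1, 0, 0; 0, 0, 1; 0, 1, 0], by simp [Matrix.det_fin_three, neg1]⟩


lemma sS_val : mt (sS : SpecialLinearGroup (Fin 3) F) = !![0, 1, 0; 1, 0, 0; 0, 0, 1] := rfl
lemma rS_val : mt (rS : SpecialLinearGroup (Fin 3) F) = !![1, 0, 0; 0, 0, 1; 0, 1, 0] := rfl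
lemma sr_val : mt (sS * rS : SpecialLinearGroup (Fin 3) F) = !![0, 0, 1; 1, 0, 0; 0, 1, 0] := by
  rw [mt_mul, sS_val, rS_val]
  simp
lemma rs_val : mt (rS * sS : SpecialLinearGroup (Fin 3) F) = !![0, 1, 0; 0, 0, 1; 1, 0, 0] := by
  rw [mt_mul, sS_val, rS_val]
  simp
lemma srs_val : mt (sS * rS * sS : SpecialLinearGroup (Fin 3) F) =
    !![0, 0, 1; 0, 1, 0; 1, 0, 0] := by
  rw [mt_mul, sr_val, sS_val]
  simp

/-- diagonal matrix -/
def Dm (a b c : F) : Matrix (Fin 3) (Fin 3) F := !![a, 0, 0; 0, b, 0; 0, 0, c]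

/-- Weyl elements -/
def IsW (n : SpecialLinearGroup (Fin 3) F) : Prop :=
  n = 1 ∨ n = sS ∨ n = rS ∨ n = sS * rS ∨ n = rS * sS ∨ n = sS * rS * sS

/-- existence of a Bruhat decomposition -/
def Bru (M : Matrix (Fin 3) (Fin 3) F) : Prop :=
  ∃ a b c a' b' c' t1 t2 t3 : F, t1 ≠ 0 ∧ t2 ≠ 0 ∧ t3 ≠ 0 ∧ ∃ n, IsW n ∧
    M = Um a b c * Dm t1 t2 t3 * mt n * Um a' b' c'

lemma Bru_of (M : Matrix (Fin 3) (Fin 3) F) (a b c a' b' c' : F)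
    (h : Bru (Um a b c * M * Um a' b' c')) : Bru M := by
  obtain ⟨x, y, z, x', y', z', t1, t2, t3, h1, h2, h3, n, hn, h⟩ := h
  refine ⟨-a + x, a * c - b + y + (-a) * z, -c + z, x' + -a', y' + (a' * c' - b') + x' * (-c'), z' + -c',
    t1, t2, t3, h1, h2, h3, n, hn, ?_⟩
  rw [← Um_mul, ← Um_mul]
  have e1 : Um (-a) (a * c - b) (-c) * Um a b c = 1 := by
    rw [Um_mul, ← Um_zero]; congr 1 <;> ring
  have e2 : Um a' b' c' * Um (-a') (a' * c' - b') (-c') = 1 := by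
    rw [Um_mul, ← Um_zero]; congr 1 <;> ring
  calc M = (Um (-a) (a * c - b) (-c) * Um a b c) * M *
        (Um a' b' c' * Um (-a') (a' * c' - b') (-c')) := by rw [e1, e2]; simp
    _ = Um (-a) (a * c - b) (-c) * (Um a b c * M * Um a' b' c') *
        Um (-a') (a' * c' - b') (-c') := by simp only [Matrix.mul_assoc]
    _ = _ := by rw [h]; simp only [Matrix.mul_assoc]

lemma Bru_mono (n : SpecialLinearGroup (Fin 3) F) (hn : IsW n) (t1 t2 t3 : F)
    (h1 : t1 ≠ 0) (h2 : t2 ≠ 0) (h3 : t3 ≠ 0) (M : Matrix (Fin 3) (Fin 3) F)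
    (h : M = Dm t1 t2 t3 * mt n) : Bru M :=
  ⟨0, 0, 0, 0, 0, 0, t1, t2, t3, h1, h2, h3, n, hn, by rw [h, Um_zero]; simp⟩

lemma bru_c0 (z p q m n : F) (h : det !![z, 0, 0; 0, p, q; 0, m, n] ≠ 0) :
    Bru !![z, 0, 0; 0, p, q; 0, m, n] := by
  simp [Matrix.det_fin_three] at h
  have hz : z ≠ 0 := by rintro rfl; simp at h
  by_cases hm : m = 0
  · subst hm
    have hp : p ≠ 0 := by rintro rfl; simp at h
    have hn : n ≠ 0 := by rintro rfl; simp at h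
    refine Bru_of _ 0 0 0 0 0 (-q / p) (Bru_mono 1 (by simp [IsW]) z p n hz hp hn _ ?_)
    ext i j
    fin_cases i <;> fin_cases j <;>
      simp [Um, Dm, Matrix.mul_apply, Fin.sum_univ_three, mt_one, sS_val, rS_val, sr_val, rs_val, srs_val] <;> (try field_simp) <;> (try ring)
  · have hq : q - p * n / m ≠ 0 := by
      intro h0
      apply h
      have : q = p * n / m := by linear_combination h0
      rw [this]; field_simp; ring
    refine Bru_of _ 0 0 (-p / m) 0 0 (-n / m)
      (Bru_mono rS (by simp [IsW]) z (q - p * n / m) m hz hq hm _ ?_)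
    ext i j
    fin_cases i <;> fin_cases j <;>
      simp [Um, Dm, Matrix.mul_apply, Fin.sum_univ_three, mt_one, sS_val, rS_val, sr_val, rs_val, srs_val] <;> (try field_simp) <;> (try ring)

lemma bru_c1 (z p q m n : F) (h : det !![0, p, q; z, 0, 0; 0, m, n] ≠ 0) :
    Bru !![0, p, q; z, 0, 0; 0, m, n] := by
  simp [Matrix.det_fin_three] at h
  have hz : z ≠ 0 := by rintro rfl; simp at h
  by_cases hm : m = 0
  · subst hm
    have hp : p ≠ 0 := by rintro rfl; simp at h
    have hn : n ≠ 0 := by rintro rfl; simp at h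
    refine Bru_of _ 0 0 0 0 0 (-q / p) (Bru_mono sS (by simp [IsW]) p z n hp hz hn _ ?_)
    ext i j
    fin_cases i <;> fin_cases j <;>
      simp [Um, Dm, Matrix.mul_apply, Fin.sum_univ_three, mt_one, sS_val, rS_val, sr_val, rs_val, srs_val] <;> (try field_simp) <;> (try ring)
  · have hq : q - p * n / m ≠ 0 := by
      intro h0
      apply h
      have : q = p * n / m := by linear_combination h0
      rw [this]; field_simp; ring
    refine Bru_of _ 0 (-p / m) 0 0 0 (-n / m)
      (Bru_mono (sS * rS) (by simp [IsW]) (q - p * n / m) z m hq hz hm _ ?_)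
    ext i j
    fin_cases i <;> fin_cases j <;>
      simp [Um, Dm, Matrix.mul_apply, Fin.sum_univ_three, mt_one, sS_val, rS_val, sr_val, rs_val, srs_val] <;> (try field_simp) <;> (try ring)

lemma bru_c2 (z p q m n : F) (h : det !![0, p, q; 0, m, n; z, 0, 0] ≠ 0) :
    Bru !![0, p, q; 0, m, n; z, 0, 0] := by
  simp [Matrix.det_fin_three] at h
  have hz : z ≠ 0 := by rintro rfl; simp at h
  by_cases hm : m = 0
  · subst hm
    have hp : p ≠ 0 := by rintro rfl; simp at h
    have hn : n ≠ 0 := by rintro rfl; simp at h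
    refine Bru_of _ 0 0 0 0 0 (-q / p) (Bru_mono (rS * sS) (by simp [IsW]) p n z hp hn hz _ ?_)
    ext i j
    fin_cases i <;> fin_cases j <;>
      simp [Um, Dm, Matrix.mul_apply, Fin.sum_univ_three, mt_one, sS_val, rS_val, sr_val, rs_val, srs_val] <;> (try field_simp) <;> (try ring)
  · have hq : q - p * n / m ≠ 0 := by
      intro h0
      apply h
      have : q = p * n / m := by linear_combination h0
      rw [this]; field_simp; ring
    refine Bru_of _ (-p / m) 0 0 0 0 (-n / m)
      (Bru_mono (sS * rS * sS) (by simp [IsW]) (q - p * n / m) m z hq hm hz _ ?_)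
    ext i j
    fin_cases i <;> fin_cases j <;>
      simp [Um, Dm, Matrix.mul_apply, Fin.sum_univ_three, mt_one, sS_val, rS_val, sr_val, rs_val, srs_val] <;> (try field_simp) <;> (try ring)

lemma det_Um3 (a b c a' b' c' : F) (M : Matrix (Fin 3) (Fin 3) F) :
    det (Um a b c * M * Um a' b' c') = det M := by
  have h : ∀ a b c : F, det (Um a b c) = 1 := fun a b c => (ux a b c).2
  rw [det_mul, det_mul, h, h, one_mul, mul_one]

lemma bruhat (M : Matrix (Fin 3) (Fin 3) F) (h : det M ≠ 0) : Bru M := by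
  by_cases h2 : M 2 0 = 0
  · by_cases h1 : M 1 0 = 0
    · have h0 : M 0 0 ≠ 0 := by
        intro h0
        apply h
        rw [Matrix.det_fin_three, h0, h1, h2]; ring
      refine Bru_of _ 0 0 0 (-M 0 1 / M 0 0) (-M 0 2 / M 0 0) 0 ?_
      rw [← det_Um3 0 0 0 (-M 0 1 / M 0 0) (-M 0 2 / M 0 0) 0] at h
      have e : Um 0 0 0 * M * Um (-M 0 1 / M 0 0) (-M 0 2 / M 0 0) 0 =
          !![M 0 0, 0, 0; 0, M 1 1, M 1 2; 0, M 2 1, M 2 2] := by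
        ext i j
        fin_cases i <;> fin_cases j <;>
          simp [Um, Matrix.mul_apply, Matrix.vecMul, dotProduct, Fin.sum_univ_three, h1, h2] <;> (try field_simp) <;> (try ring)
      rw [e] at h ⊢
      exact bru_c0 _ _ _ _ _ h
    · refine Bru_of _ (-M 0 0 / M 1 0) 0 0 (-M 1 1 / M 1 0) (-M 1 2 / M 1 0) 0 ?_
      rw [← det_Um3 (-M 0 0 / M 1 0) 0 0 (-M 1 1 / M 1 0) (-M 1 2 / M 1 0) 0] at h
      have e : Um (-M 0 0 / M 1 0) 0 0 * M * Um (-M 1 1 / M 1 0) (-M 1 2 / M 1 0) 0 =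
          !![0, M 0 1 - M 0 0 * M 1 1 / M 1 0, M 0 2 - M 0 0 * M 1 2 / M 1 0;
            M 1 0, 0, 0; 0, M 2 1, M 2 2] := by
        ext i j
        fin_cases i <;> fin_cases j <;>
          simp [Um, Matrix.mul_apply, Matrix.vecMul, dotProduct, Fin.sum_univ_three, h2] <;> (try field_simp) <;> (try ring)
      rw [e] at h ⊢
      exact bru_c1 _ _ _ _ _ h
  · refine Bru_of _ 0 (-M 0 0 / M 2 0) (-M 1 0 / M 2 0) (-M 2 1 / M 2 0) (-M 2 2 / M 2 0) 0 ?_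
    rw [← det_Um3 0 (-M 0 0 / M 2 0) (-M 1 0 / M 2 0) (-M 2 1 / M 2 0) (-M 2 2 / M 2 0) 0] at h
    have e : Um 0 (-M 0 0 / M 2 0) (-M 1 0 / M 2 0) * M *
        Um (-M 2 1 / M 2 0) (-M 2 2 / M 2 0) 0 =
        !![0, M 0 1 - M 0 0 * M 2 1 / M 2 0, M 0 2 - M 0 0 * M 2 2 / M 2 0;
          0, M 1 1 - M 1 0 * M 2 1 / M 2 0, M 1 2 - M 1 0 * M 2 2 / M 2 0; M 2 0, 0, 0] := by
      ext i j
      fin_cases i <;> fin_cases j <;>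
        simp [Um, Matrix.mul_apply, Matrix.vecMul, dotProduct, Fin.sum_univ_three] <;> (try field_simp) <;> (try ring)
    rw [e] at h ⊢
    exact bru_c2 _ _ _ _ _ h

end Elements


section GLElements
variable {F : Type} [Field F]

/-- inclusion of the special linear group -/
def io (g : SpecialLinearGroup (Fin 3) F) : GL (Fin 3) F := SpecialLinearGroup.toGL g

lemma io_mul (g h : SpecialLinearGroup (Fin 3) F) : io (g * h) = io g * io h := map_mul _ _ _
lemma io_one : io (1 : SpecialLinearGroup (Fin 3) F) = 1 := map_one _
lemma io_inv (g : SpecialLinearGroup (Fin 3) F) : io g⁻¹ = (io g)⁻¹ := map_inv _ _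
lemma io_val (g : SpecialLinearGroup (Fin 3) F) : (io g).val = mt g := rfl
lemma io_inj {g h : SpecialLinearGroup (Fin 3) F} (e : io g = io h) : g = h :=
  mt_inj (by rw [← io_val, e, io_val])

/-- unitriangular elements -/
def gu (a b c : F) : GL (Fin 3) F := io (ux a b c)

lemma gu_val (a b c : F) : (gu a b c).val = Um a b c := rfl
lemma gu_mul (a b c a' b' c' : F) :
    gu a b c * gu a' b' c' = gu (a + a') (b + b' + a * c') (c + c') := by
  rw [gu, gu, ← io_mul, ux_mul]; rfl
lemma gu_zero : gu (0 : F) 0 0 = 1 := by rw [gu, ux_zero, io_one]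
lemma gu_inv (a b c : F) : (gu a b c)⁻¹ = gu (-a) (a * c - b) (-c) := by
  rw [gu, ← io_inv, ux_inv]; rfl

/-- diagonal elements -/
def dg (a b c : Fˣ) : GL (Fin 3) F where
  val := Dm a b c
  inv := Dm ↑a⁻¹ ↑b⁻¹ ↑c⁻¹
  val_inv := by ext i j; fin_cases i <;> fin_cases j <;> simp [Dm]
  inv_val := by ext i j; fin_cases i <;> fin_cases j <;> simp [Dm]

lemma dg_val (a b c : Fˣ) : (dg a b c).val = Dm (a : F) b c := rfl
lemma dg_mul (a b c a' b' c' : Fˣ) :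
    dg a b c * dg a' b' c' = dg (a * a') (b * b') (c * c') := by
  apply Units.ext
  rw [Units.val_mul, dg_val, dg_val, dg_val]
  ext i j; fin_cases i <;> fin_cases j <;> simp [Dm]
lemma dg_one : dg (1 : Fˣ) 1 1 = 1 := by
  apply Units.ext
  rw [dg_val]
  ext i j; fin_cases i <;> fin_cases j <;> simp [Dm]
lemma dg_inv (a b c : Fˣ) : (dg a b c)⁻¹ = dg a⁻¹ b⁻¹ c⁻¹ := by
  rw [inv_eq_iff_mul_eq_one, dg_mul, ← dg_one]; simp
lemma dg_comm (a b c a' b' c' : Fˣ) : dg a b c * dg a' b' c' = dg a' b' c' * dg a b c := by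
  rw [dg_mul, dg_mul, mul_comm a, mul_comm b, mul_comm c]

lemma dg_gu (t1 t2 t3 : Fˣ) (a b c : F) :
    dg t1 t2 t3 * gu a b c = gu (t1 * a * ↑t2⁻¹) (t1 * b * ↑t3⁻¹) (t2 * c * ↑t3⁻¹) * dg t1 t2 t3 := by
  apply Units.ext
  rw [Units.val_mul, Units.val_mul, dg_val, gu_val, gu_val]
  ext i j; fin_cases i <;> fin_cases j <;> simp [Dm, Um]

variable [CharP F 2]

/-- first simple reflection in GL -/
def gs : GL (Fin 3) F := io sS
/-- second simple reflection in GL -/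
def gr : GL (Fin 3) F := io rS
lemma gs_val : (gs : GL (Fin 3) F).val = !![0, 1, 0; 1, 0, 0; 0, 0, 1] := rfl
lemma gr_val : (gr : GL (Fin 3) F).val = !![1, 0, 0; 0, 0, 1; 0, 1, 0] := rfl

lemma ss : (sS * sS : SpecialLinearGroup (Fin 3) F) = 1 := by
  apply mt_inj
  rw [mt_mul, sS_val, mt_one]
  ext i j; fin_cases i <;> fin_cases j <;> simp
lemma rr : (rS * rS : SpecialLinearGroup (Fin 3) F) = 1 := by
  apply mt_inj
  rw [mt_mul, rS_val, mt_one]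
  ext i j; fin_cases i <;> fin_cases j <;> simp
lemma s_inv : (sS : SpecialLinearGroup (Fin 3) F)⁻¹ = sS := by
  rw [inv_eq_iff_mul_eq_one, ss]
lemma r_inv : (rS : SpecialLinearGroup (Fin 3) F)⁻¹ = rS := by
  rw [inv_eq_iff_mul_eq_one, rr]
lemma gss : (gs * gs : GL (Fin 3) F) = 1 := by rw [gs, ← io_mul, ss, io_one]
lemma grr : (gr * gr : GL (Fin 3) F) = 1 := by rw [gr, ← io_mul, rr, io_one]
lemma gs_inv : (gs : GL (Fin 3) F)⁻¹ = gs := by rw [gs, ← io_inv, s_inv]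
lemma gr_inv : (gr : GL (Fin 3) F)⁻¹ = gr := by rw [gr, ← io_inv, r_inv]

lemma s_u (b c : F) : sS * ux 0 b c = ux 0 c b * sS := by
  apply mt_inj
  rw [mt_mul, mt_mul, sS_val, ux_val, ux_val]
  ext i j; fin_cases i <;> fin_cases j <;> simp [Um]
lemma r_u (a b : F) : rS * ux a b 0 = ux b a 0 * rS := by
  apply mt_inj
  rw [mt_mul, mt_mul, rS_val, ux_val, ux_val]
  ext i j; fin_cases i <;> fin_cases j <;> simp [Um]
lemma gs_u (b c : F) : gs * gu 0 b c = gu 0 c b * gs := by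
  rw [gs, gu, gu, ← io_mul, s_u, io_mul]
lemma gr_u (a b : F) : gr * gu a b 0 = gu b a 0 * gr := by
  rw [gr, gu, gu, ← io_mul, r_u, io_mul]

lemma dg_s (a b c : Fˣ) : dg a b c * gs = gs * dg b a c := by
  apply Units.ext
  rw [Units.val_mul, Units.val_mul, dg_val, dg_val, gs_val]
  ext i j; fin_cases i <;> fin_cases j <;> simp [Dm]
lemma dg_r (a b c : Fˣ) : dg a b c * gr = gr * dg a c b := by
  apply Units.ext
  rw [Units.val_mul, Units.val_mul, dg_val, dg_val, gr_val]
  ext i j; fin_cases i <;> fin_cases j <;> simp [Dm]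

lemma sus (x : Fˣ) : (gs * gu (x : F) 0 0 * gs : GL (Fin 3) F) =
    gu (↑x⁻¹ : F) 0 0 * gs * dg x x⁻¹ 1 * gu (↑x⁻¹ : F) 0 0 := by
  apply Units.ext
  simp only [Units.val_mul, dg_val, gs_val, gu_val]
  ext i j
  fin_cases i <;> fin_cases j <;> simp [Dm, Um, CharTwo.add_self_eq_zero]

/-- torus of SL -/
def dS (a b : Fˣ) : SpecialLinearGroup (Fin 3) F :=
  ⟨Dm a b ↑(a * b)⁻¹, by simp [Dm, Matrix.det_fin_three]; field_simp⟩

lemma io_dS (a b : Fˣ) : io (dS a b) = dg a b (a * b)⁻¹ := Units.ext rfl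

lemma gbruhat (g : GL (Fin 3) F) : ∃ (a b c a' b' c' : F) (t1 t2 t3 : Fˣ), ∃ n, IsW n ∧
    g = gu a b c * dg t1 t2 t3 * io n * gu a' b' c' := by
  obtain ⟨a, b, c, a', b', c', t1, t2, t3, h1, h2, h3, n, hn, h⟩ := bruhat g.val
    ((Matrix.isUnit_iff_isUnit_det _).1 g.isUnit).ne_zero
  exact ⟨a, b, c, a', b', c', Units.mk0 t1 h1, Units.mk0 t2 h2, Units.mk0 t3 h3, n, hn, Units.ext h⟩

lemma sbruhat (g : SpecialLinearGroup (Fin 3) F) : ∃ (a b c a' b' c' : F) (t1 t2 : Fˣ), ∃ n, IsW n ∧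
    g = ux a b c * dS t1 t2 * n * ux a' b' c' := by
  obtain ⟨a, b, c, a', b', c', t1, t2, t3, n, hn, h⟩ := gbruhat (io g)
  have h0 := congrArg (fun x : GL (Fin 3) F => x.val.det) h
  simp only [Units.val_mul, det_mul, dg_val, gu, io_val, mt_det] at h0
  have h1 : t1 * t2 * t3 = 1 := by
    apply Units.ext
    simp [Dm, Matrix.det_fin_three] at h0
    simpa using h0.symm
  have h3 : t3 = (t1 * t2)⁻¹ := eq_inv_of_mul_eq_one_right h1
  refine ⟨a, b, c, a', b', c', t1, t2, n, hn, io_inj ?_⟩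
  rw [h, io_mul, io_mul, io_mul, io_dS, h3]; rfl

/-- the antitranspose-inverse -/
def Jm : Matrix (Fin 3) (Fin 3) F := !![0, 0, 1; 0, 1, 0; 1, 0, 0]
lemma JJ : (Jm * Jm : Matrix (Fin 3) (Fin 3) F) = 1 := by
  ext i j; fin_cases i <;> fin_cases j <;> simp [Jm]

lemma J3 (M N : Matrix (Fin 3) (Fin 3) F) : Jm * M * Jm * (Jm * N * Jm) = Jm * (M * N) * Jm := by
  calc Jm * M * Jm * (Jm * N * Jm) = Jm * M * (Jm * Jm) * N * Jm := by
        simp only [Matrix.mul_assoc]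
    _ = _ := by rw [JJ, Matrix.mul_one]; simp only [Matrix.mul_assoc]

/-- antitranspose -/
def ta (g : GL (Fin 3) F) : GL (Fin 3) F where
  val := Jm * g.valᵀ * Jm
  inv := Jm * (g⁻¹).valᵀ * Jm
  val_inv := by
    rw [J3, ← transpose_mul]
    simp [JJ]
  inv_val := by
    rw [J3, ← transpose_mul]
    simp [JJ]

lemma ta_val (g : GL (Fin 3) F) : (ta g).val = Jm * g.valᵀ * Jm := rfl

lemma ta_mul (g h : GL (Fin 3) F) : ta (g * h) = ta h * ta g := by
  apply Units.ext
  rw [Units.val_mul, ta_val, ta_val, ta_val, J3, Units.val_mul, transpose_mul]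

lemma ta_ta (g : GL (Fin 3) F) : ta (ta g) = g := by
  apply Units.ext
  rw [ta_val, ta_val]
  have : (Jm : Matrix (Fin 3) (Fin 3) F)ᵀ = Jm := by
    ext i j; fin_cases i <;> fin_cases j <;> simp [Jm]
  rw [transpose_mul, transpose_mul, this, transpose_transpose]
  calc Jm * (Jm * (g.val * Jm)) * Jm = (Jm * Jm) * g.val * (Jm * Jm) := by
        simp only [Matrix.mul_assoc]
    _ = _ := by rw [JJ]; simp

lemma ta_gu (a b c : F) : ta (gu a b c) = gu c b a := by
  apply Units.ext
  rw [ta_val, gu_val, gu_val]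
  ext i j; fin_cases i <;> fin_cases j <;> simp [Jm, Um, Matrix.mul_apply, Matrix.vecMul, dotProduct, Fin.sum_univ_three]
lemma ta_dg (a b c : Fˣ) : ta (dg a b c) = dg c b a := by
  apply Units.ext
  rw [ta_val, dg_val, dg_val]
  ext i j; fin_cases i <;> fin_cases j <;> simp [Jm, Dm, Matrix.mul_apply, Matrix.vecMul, dotProduct, Fin.sum_univ_three]
lemma ta_gs : ta (gs : GL (Fin 3) F) = gr := by
  apply Units.ext
  rw [ta_val, gs_val, gr_val]
  ext i j; fin_cases i <;> fin_cases j <;> simp [Jm, Matrix.mul_apply, Matrix.vecMul, dotProduct, Fin.sum_univ_three]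
lemma ta_gr : ta (gr : GL (Fin 3) F) = gs := by rw [← ta_gs, ta_ta]

lemma ta_one : ta (1 : GL (Fin 3) F) = 1 := by rw [← gu_zero, ta_gu]

/-- the automorphism -/
def th : GL (Fin 3) F →* GL (Fin 3) F where
  toFun g := ta g⁻¹
  map_one' := by rw [inv_one, ta_one]
  map_mul' g h := by rw [_root_.mul_inv_rev, ta_mul]

lemma th_apply (g : GL (Fin 3) F) : th g = ta g⁻¹ := rfl
lemma th_surj (g : GL (Fin 3) F) : ∃ h, th h = g := ⟨(ta g)⁻¹, by rw [th_apply, inv_inv, ta_ta]⟩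
lemma th_gu (a b c : F) : th (gu a b c) = gu (-c) (a * c - b) (-a) := by
  rw [th_apply, gu_inv, ta_gu]
lemma th_dg (a b c : Fˣ) : th (dg a b c) = dg c⁻¹ b⁻¹ a⁻¹ := by
  rw [th_apply, dg_inv, ta_dg]
lemma th_gs : th (gs : GL (Fin 3) F) = gr := by
  rw [th_apply, gs_inv, ta_gs]
lemma th_gr : th (gr : GL (Fin 3) F) = gs := by
  rw [th_apply, gr_inv, ta_gr]

end GLElements


section Subgroups
variable {F : Type} [Field F]

/-- unipotent subgroup -/
def UG (F : Type) [Field F] : Subgroup (GL (Fin 3) F) where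
  carrier := {g | ∃ a b c, g = gu a b c}
  one_mem' := ⟨0, 0, 0, gu_zero.symm⟩
  mul_mem' := by
    rintro _ _ ⟨a, b, c, rfl⟩ ⟨a', b', c', rfl⟩
    exact ⟨_, _, _, gu_mul ..⟩
  inv_mem' := by
    rintro _ ⟨a, b, c, rfl⟩
    exact ⟨_, _, _, gu_inv ..⟩

lemma gu_inj {a b c a' b' c' : F} (h : gu a b c = gu a' b' c') : a = a' ∧ b = b' ∧ c = c' := by
  have h1 : Um a b c = Um a' b' c' := by rw [← gu_val, h, gu_val]
  have h2 := congrFun (congrFun h1 0) 1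
  have h3 := congrFun (congrFun h1 0) 2
  have h4 := congrFun (congrFun h1 1) 2
  simp [Um] at h2 h3 h4
  exact ⟨h2, h3, h4⟩

lemma card_UG [Fintype F] : Nat.card (UG F) = Fintype.card F ^ 3 := by
  have : Nat.card (UG F) = Nat.card (F × F × F) := by
    refine (Nat.card_congr (Equiv.ofBijective
      (fun p : F × F × F => (⟨gu p.1 p.2.1 p.2.2, _, _, _, rfl⟩ : UG F)) ⟨?_, ?_⟩)).symm
    · rintro ⟨a, b, c⟩ ⟨a', b', c'⟩ h
      obtain ⟨rfl, rfl, rfl⟩ := gu_inj (congrArg Subtype.val h)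
      rfl
    · rintro ⟨_, a, b, c, rfl⟩
      exact ⟨(a, b, c), rfl⟩
  rw [this, Nat.card_prod, Nat.card_prod, Nat.card_eq_fintype_card]
  ring

lemma index_odd [Fintype F] (hq : Even (Fintype.card F)) (P : Subgroup (GL (Fin 3) F))
    (hP : ∀ a b c, gu a b c ∈ P) : Odd P.index := by
  have h1 : UG F ≤ P := by
    rintro _ ⟨a, b, c, rfl⟩
    exact hP a b c
  refine Odd.of_dvd_nat ?_ (Subgroup.index_dvd_of_le h1)
  have h2 := (UG F).card_mul_index
  rw [card_UG, Matrix.card_GL_field, Fin.prod_univ_three] at h2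
  set q := Fintype.card F with hqd
  have hq1 : 1 < q := Fintype.one_lt_card
  have h3 : (q ^ 3 - q ^ ((0 : Fin 3) : ℕ)) * (q ^ 3 - q ^ ((1 : Fin 3) : ℕ)) *
      (q ^ 3 - q ^ ((2 : Fin 3) : ℕ)) = q ^ 3 * ((q ^ 3 - 1) * (q ^ 2 - 1) * (q - 1)) := by
    clear_value q
    obtain ⟨m, rfl⟩ : ∃ m, q = m + 1 := ⟨q - 1, by omega⟩
    have e1 : (m + 1) ^ 3 - (m + 1) ^ ((0 : Fin 3) : ℕ) = m ^ 3 + 3 * m ^ 2 + 3 * m := by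
      apply Nat.sub_eq_of_eq_add; simp; ring
    have e2 : (m + 1) ^ 3 - (m + 1) ^ ((1 : Fin 3) : ℕ) = m ^ 3 + 3 * m ^ 2 + 2 * m := by
      apply Nat.sub_eq_of_eq_add; simp; ring
    have e3 : (m + 1) ^ 3 - (m + 1) ^ ((2 : Fin 3) : ℕ) = m ^ 3 + 2 * m ^ 2 + m := by
      apply Nat.sub_eq_of_eq_add; simp; ring
    have e4 : (m + 1) ^ 3 - 1 = m ^ 3 + 3 * m ^ 2 + 3 * m := by
      apply Nat.sub_eq_of_eq_add; ring
    have e5 : (m + 1) ^ 2 - 1 = m ^ 2 + 2 * m := by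
      apply Nat.sub_eq_of_eq_add; ring
    rw [e1, e2, e3, e4, e5, Nat.add_sub_cancel]; ring
  rw [h3] at h2
  have h4 := Nat.eq_of_mul_eq_mul_left (by positivity) h2
  rw [h4]
  have ho : ∀ n, n ≠ 0 → Odd (q ^ n - 1) := by
    intro n hn
    have he : Even (q ^ n) := hq.pow_of_ne_zero hn
    have hp : 0 < q ^ n := by positivity
    obtain ⟨r, hr⟩ := he
    exact ⟨r - 1, by omega⟩
  have h5 := ho 1 (by norm_num)
  rw [pow_one] at h5
  exact ((ho 3 (by norm_num)).mul (ho 2 (by norm_num))).mul h5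

lemma gl_row (g : GL (Fin 3) F) (h0 : g.val 2 0 = 0) (h1 : g.val 2 1 = 0) :
    (g⁻¹).val 2 0 = 0 ∧ (g⁻¹).val 2 1 = 0 := by
  have h : g.val * (g⁻¹).val = 1 := g.val_inv
  have h2 := congrFun (congrFun h 2) 2
  have h3 := congrFun (congrFun h 2) 0
  have h4 := congrFun (congrFun h 2) 1
  rw [Matrix.mul_apply, Fin.sum_univ_three, h0, h1] at h2 h3 h4
  simp only [zero_mul, zero_add, Matrix.one_apply_eq] at h2
  have : g.val 2 2 ≠ 0 := left_ne_zero_of_mul (by rw [h2]; exact one_ne_zero)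
  constructor
  · simpa [this] using h3
  · simpa [this] using h4

lemma gl_col (g : GL (Fin 3) F) (h0 : g.val 1 0 = 0) (h1 : g.val 2 0 = 0) :
    (g⁻¹).val 1 0 = 0 ∧ (g⁻¹).val 2 0 = 0 := by
  have h : (g⁻¹).val * g.val = 1 := g.inv_val
  have h2 := congrFun (congrFun h 0) 0
  have h3 := congrFun (congrFun h 1) 0
  have h4 := congrFun (congrFun h 2) 0
  rw [Matrix.mul_apply, Fin.sum_univ_three, h0, h1] at h2 h3 h4
  simp only [mul_zero, add_zero, Matrix.one_apply_eq] at h2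
  have : g.val 0 0 ≠ 0 := right_ne_zero_of_mul (by rw [h2]; exact one_ne_zero)
  constructor
  · simpa [this] using h3
  · simpa [this] using h4

/-- parabolic subgroup -/
def PG (F : Type) [Field F] : Subgroup (GL (Fin 3) F) where
  carrier := {g | g.val 2 0 = 0 ∧ g.val 2 1 = 0}
  one_mem' := by simp
  mul_mem' := by
    rintro g h ⟨h1, h2⟩ ⟨h3, h4⟩
    constructor <;> simp [Matrix.mul_apply, Fin.sum_univ_three, h1, h2, h3, h4]
  inv_mem' := by
    rintro g ⟨h1, h2⟩
    exact gl_row g h1 h2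

/-- Borel subgroup -/
def BG (F : Type) [Field F] : Subgroup (GL (Fin 3) F) where
  carrier := {g | g.val 1 0 = 0 ∧ g.val 2 0 = 0 ∧ g.val 2 1 = 0}
  one_mem' := by simp
  mul_mem' := by
    rintro g h ⟨h1, h2, h5⟩ ⟨h3, h4, h6⟩
    refine ⟨?_, ?_, ?_⟩ <;> simp [Matrix.mul_apply, Fin.sum_univ_three, h1, h2, h3, h4, h5, h6]
  inv_mem' := by
    rintro g ⟨h1, h2, h3⟩
    exact ⟨(gl_col g h1 h2).1, gl_row g h2 h3⟩

lemma mem_PG {g : GL (Fin 3) F} : g ∈ PG F ↔ g.val 2 0 = 0 ∧ g.val 2 1 = 0 := Iff.rfl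
lemma mem_BG {g : GL (Fin 3) F} : g ∈ BG F ↔ g.val 1 0 = 0 ∧ g.val 2 0 = 0 ∧ g.val 2 1 = 0 :=
  Iff.rfl

lemma gu_PG (a b c : F) : gu a b c ∈ PG F := by rw [mem_PG, gu_val]; simp [Um]
lemma gu_BG (a b c : F) : gu a b c ∈ BG F := by rw [mem_BG, gu_val]; simp [Um]
lemma dg_PG (a b c : Fˣ) : dg a b c ∈ PG F := by rw [mem_PG, dg_val]; simp [Dm]
lemma dg_BG (a b c : Fˣ) : dg a b c ∈ BG F := by rw [mem_BG, dg_val]; simp [Dm]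

variable [CharP F 2]

lemma gs_PG : gs ∈ PG F := by rw [mem_PG, gs_val]; simp

lemma PG_or (g : GL (Fin 3) F) :
    ((∃ (a b c a' b' c' : F) (t1 t2 t3 : Fˣ), g = gu a b c * dg t1 t2 t3 * gu a' b' c' ∨
      g = gu a b c * dg t1 t2 t3 * gs * gu a' b' c')) ∨
    (∃ p ∈ PG F, ∃ p' ∈ PG F, g = p * gr * p') := by
  obtain ⟨a, b, c, a', b', c', t1, t2, t3, n, hn, h⟩ := gbruhat g
  have hud := mul_mem (gu_PG a b c) (dg_PG t1 t2 t3)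
  have hu := gu_PG a' b' c'
  rcases hn with rfl | rfl | rfl | rfl | rfl | rfl
  · left; refine ⟨a, b, c, a', b', c', t1, t2, t3, Or.inl ?_⟩
    rw [h, io_one, mul_one]
  · left; exact ⟨a, b, c, a', b', c', t1, t2, t3, Or.inr h⟩
  · right; exact ⟨_, hud, _, hu, h⟩
  · right; refine ⟨_, mul_mem hud gs_PG, _, hu, ?_⟩
    rw [h, io_mul]; simp only [mul_assoc, gs, gr]
  · right; refine ⟨_, hud, _, mul_mem gs_PG hu, ?_⟩
    rw [h, io_mul]; simp only [mul_assoc, gs, gr]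
  · right; refine ⟨_, mul_mem hud gs_PG, _, mul_mem gs_PG hu, ?_⟩
    rw [h, io_mul, io_mul]; simp only [mul_assoc, gs, gr]

lemma gr_not_PG : gr ∉ PG F := by rw [mem_PG, gr_val]; simp

lemma PG_mem_form {g : GL (Fin 3) F} (hg : g ∈ PG F) :
    (∃ (a b c a' b' c' : F) (t1 t2 t3 : Fˣ), g = gu a b c * dg t1 t2 t3 * gu a' b' c' ∨
      g = gu a b c * dg t1 t2 t3 * gs * gu a' b' c') := by
  rcases PG_or g with h | ⟨p, hp, p', hp', rfl⟩
  · exact h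
  · exfalso
    apply gr_not_PG (F := F)
    have := mul_mem (mul_mem (inv_mem hp) hg) (inv_mem hp')
    simpa [mul_assoc] using this

lemma PG_not {g : GL (Fin 3) F} (hg : g ∉ PG F) : ∃ p ∈ PG F, ∃ p' ∈ PG F, g = p * gr * p' := by
  rcases PG_or g with ⟨a, b, c, a', b', c', t1, t2, t3, h | h⟩ | h
  · exfalso; apply hg; rw [h]
    exact mul_mem (mul_mem (gu_PG ..) (dg_PG ..)) (gu_PG ..)
  · exfalso; apply hg; rw [h]
    exact mul_mem (mul_mem (mul_mem (gu_PG ..) (dg_PG ..)) gs_PG) (gu_PG ..)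
  · exact h

/-- parabolic subgroup of SL -/
def PS (F : Type) [Field F] : Subgroup (SpecialLinearGroup (Fin 3) F) where
  carrier := {g | io g ∈ PG F}
  one_mem' := by simp [io_one, one_mem]
  mul_mem' := by
    intro g h hg hh
    simp only [Set.mem_setOf_eq] at *
    rw [io_mul]; exact mul_mem hg hh
  inv_mem' := by
    intro g hg
    simp only [Set.mem_setOf_eq] at *
    rw [io_inv]; exact inv_mem hg

lemma mem_PS {g : SpecialLinearGroup (Fin 3) F} : g ∈ PS F ↔ io g ∈ PG F := Iff.rfl

lemma row_surj (v : Fin 3 → F) (hv : v ≠ 0) : ∃ g : SpecialLinearGroup (Fin 3) F, mt g 2 = v := by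
  by_cases h2 : v 2 = 0
  · by_cases h1 : v 1 = 0
    · have h0 : v 0 ≠ 0 := by
        intro h0; apply hv; ext i; fin_cases i <;> assumption
      refine ⟨⟨!![0, (v 0)⁻¹, 0; 0, 0, 1; v 0, v 1, v 2], ?_⟩, ?_⟩
      · simp [Matrix.det_fin_three, h0]
      · ext i; fin_cases i <;> simp [mt]
    · refine ⟨⟨!![(v 1)⁻¹, 0, 0; 0, 0, 1; v 0, v 1, v 2], ?_⟩, ?_⟩
      · simp [Matrix.det_fin_three, h1, neg1]
      · ext i; fin_cases i <;> simp [mt]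
  · refine ⟨⟨!![(v 2)⁻¹, 0, 0; 0, 1, 0; v 0, v 1, v 2], ?_⟩, ?_⟩
    · simp [Matrix.det_fin_three, h2]
    · ext i; fin_cases i <;> simp [mt]

lemma row_ne (g : SpecialLinearGroup (Fin 3) F) : mt g 2 ≠ 0 := by
  intro h
  have := mt_det g
  rw [Matrix.det_fin_three] at this
  simp [h] at this

lemma row_iff (g h : SpecialLinearGroup (Fin 3) F) :
    (∃ a : Fˣ, a • mt h⁻¹ 2 = mt g⁻¹ 2) ↔ g⁻¹ * h ∈ PS F := by
  have e : ∀ j, mt (g⁻¹ * h) 2 j = (mt g⁻¹ 2 ᵥ* mt h) j := by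
    intro j; rw [mt_mul]; rfl
  have e2 : mt h⁻¹ 2 ᵥ* mt h = (1 : Matrix (Fin 3) (Fin 3) F) 2 := by
    have : mt h⁻¹ * mt h = 1 := by rw [← mt_mul, inv_mul_cancel, mt_one]
    exact congrFun this 2
  constructor
  · rintro ⟨a, ha⟩
    rw [mem_PS, mem_PG, io_val, e, e, ← ha]
    have : (a • mt h⁻¹ 2) ᵥ* mt h = a • (1 : Matrix (Fin 3) (Fin 3) F) 2 := by
      rw [Matrix.smul_vecMul, e2]
    rw [this]
    constructor <;> simp [Matrix.one_apply, Units.smul_def]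
  · intro hm
    rw [mem_PS, mem_PG, io_val] at hm
    have h22 : mt (g⁻¹ * h) 2 2 ≠ 0 := by
      intro h0
      apply row_ne (g⁻¹ * h)
      ext i; fin_cases i
      exacts [hm.1, hm.2, h0]
    refine ⟨Units.mk0 _ h22, ?_⟩
    have e3 : mt g⁻¹ = mt (g⁻¹ * h) * mt h⁻¹ := by rw [← mt_mul]; simp
    ext j
    rw [e3, Matrix.mul_apply, Fin.sum_univ_three, hm.1, hm.2]
    simp [Units.smul_def]

lemma PS_index [Fintype F] : (PS F).index = (Fintype.card F) ^ 2 + Fintype.card F + 1 := by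
  have h : Nat.card (Projectivization F (Fin 3 → F)) = ∑ i ∈ Finset.range 3, Nat.card F ^ i :=
    Projectivization.card_of_finrank F (Fin 3 → F) (by simp)
  rw [Subgroup.index]
  have : Nat.card (SpecialLinearGroup (Fin 3) F ⧸ PS F) =
      Nat.card (Projectivization F (Fin 3 → F)) := by
    refine Nat.card_congr (Equiv.ofBijective
      (Quotient.lift (fun g : SpecialLinearGroup (Fin 3) F =>
        Projectivization.mk F (mt g⁻¹ 2) (row_ne _)) ?_) ⟨?_, ?_⟩)
    · intro g h hgh
      rw [Projectivization.mk_eq_mk_iff, row_iff]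
      exact QuotientGroup.leftRel_apply.1 hgh
    · intro x y
      induction x using Quotient.inductionOn
      induction y using Quotient.inductionOn
      intro hxy
      apply Quotient.sound
      have hxy' := (Projectivization.mk_eq_mk_iff ..).1 hxy
      rw [row_iff] at hxy'
      exact QuotientGroup.leftRel_apply.2 hxy'
    · intro x
      induction x using Projectivization.ind with
      | h v hv =>
        obtain ⟨g, hg⟩ := row_surj v hv
        refine ⟨Quotient.mk _ g⁻¹, ?_⟩
        simp only [Quotient.lift_mk]
        congr 1
        rw [inv_inv]
        exact hg
  rw [this, h, Finset.sum_range_succ, Finset.sum_range_succ, Finset.sum_range_one,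
    Nat.card_eq_fintype_card]
  ring

lemma ux_PS (a b c : F) : ux a b c ∈ PS F := gu_PG a b c
lemma dS_PS (a b : Fˣ) : dS a b ∈ PS F := by rw [mem_PS, io_dS]; exact dg_PG ..
lemma sS_PS : sS ∈ PS F := gs_PG
lemma rS_not_PS : rS ∉ PS F := gr_not_PG

lemma PS_or (g : SpecialLinearGroup (Fin 3) F) :
    ((∃ (a b c a' b' c' : F) (t1 t2 : Fˣ), g = ux a b c * dS t1 t2 * ux a' b' c' ∨
      g = ux a b c * dS t1 t2 * sS * ux a' b' c')) ∨
    (∃ (a b c : F) (t1 t2 : Fˣ) (n p : SpecialLinearGroup (Fin 3) F), (n = 1 ∨ n = sS) ∧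
      p ∈ PS F ∧ g = ux a b c * dS t1 t2 * n * rS * p) := by
  obtain ⟨a, b, c, a', b', c', t1, t2, n, hn, h⟩ := sbruhat g
  have hu := ux_PS a' b' c'
  rcases hn with rfl | rfl | rfl | rfl | rfl | rfl
  · left; refine ⟨a, b, c, a', b', c', t1, t2, Or.inl ?_⟩
    rw [h, mul_one]
  · left; exact ⟨a, b, c, a', b', c', t1, t2, Or.inr h⟩
  · right; refine ⟨a, b, c, t1, t2, 1, _, Or.inl rfl, hu, ?_⟩
    rw [h]; simp
  · right; refine ⟨a, b, c, t1, t2, sS, _, Or.inr rfl, hu, ?_⟩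
    rw [h]; simp only [mul_assoc]
  · right; refine ⟨a, b, c, t1, t2, 1, _, Or.inl rfl, mul_mem sS_PS hu, ?_⟩
    rw [h]; simp [mul_assoc]
  · right; refine ⟨a, b, c, t1, t2, sS, _, Or.inr rfl, mul_mem sS_PS hu, ?_⟩
    rw [h]; simp only [mul_assoc]

end Subgroups


section Unit
variable {G : Type*} [Group G] {V : Type*} [NormedAddCommGroup V] [InnerProductSpace ℂ V]

/-- invariance of the inner product -/
def Unt (ρ : G →* (V →ₗ[ℂ] V)) : Prop := ∀ g v w, inner ℂ (ρ g v) (ρ g w) = inner ℂ v w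

lemma unit_adj {ρ : G →* (V →ₗ[ℂ] V)} (hu : Unt ρ) (g : G) (v w : V) :
    inner ℂ (ρ g v) w = inner ℂ v (ρ g⁻¹ w) := by
  rw [← hu g v, rho_cancel_inv]

lemma weight_orth {ρ : G →* (V →ₗ[ℂ] V)} (hu : Unt ρ) (x : G) {v w : V} {a b : ℂ}
    (hv : ρ x v = a • v) (hw : ρ x w = b • w) (hab : a ≠ b) : inner ℂ v w = 0 := by
  by_cases hv0 : v = 0
  · rw [hv0, inner_zero_left]
  have h1 := hu x v v
  rw [hv, inner_smul_left, inner_smul_right] at h1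
  have hvv : (inner ℂ v v : ℂ) ≠ 0 := inner_self_ne_zero.2 hv0
  have h2 : (starRingEnd ℂ) a * a = 1 := by
    apply mul_right_cancel₀ hvv
    rw [one_mul, mul_assoc, h1]
  have h3 := hu x v w
  rw [hv, hw, inner_smul_left, inner_smul_right] at h3
  by_contra h0
  apply hab
  have h4 : (starRingEnd ℂ) a * b = 1 := by
    apply mul_right_cancel₀ h0
    rw [one_mul, mul_assoc, h3]
  have ha : (starRingEnd ℂ) a ≠ 0 := left_ne_zero_of_mul (by rw [h2]; exact one_ne_zero)
  exact mul_left_cancel₀ ha (by rw [h2, h4])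

/-- averaging kills inner products -/
lemma avg_orth {ι : Type*} [Fintype ι] [Nonempty ι] {ρ : G →* (V →ₗ[ℂ] V)} (hu : Unt ρ) (x : ι → G) {v w : V}
    (hw : ∀ i, ρ (x i) w = w) (hv : ∑ i, ρ (x i) v = 0) : inner ℂ v w = 0 := by
  have h : ∑ i, inner ℂ (ρ (x i) v) w = 0 := by rw [← sum_inner, hv, inner_zero_left]
  have h2 : ∀ i, inner ℂ (ρ (x i) v) w = inner ℂ v w := by
    intro i
    conv_lhs => rw [← hw i]
    exact hu _ _ _
  simp only [h2, Finset.sum_const, Finset.card_univ, nsmul_eq_mul] at h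
  rcases mul_eq_zero.1 h with h | h
  · exact absurd h (by exact_mod_cast Fintype.card_ne_zero)
  · exact h

lemma imprim1 [FiniteDimensional ℂ V] [Finite G] {ρ : G →* (V →ₗ[ℂ] V)} (hρ : Irr ρ)
    (hu : Unt ρ) (P : Subgroup G) (w : V) (hw : w ≠ 0) (hW : ∀ p ∈ P, ∃ c : ℂ, ρ p w = c • w)
    (hor : ∀ g, g ∉ P → inner ℂ w (ρ g w) = 0) : Module.finrank ℂ V = P.index := by
  rw [imprim hρ hu P (Submodule.span ℂ {w}), finrank_span_singleton hw, mul_one]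
  · simpa using hw
  · intro p hp v hv
    obtain ⟨a, rfl⟩ := Submodule.mem_span_singleton.1 hv
    obtain ⟨c, hc⟩ := hW p hp
    rw [map_smul, hc]
    exact Submodule.smul_mem _ _ (Submodule.smul_mem _ _ (Submodule.mem_span_singleton_self w))
  · intro g hg v hv v' hv'
    obtain ⟨a, rfl⟩ := Submodule.mem_span_singleton.1 hv
    obtain ⟨b, rfl⟩ := Submodule.mem_span_singleton.1 hv'
    rw [map_smul, inner_smul_left, inner_smul_right, hor g hg]; simp

end Unit

section Principal
variable {F : Type} [Field F] [Fintype F] [CharP F 2]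
variable {V : Type*} [NormedAddCommGroup V] [InnerProductSpace ℂ V] [FiniteDimensional ℂ V]

/-- highest weight vectors -/
def IsWt (ρ : GL (Fin 3) F →* (V →ₗ[ℂ] V)) (w : V) (l1 l2 l3 : Fˣ →* ℂ) : Prop :=
  w ≠ 0 ∧ (∀ a b c, ρ (gu a b c) w = w) ∧
    ∀ t1 t2 t3, ρ (dg t1 t2 t3) w = (l1 t1 * l2 t2 * l3 t3) • w

lemma exists_wt (ρ : GL (Fin 3) F →* (V →ₗ[ℂ] V)) (v : V) (hv : v ≠ 0)
    (hvU : ∀ a b c, ρ (gu a b c) v = v) : ∃ w l1 l2 l3, IsWt ρ w l1 l2 l3 := by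
  let W : Submodule ℂ V :=
    { carrier := {v | ∀ a b c, ρ (gu a b c) v = v}
      add_mem' := by intro x y hx hy a b c; rw [map_add, hx, hy]
      zero_mem' := by intro a b c; rw [map_zero]
      smul_mem' := by intro r x hx a b c; rw [map_smul, hx] }
  obtain ⟨w, hwW, hw0, hw⟩ := common_eig (fun t : Fˣ × Fˣ × Fˣ => ρ (dg t.1 t.2.1 t.2.2)) W
    ((Submodule.ne_bot_iff _).2 ⟨v, hvU, hv⟩) (by
      intro t v hv a b c
      rw [← rho_mul]
      have := dg_gu t.1 t.2.1 t.2.2 (↑t.1⁻¹ * a * t.2.1) (↑t.1⁻¹ * b * t.2.2) (↑t.2.1⁻¹ * c * t.2.2)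
      simp only [mul_assoc, Units.mul_inv, Units.mul_inv_cancel_left, mul_one] at this
      rw [← this, rho_mul, hv]) (by
      intro i j v hv
      rw [← rho_mul, ← rho_mul, dg_comm])
  choose c hc using hw
  have hcm : ∀ s t, c (s * t) = c s * c t := by
    intro s t
    have h1 := hc (s * t)
    have h2 : ρ (dg (s * t).1 (s * t).2.1 (s * t).2.2) w = (c s * c t) • w := by
      have : dg (s * t).1 (s * t).2.1 (s * t).2.2 = dg s.1 s.2.1 s.2.2 * dg t.1 t.2.1 t.2.2 := by
        rw [dg_mul]; rfl
      rw [this, rho_mul]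
      have h3 := hc t
      have h4 := hc s
      rw [h3, map_smul, h4, smul_smul, mul_comm]
    exact smul_left_injective ℂ hw0 (h1.symm.trans h2)
  have hc1 : c 1 = 1 := by
    have h1 := hc 1
    have h2 : dg (1 : Fˣ × Fˣ × Fˣ).1 (1 : Fˣ × Fˣ × Fˣ).2.1 (1 : Fˣ × Fˣ × Fˣ).2.2 = 1 := dg_one
    simp only [h2] at h1
    rw [rho_one] at h1
    refine smul_left_injective ℂ hw0 (?_ : c 1 • w = (1 : ℂ) • w)
    rw [← h1, one_smul]
  let C : Fˣ × Fˣ × Fˣ →* ℂ := ⟨⟨c, hc1⟩, hcm⟩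
  refine ⟨w, C.comp (MonoidHom.inl _ _), C.comp ((MonoidHom.inr _ _).comp (MonoidHom.inl _ _)),
    C.comp ((MonoidHom.inr _ _).comp (MonoidHom.inr _ _)), hw0, hwW, fun t1 t2 t3 => ?_⟩
  have h5 := hc (t1, t2, t3)
  simp only at h5
  rw [h5]
  congr 1
  simp only [MonoidHom.comp_apply, MonoidHom.inl_apply, MonoidHom.inr_apply, ← map_mul]
  change C (t1, t2, t3) = _
  congr 1
  simp

lemma wt_smul {ρ : GL (Fin 3) F →* (V →ₗ[ℂ] V)} {w : V} {l1 l2 l3 : Fˣ →* ℂ}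
    (h : IsWt ρ w l1 l2 l3) (n : GL (Fin 3) F) (t t' : Fˣ × Fˣ × Fˣ)
    (hn : dg t.1 t.2.1 t.2.2 * n = n * dg t'.1 t'.2.1 t'.2.2) :
    ρ (dg t.1 t.2.1 t.2.2) (ρ n w) = (l1 t'.1 * l2 t'.2.1 * l3 t'.2.2) • ρ n w := by
  rw [← rho_mul, hn, rho_mul, h.2.2, map_smul]

/-- orthogonality of a weight vector and a translated one -/
lemma wt_orth {ρ : GL (Fin 3) F →* (V →ₗ[ℂ] V)} (hu : Unt ρ) {w : V} {l1 l2 l3 : Fˣ →* ℂ}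
    (h : IsWt ρ w l1 l2 l3) (n : GL (Fin 3) F) (t1 t2 t3 t1' t2' t3' : Fˣ)
    (hn : dg t1 t2 t3 * n = n * dg t1' t2' t3')
    (hne : l1 t1 * l2 t2 * l3 t3 ≠ l1 t1' * l2 t2' * l3 t3') : inner ℂ w (ρ n w) = 0 :=
  weight_orth hu (dg t1 t2 t3) (h.2.2 _ _ _) (wt_smul h n (t1, t2, t3) (t1', t2', t3') hn) hne

lemma lne {l l' : Fˣ →* ℂ} (h : l ≠ l') : ∃ t, l t ≠ l' t := by
  by_contra hh
  push Not at hh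
  exact h (MonoidHom.ext hh)

lemma orth_s {ρ : GL (Fin 3) F →* (V →ₗ[ℂ] V)} (hu : Unt ρ) {w : V} {l1 l2 l3 : Fˣ →* ℂ}
    (h : IsWt ρ w l1 l2 l3) (hne : l1 ≠ l2) : inner ℂ w (ρ gs w) = 0 := by
  obtain ⟨t, ht⟩ := lne hne
  exact wt_orth hu h gs t 1 1 1 t 1 (dg_s _ _ _) (by simpa using ht)

lemma orth_r {ρ : GL (Fin 3) F →* (V →ₗ[ℂ] V)} (hu : Unt ρ) {w : V} {l1 l2 l3 : Fˣ →* ℂ}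
    (h : IsWt ρ w l1 l2 l3) (hne : l2 ≠ l3) : inner ℂ w (ρ gr w) = 0 := by
  obtain ⟨t, ht⟩ := lne hne
  exact wt_orth hu h gr 1 t 1 1 1 t (dg_r _ _ _) (by simpa using ht)

lemma all_distinct {ρ : GL (Fin 3) F →* (V →ₗ[ℂ] V)} (hρ : Irr ρ) (hu : Unt ρ) {w : V}
    {l1 l2 l3 : Fˣ →* ℂ} (h : IsWt ρ w l1 l2 l3) (h12 : l1 ≠ l2) (h13 : l1 ≠ l3) (h23 : l2 ≠ l3)
    (hq : Even (Fintype.card F)) : Odd (Module.finrank ℂ V) := by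
  obtain ⟨t, ht⟩ := lne h12
  obtain ⟨t', ht'⟩ := lne h13
  obtain ⟨t'', ht''⟩ := lne h23
  have key : ∀ (a b c a' b' c' : F) (t1 t2 t3 : Fˣ) n, inner ℂ w (ρ n w) = 0 →
      inner ℂ w (ρ (gu a b c * dg t1 t2 t3 * n * gu a' b' c') w) = 0 := by
    intro a b c a' b' c' t1 t2 t3 n hn
    rw [rho_mul, h.2.1, rho_mul, rho_mul, ← inv_inv (gu a b c), ← unit_adj hu, gu_inv,
      h.2.1, ← inv_inv (dg t1 t2 t3), ← unit_adj hu, dg_inv, h.2.2, inner_smul_left, hn, mul_zero]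
  rw [imprim1 hρ hu (BG F) w h.1]
  · exact index_odd hq _ gu_BG
  · intro p hp
    obtain ⟨a, b, c, a', b', c', t1, t2, t3, e | e⟩ := PG_mem_form (g := p) ⟨hp.2.1, hp.2.2⟩
    · refine ⟨l1 t1 * l2 t2 * l3 t3, ?_⟩
      rw [e, rho_mul, h.2.1, rho_mul, h.2.2, map_smul, h.2.1]
    · exfalso
      have h1 : gs ∈ BG F := by
        have := mul_mem (mul_mem (inv_mem (mul_mem (gu_BG a b c) (dg_BG t1 t2 t3))) hp)
          (inv_mem (gu_BG a' b' c'))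
        rw [e] at this
        simpa [mul_assoc] using this
      have h2 := h1.1
      rw [gs_val] at h2
      simp at h2
  · intro g hg
    obtain ⟨a, b, c, a', b', c', t1, t2, t3, n, hn, e⟩ := gbruhat g
    rw [e]
    apply key
    rcases hn with rfl | rfl | rfl | rfl | rfl | rfl
    · exfalso; apply hg; rw [e, io_one, mul_one]
      exact mul_mem (mul_mem (gu_BG ..) (dg_BG ..)) (gu_BG ..)
    · exact orth_s hu h h12
    · exact orth_r hu h h23
    · rw [io_mul]
      refine wt_orth hu h _ t' 1 1 1 1 t' ?_ (by simpa using ht')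
      change _ * (gs * gr) = gs * gr * _
      rw [← mul_assoc, dg_s, mul_assoc, dg_r, mul_assoc]
    · rw [io_mul]
      refine wt_orth hu h _ t 1 1 1 t 1 ?_ (by simpa using ht)
      change _ * (gr * gs) = gr * gs * _
      rw [← mul_assoc, dg_r, mul_assoc, dg_s, mul_assoc]
    · rw [io_mul, io_mul]
      refine wt_orth hu h _ t' 1 1 1 1 t' ?_ (by simpa using ht')
      change _ * (gs * gr * gs) = gs * gr * gs * _
      rw [mul_assoc, ← mul_assoc, dg_s, mul_assoc, ← mul_assoc _ gr, dg_r, mul_assoc, dg_s,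
        ← mul_assoc, ← mul_assoc, ← mul_assoc]

/-- the Hecke sum -/
def hk (ρ : GL (Fin 3) F →* (V →ₗ[ℂ] V)) (w : V) : V := ∑ x : F, ρ (gu x 0 0) (ρ gs w)

lemma hk_u (ρ : GL (Fin 3) F →* (V →ₗ[ℂ] V)) (w : V) (hw : ∀ a b c, ρ (gu a b c) w = w)
    (a b c : F) : ρ (gu a b c) (hk ρ w) = hk ρ w := by
  rw [hk, map_sum]
  refine Fintype.sum_equiv (Equiv.addLeft a) _ _ fun x => ?_
  rw [← rho_mul]
  have : gu a b c * gu x 0 0 = gu (a + x) 0 0 * gu 0 (b - (a + x) * c) c := by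
    rw [gu_mul, gu_mul]; congr 1 <;> ring
  rw [this, rho_mul, ← rho_mul _ _ gs]
  have h2 := gs_u (F := F) c (b - (a + x) * c)
  rw [← h2, rho_mul, hw]
  rfl

lemma hk_d (ρ : GL (Fin 3) F →* (V →ₗ[ℂ] V)) (w : V) (l1 l2 l3 : Fˣ →* ℂ)
    (h : IsWt ρ w l1 l2 l3) (a b c : Fˣ) :
    ρ (dg a b c) (hk ρ w) = (l2 a * l1 b * l3 c) • hk ρ w := by
  rw [hk, map_sum, Finset.smul_sum]
  refine Fintype.sum_equiv ((Units.mulLeft a).trans (Units.mulRight b⁻¹)) _ _ fun x => ?_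
  rw [← rho_mul, dg_gu, rho_mul, ← rho_mul _ _ gs, dg_s, rho_mul, h.2.2, map_smul, map_smul]
  simp [mul_comm (l1 b)]

lemma swap_s {ρ : GL (Fin 3) F →* (V →ₗ[ℂ] V)} (hu : Unt ρ) {w : V} {l1 l2 l3 : Fˣ →* ℂ}
    (h : IsWt ρ w l1 l2 l3) (hne : l1 ≠ l2) : IsWt ρ (hk ρ w) l2 l1 l3 := by
  refine ⟨?_, hk_u ρ w h.2.1, hk_d ρ w l1 l2 l3 h⟩
  intro h0
  classical
  have h1 : inner ℂ (hk ρ w) (ρ gs w) = 0 := by rw [h0, inner_zero_left]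
  rw [hk, sum_inner, Finset.sum_eq_single 0] at h1
  · rw [gu_zero, rho_one, hu] at h1
    exact h.1 (inner_self_eq_zero.1 h1)
  · intro x _ hx
    have e := sus (Units.mk0 x hx)
    rw [Units.val_mk0] at e
    rw [← hu gs, ← rho_mul, ← rho_mul, ← rho_mul, gss, rho_one, e, rho_mul, h.2.1,
      rho_mul, h.2.2, rho_mul, unit_adj hu, gu_inv, h.2.1, map_smul, inner_smul_left,
      unit_adj hu, gs_inv, orth_s hu h hne, mul_zero]
  · simp

/-- twist -/
def tw (ρ : GL (Fin 3) F →* (V →ₗ[ℂ] V)) : GL (Fin 3) F →* (V →ₗ[ℂ] V) := ρ.comp th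

lemma tw_apply (ρ : GL (Fin 3) F →* (V →ₗ[ℂ] V)) (g : GL (Fin 3) F) : tw ρ g = ρ (th g) := rfl

lemma th_th (g : GL (Fin 3) F) : th (th g) = g := by
  rw [th_apply, th_apply]
  have : (ta g⁻¹)⁻¹ = ta g := by
    rw [inv_eq_iff_mul_eq_one, ← ta_mul, mul_inv_cancel, ta_one]
  rw [this, ta_ta]

lemma tw_tw (ρ : GL (Fin 3) F →* (V →ₗ[ℂ] V)) : tw (tw ρ) = ρ := by
  ext g : 1
  rw [tw_apply, tw_apply, th_th]

lemma irr_tw {ρ : GL (Fin 3) F →* (V →ₗ[ℂ] V)} (h : Irr ρ) : Irr (tw ρ) := by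
  refine ⟨h.1, fun W hW => h.2 W fun g v hv => ?_⟩
  have := hW (th g) v hv
  rwa [tw_apply, th_th] at this

lemma unt_tw {ρ : GL (Fin 3) F →* (V →ₗ[ℂ] V)} (h : Unt ρ) : Unt (tw ρ) := fun g => h (th g)

lemma wt_tw {ρ : GL (Fin 3) F →* (V →ₗ[ℂ] V)} {w : V} {l1 l2 l3 : Fˣ →* ℂ}
    (h : IsWt ρ w l1 l2 l3) : IsWt (tw ρ) w (l3.comp (invMonoidHom))
      (l2.comp (invMonoidHom)) (l1.comp (invMonoidHom)) := by
  refine ⟨h.1, fun a b c => ?_, fun a b c => ?_⟩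
  · rw [tw_apply, th_gu, h.2.1]
  · rw [tw_apply, th_dg, h.2.2]
    simp only [MonoidHom.comp_apply, invMonoidHom_apply]
    congr 1; ring

lemma swap_r {ρ : GL (Fin 3) F →* (V →ₗ[ℂ] V)} (hu : Unt ρ) {w : V} {l1 l2 l3 : Fˣ →* ℂ}
    (h : IsWt ρ w l1 l2 l3) (hne : l2 ≠ l3) : ∃ w', IsWt ρ w' l1 l3 l2 := by
  have hii : ∀ l : Fˣ →* ℂ, (l.comp invMonoidHom).comp invMonoidHom = l := by
    intro l; ext t; simp
  have h1 := wt_tw (swap_s (unt_tw hu) (wt_tw h) (by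
    intro e
    apply hne
    rw [← hii l2, ← hii l3, e]))
  rw [tw_tw, hii, hii, hii] at h1
  exact ⟨_, h1⟩

lemma st_or {ρ : GL (Fin 3) F →* (V →ₗ[ℂ] V)} (hρ : Irr ρ) (hu : Unt ρ) {w : V}
    {l m : Fˣ →* ℂ} (h : IsWt ρ w l l m) (hne : l ≠ m)
    (hq : Even (Fintype.card F)) (hn : Even (Module.finrank ℂ V)) : w + hk ρ w = 0 := by
  classical
  by_contra h0
  rw [← Nat.not_odd_iff_even] at hn
  apply hn
  have hs : ρ gs (w + hk ρ w) = w + hk ρ w := by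
    have e1 : hk ρ w = ρ gs w + ∑ x : Fˣ, ρ (gu (x : F) 0 0) (ρ gs w) := by
      rw [hk, ← Finset.add_sum_erase _ _ (Finset.mem_univ (0 : F)), gu_zero, rho_one]
      congr 1
      refine (Finset.sum_bij (fun (x : Fˣ) _ => (x : F)) ?_ ?_ ?_ ?_).symm
      · intro x _; simp
      · intro x _ y _ hxy; exact Units.ext hxy
      · intro x hx
        exact ⟨Units.mk0 x (Finset.ne_of_mem_erase hx), Finset.mem_univ _, rfl⟩
      · intro x _; rfl
    rw [map_add]
    conv_lhs => rw [e1]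
    conv_rhs => rw [e1]
    rw [map_add, ← rho_mul, gss, rho_one, map_sum]
    have e2 : ∑ x : Fˣ, ρ gs (ρ (gu (x : F) 0 0) (ρ gs w)) =
        ∑ x : Fˣ, ρ (gu (x : F) 0 0) (ρ gs w) := by
      refine Fintype.sum_equiv (Equiv.inv Fˣ) _ _ fun x => ?_
      rw [← rho_mul, ← rho_mul, sus, rho_mul, h.2.1, rho_mul, h.2.2, map_smul, rho_mul]
      simp only [Equiv.inv_apply]
      rw [← map_mul l, mul_inv_cancel, map_one, map_one, mul_one, one_smul]
    rw [e2]
    abel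
  have hW : IsWt ρ (w + hk ρ w) l l m := by
    refine ⟨h0, fun a b c => ?_, fun a b c => ?_⟩
    · rw [map_add, h.2.1, hk_u ρ w h.2.1]
    · rw [map_add, h.2.2, hk_d ρ w l l m h, smul_add]
  have hP : ∀ p ∈ PG F, ∃ c : ℂ, ρ p (w + hk ρ w) = c • (w + hk ρ w) := by
    intro p hp
    obtain ⟨a, b, c, a', b', c', t1, t2, t3, e | e⟩ := PG_mem_form hp
    · refine ⟨l t1 * l t2 * m t3, ?_⟩
      rw [e, rho_mul, hW.2.1, rho_mul, hW.2.2, map_smul, hW.2.1]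
    · refine ⟨l t1 * l t2 * m t3, ?_⟩
      rw [e, rho_mul, hW.2.1, rho_mul, hs, rho_mul, hW.2.2, map_smul, hW.2.1]
  rw [imprim1 hρ hu (PG F) _ h0 hP]
  · exact index_odd hq _ gu_PG
  · intro g hg
    obtain ⟨p, hp, p', hp', rfl⟩ := PG_not hg
    obtain ⟨c, hc⟩ := hP _ hp'
    obtain ⟨c', hc'⟩ := hP _ (inv_mem hp)
    rw [rho_mul, hc, map_smul, inner_smul_right, rho_mul, ← inv_inv p, ← unit_adj hu, hc',
      inner_smul_left, orth_r hu hW hne]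
    simp

/-- outcome for representations with a unipotent-fixed vector -/
lemma principal {ρ : GL (Fin 3) F →* (V →ₗ[ℂ] V)} (hρ : Irr ρ) (hu : Unt ρ)
    (hq : Even (Fintype.card F)) (hn : Even (Module.finrank ℂ V)) (v : V) (hv : v ≠ 0)
    (hvU : ∀ a b c, ρ (gu a b c) v = v) :
    ∃ w l m, IsWt ρ w l l m ∧ (l = m ∨ (l ≠ m ∧ w + hk ρ w = 0)) := by
  have fin : ∀ w l m, IsWt ρ w l l m →
      ∃ w l m, IsWt ρ w l l m ∧ (l = m ∨ (l ≠ m ∧ w + hk ρ w = 0)) := by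
    intro w l m h
    refine ⟨w, l, m, h, ?_⟩
    by_cases e : l = m
    · exact Or.inl e
    · exact Or.inr ⟨e, st_or hρ hu h e hq hn⟩
  obtain ⟨w, l1, l2, l3, h⟩ := exists_wt ρ v hv hvU
  by_cases h12 : l1 = l2
  · subst h12; exact fin _ _ _ h
  by_cases h23 : l2 = l3
  · subst h23
    obtain ⟨w', h'⟩ := swap_r hu (swap_s hu h h12) h12
    exact fin _ _ _ h'
  by_cases h13 : l1 = l3
  · subst h13
    obtain ⟨w', h'⟩ := swap_r hu h h23
    exact fin _ _ _ h'
  · exact absurd (all_distinct hρ hu h h12 h13 h23 hq) (Nat.not_odd_iff_even.2 hn)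

end Principal


section GL2
variable {F : Type} [Field F]

/-- block embedding on matrices -/
def embM (F : Type) [Field F] : Matrix (Fin 2) (Fin 2) F →* Matrix (Fin 3) (Fin 3) F where
  toFun A := !![A 0 0, A 0 1, 0; A 1 0, A 1 1, 0; 0, 0, 1]
  map_one' := by ext i j; fin_cases i <;> fin_cases j <;> simp
  map_mul' A B := by
    ext i j; fin_cases i <;> fin_cases j <;> simp [Matrix.mul_apply, Fin.sum_univ_two, Fin.sum_univ_three]

/-- block embedding -/
def emb : GL (Fin 2) F →* GL (Fin 3) F := Units.map (embM F)

lemma emb_val (A : GL (Fin 2) F) :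
    (emb A).val = !![A.val 0 0, A.val 0 1, 0; A.val 1 0, A.val 1 1, 0; 0, 0, 1] := rfl

/-- unipotent -/
def hu2 (x : F) : GL (Fin 2) F where
  val := !![1, x; 0, 1]
  inv := !![1, -x; 0, 1]
  val_inv := by ext i j; fin_cases i <;> fin_cases j <;> simp
  inv_val := by ext i j; fin_cases i <;> fin_cases j <;> simp

/-- diagonal -/
def hd2 (a d : Fˣ) : GL (Fin 2) F where
  val := !![(a : F), 0; 0, d]
  inv := !![↑a⁻¹, 0; 0, ↑d⁻¹]
  val_inv := by ext i j; fin_cases i <;> fin_cases j <;> simp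
  inv_val := by ext i j; fin_cases i <;> fin_cases j <;> simp

/-- antidiagonal -/
def ha2 (b c : Fˣ) : GL (Fin 2) F where
  val := !![0, (b : F); c, 0]
  inv := !![0, ↑c⁻¹; ↑b⁻¹, 0]
  val_inv := by ext i j; fin_cases i <;> fin_cases j <;> simp
  inv_val := by ext i j; fin_cases i <;> fin_cases j <;> simp

lemma hu2_val (x : F) : (hu2 x).val = !![1, x; 0, 1] := rfl
lemma hd2_val (a d : Fˣ) : (hd2 a d).val = !![(a : F), 0; 0, d] := rfl
lemma ha2_val (b c : Fˣ) : (ha2 b c).val = !![0, (b : F); c, 0] := rfl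

lemma hu2_mul (x y : F) : hu2 x * hu2 y = hu2 (x + y) := by
  apply Units.ext
  rw [Units.val_mul, hu2_val, hu2_val, hu2_val]
  ext i j; fin_cases i <;> fin_cases j <;> simp [add_comm]
lemma hu2_zero : hu2 (0 : F) = 1 := by
  apply Units.ext
  rw [hu2_val]
  ext i j; fin_cases i <;> fin_cases j <;> simp
lemma hu2_inv (x : F) : (hu2 x)⁻¹ = hu2 (-x) := by
  rw [inv_eq_iff_mul_eq_one, hu2_mul, add_neg_cancel, hu2_zero]
lemma hd2_hu2 (a d : Fˣ) (x : F) : hd2 a d * hu2 x = hu2 (a * x * ↑d⁻¹) * hd2 a d := by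
  apply Units.ext
  rw [Units.val_mul, Units.val_mul, hu2_val, hd2_val, hu2_val]
  ext i j; fin_cases i <;> fin_cases j <;> simp

lemma emb_hu2 (x : F) : emb (hu2 x) = gu x 0 0 := by
  apply Units.ext
  rw [emb_val, hu2_val, gu_val]
  ext i j; fin_cases i <;> fin_cases j <;> simp [Um]
lemma emb_hd2 (a d : Fˣ) : emb (hd2 a d) = dg a d 1 := by
  apply Units.ext
  rw [emb_val, hd2_val, dg_val]
  ext i j; fin_cases i <;> fin_cases j <;> simp [Dm]

/-- antitranspose in size two -/
def t2 (g : GL (Fin 2) F) : GL (Fin 2) F where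
  val := !![g.val 1 1, g.val 0 1; g.val 1 0, g.val 0 0]
  inv := !![(g⁻¹).val 1 1, (g⁻¹).val 0 1; (g⁻¹).val 1 0, (g⁻¹).val 0 0]
  val_inv := by
    have h : (g⁻¹).val * g.val = 1 := g.inv_val
    ext i j
    have h1 := congrFun (congrFun h 0) 0
    have h2 := congrFun (congrFun h 0) 1
    have h3 := congrFun (congrFun h 1) 0
    have h4 := congrFun (congrFun h 1) 1
    rw [Matrix.mul_apply, Fin.sum_univ_two] at h1 h2 h3 h4
    simp only [Matrix.one_apply_eq, ne_eq, zero_ne_one, one_ne_zero, not_false_eq_true,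
      Matrix.one_apply_ne] at h1 h2 h3 h4
    fin_cases i <;> fin_cases j <;> simp [-coe_units_inv]
    · linear_combination h4
    · linear_combination h2
    · linear_combination h3
    · linear_combination h1
  inv_val := by
    have h : g.val * (g⁻¹).val = 1 := g.val_inv
    ext i j
    have h1 := congrFun (congrFun h 0) 0
    have h2 := congrFun (congrFun h 0) 1
    have h3 := congrFun (congrFun h 1) 0
    have h4 := congrFun (congrFun h 1) 1
    rw [Matrix.mul_apply, Fin.sum_univ_two] at h1 h2 h3 h4
    simp only [Matrix.one_apply_eq, ne_eq, zero_ne_one, one_ne_zero, not_false_eq_true,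
      Matrix.one_apply_ne] at h1 h2 h3 h4
    fin_cases i <;> fin_cases j <;> simp [-coe_units_inv]
    · linear_combination h4
    · linear_combination h2
    · linear_combination h3
    · linear_combination h1

lemma t2_val (g : GL (Fin 2) F) : (t2 g).val = !![g.val 1 1, g.val 0 1; g.val 1 0, g.val 0 0] := rfl

/-- unipotent subgroup in size two -/
def U2 (F : Type) [Field F] : Subgroup (GL (Fin 2) F) where
  carrier := {g | ∃ x, g = hu2 x}
  one_mem' := ⟨0, hu2_zero.symm⟩
  mul_mem' := by
    rintro _ _ ⟨a, rfl⟩ ⟨b, rfl⟩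
    exact ⟨_, hu2_mul ..⟩
  inv_mem' := by
    rintro _ ⟨a, rfl⟩
    exact ⟨_, hu2_inv ..⟩

lemma prim_ne (φ : AddChar F ℂ) (hφ : φ.IsPrimitive) {c c' : F} (h : c ≠ c') :
    ∃ x, φ (c * x) ≠ φ (c' * x) := by
  have h1 := hφ (sub_ne_zero.2 h)
  obtain ⟨x, hx⟩ := AddChar.ne_one_iff.1 h1
  refine ⟨x, fun e => hx ?_⟩
  rw [AddChar.mulShift_apply, sub_mul, AddChar.map_sub_eq_div, e, div_self]
  rw [← e]
  intro h0
  have h2 := AddChar.map_add_eq_mul φ (c * x) (-(c * x))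
  rw [h0, zero_mul, add_neg_cancel, AddChar.map_zero_eq_one] at h2
  exact one_ne_zero h2

lemma gelf2 [Fintype F] (φ : AddChar F ℂ) (hφ : φ.IsPrimitive)
    {V : Type*} [AddCommGroup V] [Module ℂ V] [FiniteDimensional ℂ V]
    {σ : GL (Fin 2) F →* (V →ₗ[ℂ] V)} (hσ : Irr σ) (E : Submodule ℂ V)
    (hE : ∀ v, v ∈ E ↔ ∀ x, σ (hu2 x) v = φ x • v) : Module.finrank ℂ E ≤ 1 := by
  classical
  have : Fintype (U2 F) := Fintype.ofFinite _
  have hdiag : ∀ a d : Fˣ, a ≠ d → ∃ x ∈ U2 F, ∃ y ∈ U2 F, hd2 a d * x = y * hd2 a d ∧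
      φ (x.val 0 1) ≠ φ (y.val 0 1) := by
    intro a d had
    have hne : (1 : F) ≠ a * ↑d⁻¹ := by
      intro h
      apply had
      apply Units.ext
      calc (a : F) = (a * ↑d⁻¹) * d := by simp
        _ = d := by rw [← h, one_mul]
    obtain ⟨x, hx⟩ := prim_ne φ hφ hne
    refine ⟨hu2 x, ⟨_, rfl⟩, _, ⟨_, rfl⟩, hd2_hu2 a d x, ?_⟩
    rw [hu2_val, hu2_val]
    simp only [of_apply, cons_val', cons_val_one, cons_val_zero, cons_val_fin_one]
    rw [one_mul] at hx
    convert hx using 2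
    ring_nf
  refine gelfand hσ (U2 F) (fun g => φ (g.val 0 1)) ?_ ?_ t2 ?_ ?_ ?_ ?_ ?_ E ?_
  · simp
  · rintro _ ⟨x, rfl⟩ _ ⟨y, rfl⟩
    rw [hu2_mul, hu2_val, hu2_val, hu2_val]
    simp [AddChar.map_add_eq_mul]
  · intro g h
    apply Units.ext
    rw [Units.val_mul, t2_val, t2_val, t2_val, Units.val_mul]
    ext i j; fin_cases i <;> fin_cases j <;> simp [Matrix.mul_apply, Fin.sum_univ_two] <;> ring
  · intro g
    apply Units.ext
    rw [t2_val, t2_val]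
    ext i j; fin_cases i <;> fin_cases j <;> simp
  · rintro _ ⟨x, rfl⟩
    refine ⟨x, ?_⟩
    apply Units.ext
    rw [t2_val, hu2_val]; simp
  · rintro _ ⟨x, rfl⟩
    simp only [t2_val, hu2_val]
    simp
  · intro k
    have hdet : k.val.det ≠ 0 := ((Matrix.isUnit_iff_isUnit_det _).1 k.isUnit).ne_zero
    rw [Matrix.det_fin_two] at hdet
    by_cases hc : k.val 1 0 = 0
    · rw [hc, mul_zero, sub_zero] at hdet
      have h0 := left_ne_zero_of_mul hdet
      have h1 := right_ne_zero_of_mul hdet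
      refine ⟨1, hu2 (k.val 0 1 / k.val 0 0), hd2 (Units.mk0 _ h0) (Units.mk0 _ h1), one_mem _,
        ⟨_, rfl⟩, ?_, ?_⟩
      · apply Units.ext
        rw [one_mul, Units.val_mul, hu2_val, hd2_val]
        ext i j; fin_cases i <;> fin_cases j <;> simp [hc] <;> field_simp
      · have e : t2 (hd2 (Units.mk0 _ h0) (Units.mk0 _ h1)) =
            hd2 (Units.mk0 _ h1) (Units.mk0 _ h0) := by
          apply Units.ext
          rw [t2_val, hd2_val, hd2_val]; simp
        rw [e]
        by_cases had : Units.mk0 _ h0 = Units.mk0 _ h1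
        · left; rw [had]
        · right; exact ⟨hdiag _ _ had, hdiag _ _ (Ne.symm had)⟩
    · have hb : k.val 0 1 - k.val 0 0 * k.val 1 1 / k.val 1 0 ≠ 0 := by
        intro h0
        apply hdet
        have : k.val 0 1 = k.val 0 0 * k.val 1 1 / k.val 1 0 := by linear_combination h0
        rw [this]; field_simp; ring
      refine ⟨hu2 (k.val 0 0 / k.val 1 0), hu2 (k.val 1 1 / k.val 1 0),
        ha2 (Units.mk0 _ hb) (Units.mk0 _ hc), ⟨_, rfl⟩, ⟨_, rfl⟩, ?_, Or.inl ?_⟩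
      · apply Units.ext
        rw [Units.val_mul, Units.val_mul, hu2_val, hu2_val, ha2_val]
        ext i j; fin_cases i <;> fin_cases j <;> simp <;> field_simp <;> ring
      · apply Units.ext
        rw [t2_val, ha2_val]; simp
  · intro v
    rw [hE]
    constructor
    · rintro h _ ⟨x, rfl⟩
      rw [h, hu2_val]; simp
    · intro h x
      rw [h _ ⟨x, rfl⟩, hu2_val]; simp

end GL2


section CaseN
variable {F : Type} [Field F] [CharP F 2]

lemma emb_N (A : GL (Fin 2) F) (b c : F) :
    ∃ b' c', gu 0 b c * emb A = emb A * gu 0 b' c' := by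
  have h : A.val * (A⁻¹).val = 1 := A.val_inv
  have h1 := congrFun (congrFun h 0) 0
  have h2 := congrFun (congrFun h 0) 1
  have h3 := congrFun (congrFun h 1) 0
  have h4 := congrFun (congrFun h 1) 1
  rw [Matrix.mul_apply, Fin.sum_univ_two] at h1 h2 h3 h4
  simp only [Matrix.one_apply_eq, ne_eq, zero_ne_one, one_ne_zero, not_false_eq_true,
      Matrix.one_apply_ne] at h1 h2 h3 h4
  refine ⟨(A⁻¹).val 0 0 * b + (A⁻¹).val 0 1 * c, (A⁻¹).val 1 0 * b + (A⁻¹).val 1 1 * c, ?_⟩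
  apply Units.ext
  rw [Units.val_mul, Units.val_mul, gu_val, gu_val, emb_val]
  ext i j; fin_cases i <;> fin_cases j <;> simp [Um, -coe_units_inv]
  · linear_combination -b * h1 - c * h2
  · linear_combination -b * h3 - c * h4

lemma emb_ha2 : emb (ha2 1 1) = (gs : GL (Fin 3) F) := by
  apply Units.ext
  rw [emb_val, ha2_val, gs_val]
  ext i j; fin_cases i <;> fin_cases j <;> simp

lemma dg_scal (t : Fˣ) (g : GL (Fin 3) F) : dg t t t * g = g * dg t t t := by
  apply Units.ext
  rw [Units.val_mul, Units.val_mul, dg_val]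
  ext i j; fin_cases i <;> fin_cases j <;>
    simp [Dm, Matrix.mul_apply, Matrix.vecMul, dotProduct, Fin.sum_univ_three, mul_comm]

variable [Fintype F]
variable {V : Type*} [NormedAddCommGroup V] [InnerProductSpace ℂ V] [FiniteDimensional ℂ V]

/-- fixed space of the first unipotent radical -/
def XN (ρ : GL (Fin 3) F →* (V →ₗ[ℂ] V)) : Submodule ℂ V where
  carrier := {v | ∀ b c, ρ (gu 0 b c) v = v}
  add_mem' := by intro x y hx hy b c; rw [map_add, hx, hy]
  zero_mem' := by intro b c; rw [map_zero]
  smul_mem' := by intro r x hx b c; rw [map_smul, hx]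

lemma sumU (ρ : GL (Fin 3) F →* (V →ₗ[ℂ] V)) (w : V) (hw : ∀ b c, ρ (gu 0 b c) w = w)
    (a b c : F) : ρ (gu a b c) (∑ x : F, ρ (gu x 0 0) w) = ∑ x : F, ρ (gu x 0 0) w := by
  rw [map_sum]
  refine Fintype.sum_equiv (Equiv.addLeft a) _ _ fun x => ?_
  rw [← rho_mul]
  have : gu a b c * gu x 0 0 = gu (a + x) 0 0 * gu 0 (b - (a + x) * c) c := by
    rw [gu_mul, gu_mul]; congr 1 <;> ring
  rw [this, rho_mul, hw]
  rfl


lemma caseN (φ : AddChar F ℂ) (hφ : φ.IsPrimitive) {ρ : GL (Fin 3) F →* (V →ₗ[ℂ] V)}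
    (hρ : Irr ρ) (hu : Unt ρ) (hq : Even (Fintype.card F))
    (h1 : ∃ v, v ≠ 0 ∧ ∀ b c, ρ (gu 0 b c) v = v)
    (h0 : ∀ v, (∀ a b c, ρ (gu a b c) v = v) → v = 0) : Odd (Module.finrank ℂ V) := by
  classical
  set σ : GL (Fin 2) F →* (V →ₗ[ℂ] V) := ρ.comp emb with hσ
  have hσa : ∀ A v, σ A v = ρ (emb A) v := fun _ _ => rfl
  obtain ⟨v0, hv0, hv1⟩ := h1
  obtain ⟨W, hWX, hW0, hWs, hmin⟩ := exists_min_sub (fun Y => ∀ g, ∀ v ∈ Y, σ g v ∈ Y) (XN ρ)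
    (by rw [Submodule.ne_bot_iff]; exact ⟨v0, hv1, hv0⟩) (by
      intro A v hv b c
      obtain ⟨b', c', h⟩ := emb_N A b c
      rw [hσa, ← rho_mul, h, rho_mul, hv])
  have hu1 : ∀ a b c, ∀ v ∈ W, ρ (gu a b c) v ∈ W := by
    intro a b c v hv
    have e : gu a b c = gu a 0 0 * gu 0 (b - a * c) c := by rw [gu_mul]; congr 1 <;> ring
    rw [e, rho_mul, hWX hv, ← emb_hu2]
    exact hWs _ _ hv
  have hd1 : ∀ a b c, ∀ v ∈ W, ρ (dg a b c) v ∈ W := by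
    intro a b c v hv
    have e : dg a b c = dg c c c * dg (a * c⁻¹) (b * c⁻¹) 1 := by
      rw [dg_mul]; congr 1 <;> simp
    obtain ⟨z, hz⟩ := schur hρ (ρ (dg c c c)) (fun g v => by rw [← rho_mul, dg_scal, rho_mul])
    rw [e, rho_mul, hz, ← emb_hd2]
    exact W.smul_mem _ (hWs _ _ hv)
  have hs1 : ∀ v ∈ W, ρ gs v ∈ W := by
    intro v hv
    rw [← emb_ha2]
    exact hWs _ _ hv
  have hP : ∀ p ∈ PG F, ∀ v ∈ W, ρ p v ∈ W := by
    intro p hp v hv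
    obtain ⟨a, b, c, a', b', c', t1, t2, t3, h | h⟩ := PG_mem_form hp
    · rw [h, rho_mul, rho_mul]
      exact hu1 _ _ _ _ (hd1 _ _ _ _ (hu1 _ _ _ _ hv))
    · rw [h, rho_mul, rho_mul, rho_mul]
      exact hu1 _ _ _ _ (hd1 _ _ _ _ (hs1 _ (hu1 _ _ _ _ hv)))
  rw [imprim hρ hu (PG F) W hW0 hP]
  · refine (index_odd hq _ gu_PG).mul ?_
    have hX12 : ∀ y, ∀ v ∈ W, ρ (gu y 0 0) v ∈ W := fun y => hu1 y 0 0
    rw [finrank_decomp φ hφ (fun y => ρ (gu y 0 0)) (by intro v; rw [gu_zero, rho_one])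
      (by intro y z v; rw [← rho_mul, gu_mul]; simp) W hX12]
    set E : F → Submodule ℂ V := fun a =>
      W ⊓ eigS (fun y => ρ (gu y 0 0)) fun y => φ (a * y) with hE
    have hE0 : Module.finrank ℂ (E 0) = 0 := by
      have : E 0 = ⊥ := by
        rw [eq_bot_iff]
        rintro v ⟨hv, hv'⟩
        rw [SetLike.mem_coe, mem_eigS] at hv'
        apply h0
        intro a b c
        have e : gu a b c = gu a 0 0 * gu 0 (b - a * c) c := by rw [gu_mul]; congr 1 <;> ring
        rw [e, rho_mul, hWX hv, hv']
        simp
      rw [this]; simp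
    have hEa : ∀ a : Fˣ, Module.finrank ℂ (E a) = Module.finrank ℂ (E 1) := by
      intro a
      refine finrank_eq_of_rho ρ (dg a 1 1) _ _ ?_ ?_
      · rintro v ⟨hv, hv'⟩
        refine ⟨hd1 _ _ _ _ hv, ?_⟩
        rw [SetLike.mem_coe, mem_eigS] at hv' ⊢
        intro y
        have e : gu y 0 0 * dg a 1 1 = dg a 1 1 * gu (↑a⁻¹ * y) 0 0 := by
          rw [dg_gu]; simp
        rw [← rho_mul, e, rho_mul, hv', map_smul]
        simp
      · rintro v ⟨hv, hv'⟩
        rw [dg_inv]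
        refine ⟨hd1 _ _ _ _ hv, ?_⟩
        rw [SetLike.mem_coe, mem_eigS] at hv' ⊢
        intro y
        have e : gu y 0 0 * dg a⁻¹ 1⁻¹ 1⁻¹ = dg a⁻¹ 1⁻¹ 1⁻¹ * gu (↑a * y) 0 0 := by
          rw [dg_gu]; simp
        rw [← rho_mul, e, rho_mul, hv', map_smul]
        simp
    have hE1 : Module.finrank ℂ (E 1) ≤ 1 := by
      have h := gelf2 φ hφ (irr_subRep σ W hWs hW0 hmin) ((E 1).comap W.subtype) (by
        intro v
        rw [Submodule.mem_comap, hE]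
        simp only [Submodule.mem_inf, mem_eigS]
        constructor
        · rintro ⟨_, h⟩ x
          apply Subtype.ext
          rw [subRep_coe, hσa, emb_hu2]
          have := h x
          simpa using this
        · intro h
          refine ⟨v.2, fun x => ?_⟩
          have := congrArg Subtype.val (h x)
          rw [subRep_coe, hσa, emb_hu2] at this
          simpa using this)
      rw [← Submodule.finrank_map_subtype_eq, Submodule.map_comap_subtype] at h
      rwa [inf_of_le_right inf_le_left] at h
    have hsum : ∑ a, Module.finrank ℂ (E a) = (Fintype.card F - 1) * Module.finrank ℂ (E 1) := by
      rw [← Finset.add_sum_erase _ _ (Finset.mem_univ 0), hE0, zero_add,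
        Finset.sum_congr rfl (g := fun _ => Module.finrank ℂ (E 1))]
      · simp [Finset.card_erase_of_mem]
      · intro a ha
        exact hEa (Units.mk0 a (Finset.ne_of_mem_erase ha))
    have hpos : 0 < Module.finrank ℂ W := by
      rw [Module.finrank_pos_iff]; exact (Submodule.nontrivial_iff_ne_bot).2 hW0
    rw [finrank_decomp φ hφ (fun y => ρ (gu y 0 0)) (by intro v; rw [gu_zero, rho_one])
      (by intro y z v; rw [← rho_mul, gu_mul]; simp) W hX12] at hpos
    change 0 < ∑ a, Module.finrank ℂ (E a) at hpos
    change Odd (∑ a, Module.finrank ℂ (E a))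
    rw [hsum] at hpos ⊢
    have : Module.finrank ℂ (E 1) = 1 := by
      have : Module.finrank ℂ (E 1) ≠ 0 := by
        intro h; rw [h, mul_zero] at hpos; exact lt_irrefl _ hpos
      omega
    rw [this, mul_one]
    exact Nat.Even.sub_odd Fintype.card_pos hq odd_one
  · intro g hg v hv v' hv'
    obtain ⟨p, hp, p', hp', rfl⟩ := PG_not hg
    rw [rho_mul, rho_mul, ← inv_inv p, ← unit_adj hu]
    refine avg_orth hu (fun x => gu x 0 0) ?_ ?_
    · intro x
      rw [← rho_mul, ← gr_u, rho_mul, hWX (hP _ hp' _ hv')]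
    · apply h0
      intro a b c
      exact sumU ρ _ (hWX (hP _ (inv_mem hp) _ hv)) a b c

lemma caseN' (φ : AddChar F ℂ) (hφ : φ.IsPrimitive) {ρ : GL (Fin 3) F →* (V →ₗ[ℂ] V)}
    (hρ : Irr ρ) (hu : Unt ρ) (hq : Even (Fintype.card F))
    (h1 : ∃ v, v ≠ 0 ∧ ∀ a b, ρ (gu a b 0) v = v)
    (h0 : ∀ v, (∀ a b c, ρ (gu a b c) v = v) → v = 0) : Odd (Module.finrank ℂ V) := by
  refine caseN φ hφ (irr_tw hρ) (unt_tw hu) hq ?_ ?_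
  · obtain ⟨v, hv, hv'⟩ := h1
    refine ⟨v, hv, fun b c => ?_⟩
    rw [tw_apply, th_gu, neg_zero, hv']
  · intro v hv
    apply h0
    intro a b c
    have := hv (-c) (a * c - b) (-a)
    rw [tw_apply, th_gu] at this
    convert this using 3
    congr 1 <;> ring

end CaseN


section Cusp
variable {F : Type} [Field F] [CharP F 2]

lemma gsrs : (gs * gr * gs : GL (Fin 3) F) = gr * gs * gr := by
  apply Units.ext
  simp only [Units.val_mul, gs_val, gr_val]
  ext i j; fin_cases i <;> fin_cases j <;> simp

/-- the double coset of `n` supports no bi-equivariant function -/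
def Bad (φ : AddChar F ℂ) (n : GL (Fin 3) F) : Prop :=
  ∃ x ∈ UG F, ∃ y ∈ UG F, n * x = y * n ∧
    φ (x.val 0 1 + x.val 1 2) ≠ φ (y.val 0 1 + y.val 1 2)

lemma bad_of (φ : AddChar F ℂ) {n : GL (Fin 3) F} {a b c a' b' c' : F}
    (h : n * gu a b c = gu a' b' c' * n) (h' : φ (a + c) ≠ φ (a' + c')) : Bad φ n := by
  refine ⟨_, ⟨a, b, c, rfl⟩, _, ⟨a', b', c', rfl⟩, h, ?_⟩
  rw [gu_val, gu_val]
  simpa [Um] using h'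

lemma prim_ne' (φ : AddChar F ℂ) (hφ : φ.IsPrimitive) (t t' : Fˣ) (h : t ≠ t') :
    ∃ x, φ x ≠ φ (t * x * ↑t'⁻¹) := by
  have hne : (1 : F) ≠ t * ↑t'⁻¹ := by
    intro e
    apply h
    apply Units.ext
    calc (t : F) = (t * ↑t'⁻¹) * t' := by simp
      _ = t' := by rw [← e, one_mul]
  obtain ⟨x, hx⟩ := prim_ne φ hφ hne
  refine ⟨x, ?_⟩
  rw [one_mul] at hx
  convert hx using 2
  ring_nf

lemma prim_ne0 (φ : AddChar F ℂ) (hφ : φ.IsPrimitive) (t t' : Fˣ) :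
    ∃ x, φ 0 ≠ φ (t * x * ↑t'⁻¹) := by
  have hne : (0 : F) ≠ t * ↑t'⁻¹ := by
    intro e
    exact (t * t'⁻¹).ne_zero (by rw [Units.val_mul]; exact e.symm)
  obtain ⟨x, hx⟩ := prim_ne φ hφ hne
  refine ⟨x, ?_⟩
  rw [zero_mul] at hx
  convert hx using 2
  ring_nf

lemma bad_d (φ : AddChar F ℂ) (hφ : φ.IsPrimitive) (t1 t2 t3 : Fˣ) (h : ¬ (t1 = t2 ∧ t2 = t3)) :
    Bad φ (dg t1 t2 t3) := by
  by_cases h12 : t1 = t2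
  · have h23 : t2 ≠ t3 := fun e => h ⟨h12, e⟩
    obtain ⟨x, hx⟩ := prim_ne' φ hφ _ _ h23
    exact bad_of φ (dg_gu t1 t2 t3 0 0 x) (by simpa using hx)
  · obtain ⟨x, hx⟩ := prim_ne' φ hφ _ _ h12
    exact bad_of φ (dg_gu t1 t2 t3 x 0 0) (by simpa using hx)

lemma bad_s (φ : AddChar F ℂ) (hφ : φ.IsPrimitive) (t1 t2 t3 : Fˣ) :
    Bad φ (dg t1 t2 t3 * gs) := by
  obtain ⟨x, hx⟩ := prim_ne0 φ hφ t2 t3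
  refine bad_of φ (a := 0) (b := x) (c := 0) (a' := 0) (b' := 0) (c' := t2 * x * ↑t3⁻¹) ?_ ?_
  · rw [mul_assoc, gs_u, ← mul_assoc, dg_gu, mul_assoc]; simp
  · simpa using hx

lemma bad_r (φ : AddChar F ℂ) (hφ : φ.IsPrimitive) (t1 t2 t3 : Fˣ) :
    Bad φ (dg t1 t2 t3 * gr) := by
  obtain ⟨x, hx⟩ := prim_ne0 φ hφ t1 t2
  refine bad_of φ (a := 0) (b := x) (c := 0) (a' := t1 * x * ↑t2⁻¹) (b' := 0) (c' := 0) ?_ ?_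
  · rw [mul_assoc, gr_u, ← mul_assoc, dg_gu, mul_assoc]; simp
  · simpa using hx

lemma bad_sr (φ : AddChar F ℂ) (hφ : φ.IsPrimitive) (t1 t2 t3 : Fˣ) (h : t2 ≠ t3) :
    Bad φ (dg t1 t2 t3 * gs * gr) := by
  obtain ⟨x, hx⟩ := prim_ne' φ hφ t2 t3 h
  refine bad_of φ (a := x) (b := 0) (c := 0) (a' := 0) (b' := 0) (c' := t2 * x * ↑t3⁻¹) ?_ ?_
  · rw [mul_assoc, gr_u, ← mul_assoc, mul_assoc _ gs, gs_u, ← mul_assoc, dg_gu]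
    simp [mul_assoc]
  · simpa using hx

lemma bad_rs (φ : AddChar F ℂ) (hφ : φ.IsPrimitive) (t1 t2 t3 : Fˣ) (h : t1 ≠ t2) :
    Bad φ (dg t1 t2 t3 * gr * gs) := by
  obtain ⟨x, hx⟩ := prim_ne' φ hφ t1 t2 h
  refine bad_of φ (a := 0) (b := 0) (c := x) (a' := t1 * x * ↑t2⁻¹) (b' := 0) (c' := 0) ?_ ?_
  · rw [mul_assoc, gs_u, ← mul_assoc, mul_assoc _ gr, gr_u, ← mul_assoc, dg_gu]
    simp [mul_assoc]
  · simpa using hx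

lemma gelf3 [Fintype F] (φ : AddChar F ℂ) (hφ : φ.IsPrimitive)
    {V : Type*} [AddCommGroup V] [Module ℂ V] [FiniteDimensional ℂ V]
    {ρ : GL (Fin 3) F →* (V →ₗ[ℂ] V)} (hρ : Irr ρ) (E : Submodule ℂ V)
    (hE : ∀ v, v ∈ E ↔ ∀ a b c, ρ (gu a b c) v = φ (a + c) • v) : Module.finrank ℂ E ≤ 1 := by
  classical
  have : Fintype (UG F) := Fintype.ofFinite _
  have hs' : ∀ a b c : Fˣ, gs * dg a b c = dg b a c * gs := fun a b c => (dg_s b a c).symm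
  have hr' : ∀ a b c : Fˣ, gr * dg a b c = dg a c b * gr := fun a b c => (dg_r a c b).symm
  refine gelfand hρ (UG F) (fun g => φ (g.val 0 1 + g.val 1 2)) ?_ ?_ ta ta_mul ta_ta ?_ ?_ ?_ E ?_
  · simp
  · rintro _ ⟨a, b, c, rfl⟩ _ ⟨a', b', c', rfl⟩
    rw [gu_mul, gu_val, gu_val, gu_val, ← AddChar.map_add_eq_mul]
    congr 1
    simp [Um]; ring
  · rintro _ ⟨a, b, c, rfl⟩
    exact ⟨_, _, _, ta_gu ..⟩
  · rintro _ ⟨a, b, c, rfl⟩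
    rw [ta_gu, gu_val, gu_val]
    congr 1
    simp [Um]; ring
  · intro k
    obtain ⟨a, b, c, a', b', c', t1, t2, t3, n, hn, h⟩ := gbruhat k
    refine ⟨gu a b c, gu a' b' c', dg t1 t2 t3 * io n, ⟨_, _, _, rfl⟩, ⟨_, _, _, rfl⟩, ?_, ?_⟩
    · rw [h]; simp only [mul_assoc]
    change _ ∨ (Bad φ _ ∧ Bad φ _)
    rcases hn with rfl | rfl | rfl | rfl | rfl | rfl
    · rw [io_one, mul_one, ta_dg]
      by_cases e : t1 = t2 ∧ t2 = t3
      · left; obtain ⟨rfl, rfl⟩ := e; rfl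
      · right
        exact ⟨bad_d φ hφ _ _ _ e, bad_d φ hφ _ _ _ fun e' => e ⟨e'.2.symm, e'.1.symm⟩⟩
    · right
      change Bad φ (_ * gs) ∧ Bad φ (ta (_ * gs))
      rw [ta_mul, ta_gs, ta_dg, hr']
      exact ⟨bad_s φ hφ _ _ _, bad_r φ hφ _ _ _⟩
    · right
      change Bad φ (_ * gr) ∧ Bad φ (ta (_ * gr))
      rw [ta_mul, ta_gr, ta_dg, hs']
      exact ⟨bad_r φ hφ _ _ _, bad_s φ hφ _ _ _⟩
    · have e1 : ta (dg t1 t2 t3 * io (sS * rS)) = dg t1 t3 t2 * gs * gr := by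
        rw [io_mul]
        change ta (_ * (gs * gr)) = _
        rw [ta_mul, ta_mul, ta_gs, ta_gr, ta_dg, mul_assoc gs gr, hr', ← mul_assoc, hs']
      have e2 : dg t1 t2 t3 * io (sS * rS) = dg t1 t2 t3 * gs * gr := by
        rw [io_mul, ← mul_assoc]; rfl
      rw [e1, e2]
      by_cases e : t2 = t3
      · left; rw [e]
      · right; exact ⟨bad_sr φ hφ _ _ _ e, bad_sr φ hφ _ _ _ (Ne.symm e)⟩
    · have e1 : ta (dg t1 t2 t3 * io (rS * sS)) = dg t2 t1 t3 * gr * gs := by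
        rw [io_mul]
        change ta (_ * (gr * gs)) = _
        rw [ta_mul, ta_mul, ta_gs, ta_gr, ta_dg, mul_assoc gr gs, hs', ← mul_assoc, hr']
      have e2 : dg t1 t2 t3 * io (rS * sS) = dg t1 t2 t3 * gr * gs := by
        rw [io_mul, ← mul_assoc]; rfl
      rw [e1, e2]
      by_cases e : t1 = t2
      · left; rw [e]
      · right; exact ⟨bad_rs φ hφ _ _ _ e, bad_rs φ hφ _ _ _ (Ne.symm e)⟩
    · left
      rw [io_mul, io_mul]
      change ta (_ * (gs * gr * gs)) = _ * (gs * gr * gs)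
      rw [ta_mul, ta_mul, ta_mul, ta_gs, ta_gr, ta_dg, ← mul_assoc gr, mul_assoc _ gr, hr', ← mul_assoc,
        mul_assoc gr gs, hs', ← mul_assoc, hr', gsrs]
      simp only [mul_assoc]
  · intro v
    rw [hE]
    constructor
    · rintro h _ ⟨a, b, c, rfl⟩
      rw [h, gu_val]; simp [Um]
    · intro h a b c
      rw [h _ ⟨a, b, c, rfl⟩, gu_val]; simp [Um]

end Cusp


section Cusp2
variable {F : Type} [Field F] [CharP F 2] [Fintype F]

lemma sum_units {f : F → ℕ} [DecidableEq F] (h0 : f 0 = 0) (h : ∀ a : Fˣ, f a = f 1) :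
    ∑ a, f a = (Fintype.card F - 1) * f 1 := by
  rw [← Finset.add_sum_erase _ _ (Finset.mem_univ 0), h0, zero_add,
    Finset.sum_congr rfl (g := fun _ => f 1)]
  · simp [Finset.card_erase_of_mem]
  · intro a ha
    exact h (Units.mk0 a (Finset.ne_of_mem_erase ha))

variable {V : Type*} [NormedAddCommGroup V] [InnerProductSpace ℂ V] [FiniteDimensional ℂ V]

lemma cusp (φ : AddChar F ℂ) (hφ : φ.IsPrimitive) {ρ : GL (Fin 3) F →* (V →ₗ[ℂ] V)}
    (hρ : Irr ρ) (hq : Even (Fintype.card F))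
    (h1 : ∀ v, (∀ b c, ρ (gu 0 b c) v = v) → v = 0)
    (h2 : ∀ v, (∀ a b, ρ (gu a b 0) v = v) → v = 0) : Odd (Module.finrank ℂ V) := by
  classical
  set X12 : F → (V →ₗ[ℂ] V) := fun y => ρ (gu y 0 0) with hX12
  set X13 : F → (V →ₗ[ℂ] V) := fun y => ρ (gu 0 y 0) with hX13
  set X23 : F → (V →ₗ[ℂ] V) := fun y => ρ (gu 0 0 y) with hX23
  have z12 : ∀ v, X12 0 v = v := by intro v; simp only [hX12]; rw [gu_zero, rho_one]
  have z13 : ∀ v, X13 0 v = v := by intro v; simp only [hX13]; rw [gu_zero, rho_one]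
  have z23 : ∀ v, X23 0 v = v := by intro v; simp only [hX23]; rw [gu_zero, rho_one]
  have a12 : ∀ y z v, X12 (y + z) v = X12 y (X12 z v) := by
    intro y z v; simp only [hX12]; rw [← rho_mul, gu_mul]; simp
  have a13 : ∀ y z v, X13 (y + z) v = X13 y (X13 z v) := by
    intro y z v; simp only [hX13]; rw [← rho_mul, gu_mul]; simp
  have a23 : ∀ y z v, X23 (y + z) v = X23 y (X23 z v) := by
    intro y z v; simp only [hX23]; rw [← rho_mul, gu_mul]; simp
  set E : F → Submodule ℂ V := fun a => eigS X13 fun y => φ (a * y) with hE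
  have hEu : ∀ a x z, ∀ v ∈ E a, ρ (gu x 0 z) v ∈ E a := by
    intro a x z v hv y
    have e : gu 0 y 0 * gu x 0 z = gu x 0 z * gu 0 y 0 := by
      rw [gu_mul, gu_mul]; congr 1 <;> ring
    change ρ (gu 0 y 0) _ = _
    rw [← rho_mul, e, rho_mul]
    have := hv y
    simp only [hX13] at this
    rw [this, map_smul]
  have hd0 : ∀ t1 t2 t3, ∀ v ∈ E 0, ρ (dg t1 t2 t3) v ∈ E 0 := by
    intro t1 t2 t3 v hv y
    have e : gu 0 y 0 * dg t1 t2 t3 = dg t1 t2 t3 * gu 0 (↑t1⁻¹ * y * t3) 0 := by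
      rw [dg_gu]; simp [mul_assoc]
    change ρ (gu 0 y 0) _ = _
    rw [← rho_mul, e, rho_mul]
    have := hv (↑t1⁻¹ * y * t3)
    simp only [hX13] at this
    rw [this, map_smul]; simp
  -- nontrivial part
  have hEdec : ∀ a, Module.finrank ℂ (E a) =
      ∑ b, Module.finrank ℂ (E a ⊓ eigS X23 fun y => φ (b * y) : Submodule ℂ V) := fun a =>
    finrank_decomp φ hφ X23 z23 a23 (E a) fun y v hv => hEu a 0 y v hv
  have hEa : ∀ a : Fˣ, ∀ b, Module.finrank ℂ (E a ⊓ eigS X23 fun y => φ (b * y) : Submodule ℂ V) =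
      Module.finrank ℂ (E a ⊓ eigS X23 fun y => φ (0 * y) : Submodule ℂ V) := by
    intro a b
    have key : ∀ b x v, v ∈ (E a ⊓ eigS X23 fun y => φ (b * y) : Submodule ℂ V) →
        ρ (gu x 0 0) v ∈ (E a ⊓ eigS X23 fun y => φ ((b - a * x) * y) : Submodule ℂ V) := by
      rintro b x v ⟨hv, hv'⟩
      refine ⟨hEu _ _ _ _ hv, fun y => ?_⟩
      have e : gu 0 0 y * gu x 0 0 = gu x 0 0 * (gu 0 (-x * y) 0 * gu 0 0 y) := by
        rw [gu_mul, gu_mul, gu_mul]; congr 1 <;> ring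
      change ρ (gu 0 0 y) _ = _
      have h3 := hv' y
      have h4 := hv (-x * y)
      simp only [hX13, hX23] at h3 h4
      rw [← rho_mul, e, rho_mul, rho_mul, h3, map_smul, h4, map_smul, map_smul, smul_smul,
        ← AddChar.map_add_eq_mul]
      congr 2
      ring
    refine finrank_eq_of_rho ρ (gu (↑a⁻¹ * b) 0 0) _ _ ?_ ?_
    · intro v hv
      have := key b (↑a⁻¹ * b) v hv
      simpa using this
    · intro v hv
      have := key 0 (-(↑a⁻¹ * b)) v hv
      rw [gu_inv]
      simpa using this
  have hEa' : ∀ a : Fˣ, Module.finrank ℂ (E a) = Fintype.card F *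
      Module.finrank ℂ (E a ⊓ eigS X23 fun y => φ (0 * y) : Submodule ℂ V) := by
    intro a
    rw [hEdec, Finset.sum_congr rfl fun b _ => hEa a b]
    simp
  have htot : Module.finrank ℂ V = ∑ a, Module.finrank ℂ (E a) :=
    finrank_decomp0 φ hφ X13 z13 a13
  have hE0 : E 0 ≠ ⊥ := by
    intro h0
    have h23 : ∀ v, (∀ y, X23 y v = v) → v = 0 := by
      intro v hv
      have : ρ gs v ∈ E 0 := by
        intro y
        change ρ (gu 0 y 0) _ = _
        have := hv y
        simp only [hX23] at this
        rw [← rho_mul, ← gs_u, rho_mul, this]; simp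
      rw [h0, Submodule.mem_bot] at this
      exact rho_inj ρ gs (by rw [this, map_zero])
    have hz : Module.finrank ℂ V = 0 := by
      rw [htot]
      refine Finset.sum_eq_zero fun a _ => ?_
      by_cases ha : a = 0
      · rw [ha, h0]; simp
      · have := hEa' (Units.mk0 a ha)
        rw [Units.val_mk0] at this
        rw [this]
        have hb : (E a ⊓ eigS X23 fun y => φ (0 * y) : Submodule ℂ V) = ⊥ := by
          rw [eq_bot_iff]
          rintro v ⟨_, hv⟩
          apply h23
          intro y
          rw [hv y]; simp
        rw [hb]; simp
    have := hρ.1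
    have := Module.finrank_pos (R := ℂ) (M := V)
    omega
  -- trivial part
  set Z : F → Submodule ℂ V := fun b => E 0 ⊓ eigS X23 fun y => φ (b * y) with hZ
  have hZd : ∀ t1 t2 t3 : Fˣ, ∀ b, ∀ v ∈ Z b, ρ (dg t1 t2 t3) v ∈ Z (b * ↑t2⁻¹ * t3) := by
    rintro t1 t2 t3 b v ⟨hv, hv'⟩
    refine ⟨hd0 _ _ _ _ hv, fun y => ?_⟩
    have e : gu 0 0 y * dg t1 t2 t3 = dg t1 t2 t3 * gu 0 0 (↑t2⁻¹ * y * t3) := by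
      rw [dg_gu]; simp [mul_assoc]
    change ρ (gu 0 0 y) _ = _
    rw [← rho_mul, e, rho_mul]
    have := hv' (↑t2⁻¹ * y * t3)
    simp only [hX23] at this
    rw [this, map_smul]
    congr 2
    ring
  have hZ0 : Module.finrank ℂ (Z 0) = 0 := by
    have : Z 0 = ⊥ := by
      rw [eq_bot_iff]
      rintro v ⟨hv, hv'⟩
      apply h1
      intro b c
      have e : gu 0 b c = gu 0 b 0 * gu 0 0 c := by rw [gu_mul]; congr 1 <;> ring
      have h3 := hv' c
      have h4 := hv b
      simp only [hX13, hX23] at h3 h4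
      rw [e, rho_mul, h3, map_smul, h4]; simp
    rw [this]; simp
  have hZa : ∀ a : Fˣ, Module.finrank ℂ (Z a) = Module.finrank ℂ (Z 1) := by
    intro a
    refine finrank_eq_of_rho ρ (dg 1 a 1) _ _ ?_ ?_
    · intro v hv
      simpa using hZd 1 a 1 a v hv
    · intro v hv
      rw [dg_inv]
      simpa using hZd 1 a⁻¹ 1 1 v hv
  have hf0 : Module.finrank ℂ (E 0) = (Fintype.card F - 1) * Module.finrank ℂ (Z 1) := by
    rw [hEdec]
    exact sum_units (f := fun b => Module.finrank ℂ (Z b)) hZ0 hZa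
  set Y : F → Submodule ℂ V := fun a => Z 1 ⊓ eigS X12 fun y => φ (a * y) with hY
  have hZ1u : ∀ y, ∀ v ∈ Z 1, X12 y v ∈ Z 1 := by
    rintro y v ⟨hv, hv'⟩
    refine ⟨hEu _ _ _ _ hv, fun z => ?_⟩
    have e : gu 0 0 z * gu y 0 0 = gu y 0 0 * (gu 0 (-y * z) 0 * gu 0 0 z) := by
      rw [gu_mul, gu_mul, gu_mul]; congr 1 <;> ring
    change ρ (gu 0 0 z) (ρ (gu y 0 0) v) = _
    have h3 := hv' z
    have h4 := hv (-y * z)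
    simp only [hX13, hX23] at h3 h4
    rw [← rho_mul, e, rho_mul, rho_mul, h3, map_smul, h4, map_smul, map_smul]
    simp [hX12]
  have hY0 : Module.finrank ℂ (Y 0) = 0 := by
    have : Y 0 = ⊥ := by
      rw [eq_bot_iff]
      rintro v ⟨⟨hv, _⟩, hv'⟩
      apply h2
      intro a b
      have e : gu a b 0 = gu 0 b 0 * gu a 0 0 := by rw [gu_mul]; congr 1 <;> ring
      have h3 := hv' a
      have h4 := hv b
      simp only [hX13, hX12] at h3 h4
      rw [e, rho_mul, h3, map_smul, h4]; simp
    rw [this]; simp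
  have hYd : ∀ t : Fˣ, ∀ b, ∀ v ∈ Y b, ρ (dg t 1 1) v ∈ Y (b * ↑t⁻¹) := by
    rintro t b v ⟨hv, hv'⟩
    refine ⟨by simpa using hZd t 1 1 1 v hv, fun y => ?_⟩
    have e : gu y 0 0 * dg t 1 1 = dg t 1 1 * gu (↑t⁻¹ * y) 0 0 := by
      rw [dg_gu]; simp
    change ρ (gu y 0 0) _ = _
    rw [← rho_mul, e, rho_mul]
    have := hv' (↑t⁻¹ * y)
    simp only [hX12] at this
    rw [this, map_smul]
    congr 2
    ring
  have hYa : ∀ a : Fˣ, Module.finrank ℂ (Y a) = Module.finrank ℂ (Y 1) := by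
    intro a
    refine finrank_eq_of_rho ρ (dg a 1 1) _ _ ?_ ?_
    · intro v hv
      simpa using hYd a a v hv
    · intro v hv
      rw [dg_inv]
      simpa using hYd a⁻¹ 1 v hv
  have hf1 : Module.finrank ℂ (Z 1) = (Fintype.card F - 1) * Module.finrank ℂ (Y 1) := by
    rw [finrank_decomp φ hφ X12 z12 a12 (Z 1) hZ1u]
    exact sum_units (f := fun b => Module.finrank ℂ (Y b)) hY0 hYa
  have hY1 : Module.finrank ℂ (Y 1) ≤ 1 := by
    refine gelf3 φ hφ hρ (Y 1) fun v => ?_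
    constructor
    · rintro ⟨⟨hv1, hv2⟩, hv3⟩ a b c
      have e : gu a b c = gu 0 (b - a * c) 0 * (gu a 0 0 * gu 0 0 c) := by
        rw [gu_mul, gu_mul]; congr 1 <;> ring
      have h3 := hv1 (b - a * c)
      have h4 := hv2 c
      have h5 := hv3 a
      simp only [hX13, hX23, hX12] at h3 h4 h5
      rw [e, rho_mul, rho_mul, h4, map_smul, h5, map_smul, map_smul, h3, smul_smul, smul_smul,
        ← AddChar.map_add_eq_mul, ← AddChar.map_add_eq_mul]
      congr 2
      ring
    · intro h
      refine ⟨⟨fun y => ?_, fun y => ?_⟩, fun y => ?_⟩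
      · simp only [hX13]; rw [h]; simp
      · simp only [hX23]; rw [h]; simp
      · simp only [hX12]; rw [h]; simp
  have hpos : 0 < Module.finrank ℂ (E 0) := by
    rw [Module.finrank_pos_iff]; exact (Submodule.nontrivial_iff_ne_bot).2 hE0
  rw [hf0, hf1] at hpos
  have hg : Module.finrank ℂ (Y 1) = 1 := by
    have : Module.finrank ℂ (Y 1) ≠ 0 := by
      intro h; rw [h] at hpos; simp at hpos
    omega
  have hodd : Odd (Fintype.card F - 1) := Nat.Even.sub_odd Fintype.card_pos hq odd_one
  rw [htot, ← Finset.add_sum_erase _ _ (Finset.mem_univ 0), hf0, hf1, hg, mul_one]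
  refine (hodd.mul hodd).add_even ?_
  refine Finset.even_sum _ fun a ha => ?_
  have := hEa' (Units.mk0 a (Finset.ne_of_mem_erase ha))
  rw [Units.val_mk0] at this
  rw [this]
  exact hq.mul_right _

lemma exists_prim (F : Type) [Field F] [Fintype F] : ∃ φ : AddChar F ℂ, φ.IsPrimitive := by
  refine ⟨AddChar.FiniteField.primitiveChar_to_Complex F, ?_⟩
  exact AddChar.FiniteField.primitiveChar_to_Complex_isPrimitive F

lemma gl_main {ρ : GL (Fin 3) F →* (V →ₗ[ℂ] V)} (hρ : Irr ρ) (hu : Unt ρ)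
    (hq : Even (Fintype.card F)) (hn : Even (Module.finrank ℂ V)) :
    ∃ w l m, IsWt ρ w l l m ∧ (l = m ∨ (l ≠ m ∧ w + hk ρ w = 0)) := by
  obtain ⟨φ, hφ⟩ := exists_prim F
  have hn' := Nat.not_odd_iff_even.2 hn
  by_cases h0 : ∀ v, (∀ a b c, ρ (gu a b c) v = v) → v = 0
  · exfalso
    apply hn'
    by_cases h1 : ∃ v, v ≠ 0 ∧ ∀ b c, ρ (gu 0 b c) v = v
    · exact caseN φ hφ hρ hu hq h1 h0
    by_cases h2 : ∃ v, v ≠ 0 ∧ ∀ a b, ρ (gu a b 0) v = v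
    · exact caseN' φ hφ hρ hu hq h2 h0
    · refine cusp φ hφ hρ hq (fun v hv => ?_) (fun v hv => ?_)
      · by_contra h; exact h1 ⟨v, h, hv⟩
      · by_contra h; exact h2 ⟨v, h, hv⟩
  · push Not at h0
    obtain ⟨v, hv, hv0⟩ := h0
    exact principal hρ hu hq hn v hv0 hv

end Cusp2


section Lift
variable {F : Type} [Field F] [CharP F 2] [Fintype F]

lemma gl_main' {V : Type*} [AddCommGroup V] [Module ℂ V] [FiniteDimensional ℂ V]
    {ρ : GL (Fin 3) F →* (V →ₗ[ℂ] V)} (hρ : Irr ρ)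
    (hq : Even (Fintype.card F)) (hn : Even (Module.finrank ℂ V)) :
    ∃ (w : V) (l m : Fˣ →* ℂ), w ≠ 0 ∧ (∀ a b c, ρ (gu a b c) w = w) ∧
      (∀ t1 t2 t3, ρ (dg t1 t2 t3) w = (l t1 * l t2 * m t3) • w) ∧
      (l = m ∨ (l ≠ m ∧ w + ∑ x : F, ρ (gu x 0 0) (ρ gs w) = 0)) := by
  classical
  letI : Fintype (GL (Fin 3) F) := Fintype.ofFinite _
  letI i1 : NormedAddCommGroup V := (avgCore ρ).toNormedAddCommGroup
  letI i2 : InnerProductSpace ℂ V := InnerProductSpace.ofCore (avgCore ρ).toCore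
  have hu : Unt ρ := fun g v w => avgCore_inv ρ g v w
  obtain ⟨w, l, m, ⟨h1, h2, h3⟩, h4⟩ := gl_main hρ hu hq hn
  exact ⟨w, l, m, h1, h2, h3, h4⟩

/-- determinant as a unit -/
def dt : GL (Fin 3) F →* Fˣ := Matrix.GeneralLinearGroup.det

lemma dt_dg (a b c : Fˣ) : dt (dg a b c) = a * b * c := by
  apply Units.ext
  change (dg a b c).val.det = _
  rw [dg_val]
  simp [Dm, Matrix.det_fin_three]
lemma dt_io (g : SpecialLinearGroup (Fin 3) F) : dt (io g) = 1 := by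
  apply Units.ext
  change (io g).val.det = _
  rw [io_val, mt_det]; rfl

lemma exists_kap (g : GL (Fin 3) F) (d : Fˣ) :
    ∃ k, io k = (dg d 1 1)⁻¹ * g * dg (d * (dt g)⁻¹) 1 1 := by
  have h : dt ((dg d 1 1)⁻¹ * g * dg (d * (dt g)⁻¹) 1 1) = 1 := by
    rw [map_mul, map_mul, map_inv, dt_dg, dt_dg, mul_one, mul_one, mul_one, mul_one, mul_comm d⁻¹]
    group
  refine ⟨⟨((dg d 1 1)⁻¹ * g * dg (d * (dt g)⁻¹) 1 1).val, ?_⟩, Units.ext rfl⟩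
  exact congrArg Units.val h

/-- the cocycle -/
def kap (g : GL (Fin 3) F) (d : Fˣ) : SpecialLinearGroup (Fin 3) F := (exists_kap g d).choose
lemma kap_spec (g : GL (Fin 3) F) (d : Fˣ) :
    io (kap g d) = (dg d 1 1)⁻¹ * g * dg (d * (dt g)⁻¹) 1 1 := (exists_kap g d).choose_spec

lemma kap_mul (g h : GL (Fin 3) F) (d : Fˣ) :
    kap (g * h) d = kap g d * kap h (d * (dt g)⁻¹) := by
  apply io_inj
  rw [io_mul, kap_spec, kap_spec, kap_spec, map_mul, _root_.mul_inv_rev, mul_comm (dt h)⁻¹]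
  simp only [mul_assoc, mul_inv_cancel_left]

lemma kap_one (d : Fˣ) : kap (1 : GL (Fin 3) F) d = 1 := by
  apply io_inj
  rw [kap_spec, map_one, io_one]; simp

lemma kap_io (g : SpecialLinearGroup (Fin 3) F) : kap (io g) 1 = g := by
  apply io_inj
  rw [kap_spec, dt_io, dg_one]; simp [dg_one]

lemma kap_io_surj (g : SpecialLinearGroup (Fin 3) F) (d : Fˣ) :
    ∃ h, kap (io h) d = g := by
  obtain ⟨h, hh⟩ : ∃ h, io h = dg d 1 1 * io g * (dg d 1 1)⁻¹ := by
    have h1 : dt (dg d 1 1 * io g * (dg d 1 1)⁻¹) = 1 := by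
      rw [map_mul, map_mul, map_inv, dt_dg, dt_io]; simp
    exact ⟨⟨(dg d 1 1 * io g * (dg d 1 1)⁻¹).val, congrArg Units.val h1⟩, Units.ext rfl⟩
  refine ⟨h, io_inj ?_⟩
  rw [kap_spec, dt_io, hh]
  simp [mul_assoc]

lemma kap_dg (t d : Fˣ) : kap (dg t 1 1) d = (1 : SpecialLinearGroup (Fin 3) F) := by
  apply io_inj
  rw [kap_spec, dt_dg, io_one, dg_inv, dg_mul, dg_mul, ← dg_one]
  simp [mul_comm]

variable {V : Type*} [AddCommGroup V] [Module ℂ V] [FiniteDimensional ℂ V]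

/-- induced representation -/
def ind (ρ : SpecialLinearGroup (Fin 3) F →* (V →ₗ[ℂ] V)) :
    GL (Fin 3) F →* ((Fˣ → V) →ₗ[ℂ] (Fˣ → V)) where
  toFun g :=
    { toFun := fun f d => ρ (kap g d) (f (d * (dt g)⁻¹))
      map_add' := by intro f f'; ext d; simp
      map_smul' := by intro c f; ext d; simp }
  map_one' := by
    ext1 f
    funext d
    change ρ _ _ = _
    rw [kap_one, rho_one, map_one]; simp
  map_mul' g h := by
    ext1 f
    funext d
    change ρ _ _ = ρ _ (ρ _ _)
    rw [kap_mul, rho_mul, map_mul, _root_.mul_inv_rev, mul_comm (dt h)⁻¹, mul_assoc]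

lemma ind_apply (ρ : SpecialLinearGroup (Fin 3) F →* (V →ₗ[ℂ] V)) (g : GL (Fin 3) F)
    (f : Fˣ → V) (d : Fˣ) : ind ρ g f d = ρ (kap g d) (f (d * (dt g)⁻¹)) := rfl

lemma ind_io (ρ : SpecialLinearGroup (Fin 3) F →* (V →ₗ[ℂ] V)) (g : SpecialLinearGroup (Fin 3) F)
    (f : Fˣ → V) (d : Fˣ) : ind ρ (io g) f d = ρ (kap (io g) d) (f d) := by
  rw [ind_apply, dt_io]; simp

lemma dvd_ind {ρ : SpecialLinearGroup (Fin 3) F →* (V →ₗ[ℂ] V)} (hρ : Irr ρ)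
    (X : Submodule ℂ (Fˣ → V)) (hX : ∀ g, ∀ f ∈ X, ind ρ g f ∈ X) :
    Module.finrank ℂ V ∣ Module.finrank ℂ X := by
  classical
  let S : Finset Fˣ → Submodule ℂ (Fˣ → V) := fun s =>
    { carrier := {f | f ∈ X ∧ ∀ d, d ∉ s → f d = 0}
      add_mem' := by
        rintro f f' ⟨h, h'⟩ ⟨k, k'⟩
        exact ⟨X.add_mem h k, fun d hd => by rw [Pi.add_apply, h' d hd, k' d hd, add_zero]⟩
      zero_mem' := ⟨X.zero_mem, fun _ _ => rfl⟩
      smul_mem' := by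
        rintro c f ⟨h, h'⟩
        exact ⟨X.smul_mem c h, fun d hd => by rw [Pi.smul_apply, h' d hd, smul_zero]⟩ }
  have key : ∀ s, Module.finrank ℂ V ∣ Module.finrank ℂ (S s) := by
    intro s
    induction s using Finset.induction_on with
    | empty =>
      have : S ∅ = ⊥ := by
        rw [eq_bot_iff]
        rintro f ⟨_, hf⟩
        rw [Submodule.mem_bot]
        funext d
        exact hf d (Finset.notMem_empty _)
      rw [this]; simp
    | insert d s hd ih =>
      let e : S (insert d s) →ₗ[ℂ] V := (LinearMap.proj d).comp (S (insert d s)).subtype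
      have hr := e.finrank_range_add_finrank_ker
      have hk : Module.finrank ℂ (LinearMap.ker e) = Module.finrank ℂ (S s) := by
        rw [← Submodule.finrank_map_subtype_eq]
        have : (LinearMap.ker e).map (S (insert d s)).subtype = S s := by
          ext f
          constructor
          · rintro ⟨f, hf, rfl⟩
            refine ⟨f.2.1, fun d' hd' => ?_⟩
            by_cases hdd : d' = d
            · rw [hdd]; exact hf
            · exact f.2.2 d' (by simp [hdd, hd'])
          · rintro ⟨h1, h2⟩
            refine ⟨⟨f, h1, fun d' hd' => h2 d' fun h => hd' (Finset.mem_insert_of_mem h)⟩, ?_, rfl⟩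
            exact h2 d hd
        rw [this]
      rw [← hr, hk]
      refine Nat.dvd_add ?_ ih
      rcases hρ.2 (LinearMap.range e) (by
        rintro g _ ⟨f, rfl⟩
        obtain ⟨h, hh⟩ := kap_io_surj g d
        refine ⟨⟨ind ρ (io h) f, hX _ _ f.2.1, fun d' hd' => ?_⟩, ?_⟩
        · rw [ind_io, f.2.2 d' hd', map_zero]
        · change ind ρ (io h) f d = _
          rw [ind_io, hh]; rfl) with h | h
      · rw [h]; simp
      · rw [h]; simp
  have h1 := key Finset.univ
  have : S Finset.univ = X := by
    ext f
    exact ⟨fun h => h.1, fun h => ⟨h, fun d hd => absurd (Finset.mem_univ d) hd⟩⟩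
  rwa [this] at h1

lemma sl_main {ρ : SpecialLinearGroup (Fin 3) F →* (V →ₗ[ℂ] V)} (hρ : Irr ρ)
    (hq : Even (Fintype.card F)) (hn : Even (Module.finrank ℂ V)) :
    ∃ (w : V) (ν : Fˣ →* ℂ), w ≠ 0 ∧ (∀ a b c, ρ (ux a b c) w = w) ∧
      (∀ a b, ρ (dS a b) w = ν (a * b)⁻¹ • w) ∧
      (ν = 1 ∨ (ν ≠ 1 ∧ w + ∑ x : F, ρ (ux x 0 0) (ρ sS w) = 0)) := by
  classical
  have := hρ.1
  obtain ⟨X, -, hX0, hXs, hmin⟩ := exists_min_sub (fun Y => ∀ g, ∀ v ∈ Y, ind ρ g v ∈ Y)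
    (⊤ : Submodule ℂ (Fˣ → V)) top_ne_bot (fun _ _ _ => Submodule.mem_top)
  have hn2 : Even (Module.finrank ℂ X) := by
    rw [even_iff_two_dvd] at hn ⊢
    exact hn.trans (dvd_ind hρ X hXs)
  obtain ⟨f, l, m, hf0, hfu, hfd, hf⟩ := gl_main' (irr_subRep (ind ρ) X hXs hX0 hmin) hq hn2
  have hl : ∀ t, l t ≠ 0 := fun t h => by
    have : l (t * t⁻¹) = 1 := by rw [mul_inv_cancel, map_one]
    rw [map_mul, h, zero_mul] at this
    exact zero_ne_one this
  have hval : ∀ (g : SpecialLinearGroup (Fin 3) F) (f : X),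
      (subRep (ind ρ) X hXs (io g) f).1 1 = ρ g (f.1 1) := by
    intro g f
    rw [subRep_coe, ind_io, kap_io]
  refine ⟨f.1 1, m * l.comp invMonoidHom, ?_, ?_, ?_, ?_⟩
  · intro h1
    apply hf0
    apply Subtype.ext
    funext d
    have h2 := congrFun (congrArg Subtype.val (hfd d 1 1)) d
    rw [subRep_coe, ind_apply, kap_dg, rho_one, dt_dg] at h2
    simp only [mul_one, mul_inv_cancel, h1, map_one] at h2
    have h3 : l d • f.1 d = 0 := h2.symm
    exact (smul_eq_zero.1 h3).resolve_left (hl d)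
  · intro a b c
    have := congrFun (congrArg Subtype.val (hfu a b c)) 1
    rw [gu, hval] at this
    exact this
  · intro a b
    have := congrFun (congrArg Subtype.val (hfd a b (a * b)⁻¹)) 1
    rw [← io_dS, hval] at this
    rw [this]
    change (l a * l b * m (a * b)⁻¹) • f.1 1 = _
    congr 1
    simp [mul_comm]
  · rcases hf with h | ⟨h, h'⟩
    · left
      ext t
      rw [← h, MonoidHom.mul_apply, MonoidHom.comp_apply, ← map_mul]; simp
    · right
      refine ⟨fun e => h ?_, ?_⟩
      · ext t
        have := DFunLike.congr_fun e t
        rw [MonoidHom.mul_apply, MonoidHom.comp_apply] at this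
        have h2 : l t⁻¹ * l t = 1 := by rw [← map_mul, inv_mul_cancel, map_one]
        calc l t = 1 * l t := (one_mul _).symm
          _ = m t * (l t⁻¹ * l t) := by
            rw [← mul_assoc]; congr 1; exact this.symm
          _ = m t := by rw [h2, mul_one]
      · have := congrFun (congrArg Subtype.val h') 1
        simp only [gu, gs] at this
        rw [Submodule.coe_add, Pi.add_apply, Submodule.coe_sum, Finset.sum_apply] at this
        simp only [hval] at this
        exact this

end Lift


section RealCase
variable {F : Type} [Field F]

lemma uux (a b c x : F) : ux a b c * ux x 0 0 = ux (a + x) 0 0 * ux 0 (b - (a + x) * c) c := by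
  rw [ux_mul, ux_mul]; congr 1 <;> ring

variable [CharP F 2]

lemma dS_ux (t1 t2 : Fˣ) (x : F) :
    dS t1 t2 * ux x 0 0 = ux (t1 * x * ↑t2⁻¹) 0 0 * dS t1 t2 := by
  apply io_inj
  rw [io_mul, io_mul, io_dS]
  change dg _ _ _ * gu _ _ _ = gu _ _ _ * _
  rw [dg_gu]; simp

lemma dS_s (t1 t2 : Fˣ) : dS t1 t2 * sS = (sS * dS t2 t1 : SpecialLinearGroup (Fin 3) F) := by
  apply io_inj
  rw [io_mul, io_mul, io_dS, io_dS, mul_comm t2]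
  exact dg_s _ _ _

variable [Fintype F]
variable {V : Type*} [NormedAddCommGroup V] [InnerProductSpace ℂ V] [FiniteDimensional ℂ V]

lemma char_real_of {G : Type*} [Group G] [Fintype G] {ρ : G →* (V →ₗ[ℂ] V)} (hρ : Irr ρ)
    (w : V) (hw : w ≠ 0)
    (hr : ∀ g, (starRingEnd ℂ) (inner ℂ w (ρ g w)) = inner ℂ w (ρ g w)) (g : G) :
    (starRingEnd ℂ) (LinearMap.trace ℂ V (ρ g)) = LinearMap.trace ℂ V (ρ g) := by
  classical
  set P : V →ₗ[ℂ] V := ((innerSL ℂ w : V →L[ℂ] ℂ) : V →ₗ[ℂ] ℂ).smulRight w with hP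
  have hPa : ∀ v, P v = inner ℂ w v • w := fun v => rfl
  have htr : ∀ B : V →ₗ[ℂ] V, LinearMap.trace ℂ V (P * B) = inner ℂ w (B w) := by
    intro B
    have : P * B = ((((innerSL ℂ w : V →L[ℂ] ℂ) : V →ₗ[ℂ] ℂ)).comp B).smulRight w := by
      ext v; rfl
    rw [this, LinearMap.trace_smulRight]; rfl
  set A : V →ₗ[ℂ] V := ∑ h : G, ρ h * P * ρ h⁻¹ with hA
  obtain ⟨c, hc⟩ := schur hρ A (by
    intro g v
    simp only [hA, LinearMap.sum_apply, map_sum]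
    refine Fintype.sum_equiv (Equiv.mulLeft g⁻¹) _ _ fun h => ?_
    simp only [Module.End.mul_apply, Equiv.coe_mulLeft]
    rw [← rho_mul, ← rho_mul ρ g, mul_inv_cancel_left, _root_.mul_inv_rev, inv_inv])
  have key : ∀ g, c * LinearMap.trace ℂ V (ρ g) = ∑ h, inner ℂ w (ρ (h⁻¹ * g * h) w) := by
    intro g
    have h1 : A * ρ g = c • ρ g := by ext v; exact hc _
    have h2 := congrArg (LinearMap.trace ℂ V) h1
    rw [map_smul, smul_eq_mul] at h2
    rw [← h2, hA, Finset.sum_mul, map_sum]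
    refine Finset.sum_congr rfl fun h _ => ?_
    rw [mul_assoc, mul_assoc, LinearMap.trace_mul_comm, ← htr]
    rw [map_mul ρ, map_mul ρ]
    simp only [mul_assoc]
  have h1 := key 1
  have hcne : c ≠ 0 ∧ (starRingEnd ℂ) c = c := by
    have e : c * Module.finrank ℂ V = Fintype.card G * inner ℂ w w := by
      rw [map_one, LinearMap.trace_one] at h1
      rw [h1]
      simp
    have h0 : (inner ℂ w w : ℂ) ≠ 0 := inner_self_ne_zero.2 hw
    have hd : (Module.finrank ℂ V : ℂ) ≠ 0 := by
      have := hρ.1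
      exact_mod_cast (Module.finrank_pos (R := ℂ) (M := V)).ne'
    constructor
    · rintro rfl
      rw [zero_mul] at e
      have : (Fintype.card G : ℂ) ≠ 0 := by exact_mod_cast Fintype.card_ne_zero
      exact mul_ne_zero this h0 e.symm
    · apply mul_right_cancel₀ hd
      rw [e]
      have := congrArg (starRingEnd ℂ) e
      rw [map_mul, map_mul, inner_conj_symm] at this
      simpa using this
  have h2 := key g
  have h3 := congrArg (starRingEnd ℂ) h2
  rw [map_mul, map_sum, hcne.2] at h3
  simp only [hr] at h3
  rw [← h2] at h3
  exact mul_left_cancel₀ hcne.1 h3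

lemma char_real {ρ : SpecialLinearGroup (Fin 3) F →* (V →ₗ[ℂ] V)} (hρ : Irr ρ) (hu : Unt ρ)
    (w0 : V) (hw0 : w0 ≠ 0) (h1 : ∀ a b c, ρ (ux a b c) w0 = w0) (h2 : ∀ a b, ρ (dS a b) w0 = w0)
    (g : SpecialLinearGroup (Fin 3) F) :
    (starRingEnd ℂ) (LinearMap.trace ℂ V (ρ g)) = LinearMap.trace ℂ V (ρ g) := by
  classical
  let VB : Submodule ℂ V :=
    { carrier := {v | (∀ a b c, ρ (ux a b c) v = v) ∧ ∀ a b, ρ (dS a b) v = v}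
      add_mem' := by
        rintro x y ⟨h, h'⟩ ⟨k, k'⟩
        exact ⟨fun a b c => by rw [map_add, h, k], fun a b => by rw [map_add, h', k']⟩
      zero_mem' := ⟨fun a b c => map_zero _, fun a b => map_zero _⟩
      smul_mem' := by
        rintro r x ⟨h, h'⟩
        exact ⟨fun a b c => by rw [map_smul, h], fun a b => by rw [map_smul, h']⟩ }
  let T : V →ₗ[ℂ] V := ∑ x : F, ρ (ux x 0 0) * ρ sS
  have hT : ∀ v, T v = ∑ x : F, ρ (ux x 0 0) (ρ sS v) := by
    intro v; simp [T, LinearMap.sum_apply]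
  obtain ⟨w, hwB, hw, hc⟩ := common_eig (ι := Unit) (fun _ => T) VB
    (by rw [Submodule.ne_bot_iff]; exact ⟨w0, ⟨h1, h2⟩, hw0⟩)
    (by
      rintro _ v ⟨hv1, hv2⟩
      refine ⟨fun a b c => ?_, fun a b => ?_⟩
      · rw [hT, map_sum]
        refine Fintype.sum_equiv (Equiv.addLeft a) _ _ fun x => ?_
        rw [← rho_mul, uux, rho_mul, ← rho_mul _ _ sS, ← s_u, rho_mul, hv1]; rfl
      · rw [hT, map_sum]
        refine Fintype.sum_equiv ((Units.mulLeft a).trans (Units.mulRight b⁻¹)) _ _ fun x => ?_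
        rw [← rho_mul, dS_ux, rho_mul, ← rho_mul _ _ sS, dS_s, rho_mul, hv2]; rfl)
    (fun _ _ _ _ => rfl)
  obtain ⟨θ, hθ⟩ := hc ()
  obtain ⟨hw1, hw2⟩ := hwB
  have hww : (inner ℂ w w : ℂ) ≠ 0 := inner_self_ne_zero.2 hw
  have hq : (Fintype.card F : ℂ) ≠ 0 := by exact_mod_cast Fintype.card_ne_zero
  set p : SpecialLinearGroup (Fin 3) F → ℂ := fun g => inner ℂ w (ρ g w) with hp
  have pinv : ∀ g, (starRingEnd ℂ) (p g) = p g⁻¹ := by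
    intro g
    simp only [hp]
    rw [inner_conj_symm, unit_adj hu]
  have ps : (starRingEnd ℂ) (p sS) = p sS := by rw [pinv, s_inv]
  have pr : (starRingEnd ℂ) (p rS) = p rS := by rw [pinv, r_inv]
  have psrs : (starRingEnd ℂ) (p (sS * rS * sS)) = p (sS * rS * sS) := by
    rw [pinv]; simp only [_root_.mul_inv_rev, s_inv, r_inv, mul_assoc]
  have avg : ∀ v, (∀ x, ρ (ux x 0 0) v = v) →
      (starRingEnd ℂ) θ * inner ℂ w v = Fintype.card F * inner ℂ (ρ sS w) v := by
    intro v hv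
    rw [← inner_smul_left, ← hθ, hT, sum_inner, Finset.sum_congr rfl
      (g := fun _ => inner ℂ (ρ sS w) v)]
    · simp
    · intro x _
      conv_lhs => rw [← hv x]
      exact hu _ _ _
  have hth : (starRingEnd ℂ) θ = θ := by
    have e1 := avg w (fun x => hw1 _ _ _)
    rw [unit_adj hu, s_inv] at e1
    have e2 := congrArg (starRingEnd ℂ) e1
    have e3 : (starRingEnd ℂ) (inner ℂ w (ρ sS w)) = inner ℂ w (ρ sS w) := ps
    rw [map_mul, map_mul, inner_conj_symm, Complex.conj_conj, e3, map_natCast, ← e1] at e2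
    exact (mul_right_cancel₀ hww e2).symm
  have psr : (starRingEnd ℂ) (p (sS * rS)) = p (sS * rS) := by
    have e1 := avg (ρ rS w) (fun x => by
      rw [← rho_mul, ← r_u, rho_mul, hw1])
    rw [unit_adj hu, s_inv, ← rho_mul, hth] at e1
    have e2 := congrArg (starRingEnd ℂ) e1
    rw [map_mul, map_mul, map_natCast, hth] at e2
    have e3 : (starRingEnd ℂ) (inner ℂ w (ρ rS w)) = inner ℂ w (ρ rS w) := pr
    rw [e3, e1] at e2
    exact (mul_left_cancel₀ hq e2).symm
  have prs : (starRingEnd ℂ) (p (rS * sS)) = p (rS * sS) := by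
    have : p (rS * sS) = (starRingEnd ℂ) (p (sS * rS)) := by
      rw [pinv, _root_.mul_inv_rev, s_inv, r_inv]
    rw [this, psr, psr]
  refine char_real_of hρ w hw ?_ g
  intro g
  obtain ⟨a, b, c, a', b', c', t1, t2, n, hn, h⟩ := sbruhat g
  have fx : ∀ g, ρ g w = w → ∀ v, inner ℂ w (ρ g v) = (inner ℂ w v : ℂ) := by
    intro g hg v
    have := hu g w v
    rwa [hg] at this
  have e : inner ℂ w (ρ g w) = p n := by
    simp only [hp]
    rw [h, rho_mul, hw1, mul_assoc, rho_mul, rho_mul]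
    rw [fx _ (hw1 a b c), fx _ (hw2 t1 t2)]
  rw [e]
  rcases hn with rfl | rfl | rfl | rfl | rfl | rfl
  · rw [pinv, inv_one]
  · exact ps
  · exact pr
  · exact psr
  · exact prs
  · exact psrs

end RealCase


section Cplx
variable {F : Type} [Field F] [CharP F 2]

lemma dS_r (t1 t2 : Fˣ) :
    dS t1 t2 * rS = (rS * dS t1 (t1 * t2)⁻¹ : SpecialLinearGroup (Fin 3) F) := by
  apply io_inj
  rw [io_mul, io_mul, io_dS, io_dS]
  have e : (t1 * (t1 * t2)⁻¹)⁻¹ = t2 := by rw [_root_.mul_inv_rev]; simp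
  rw [e]
  exact dg_r _ _ _

lemma susS (x : Fˣ) : (sS * ux (x : F) 0 0 * sS : SpecialLinearGroup (Fin 3) F) =
    ux (↑x⁻¹ : F) 0 0 * sS * dS x x⁻¹ * ux (↑x⁻¹ : F) 0 0 := by
  apply io_inj
  simp only [io_mul, io_dS, mul_inv_cancel, inv_one]
  exact sus x

variable [Fintype F]
variable {V : Type*} [AddCommGroup V] [Module ℂ V]

/-- a vector of the special type -/
structure SW (ρ : SpecialLinearGroup (Fin 3) F →* (V →ₗ[ℂ] V)) (ν : Fˣ →* ℂ) (w : V) : Prop where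
  ne : w ≠ 0
  u : ∀ a b c, ρ (ux a b c) w = w
  d : ∀ a b, ρ (dS a b) w = ν (a * b)⁻¹ • w
  nu : ν ≠ 1
  st : w + ∑ x : F, ρ (ux x 0 0) (ρ sS w) = 0

/-- the vectors f_x -/
def ff (ρ : SpecialLinearGroup (Fin 3) F →* (V →ₗ[ℂ] V)) (w : V) (x : F) : V :=
  ρ (ux x 0 0) (ρ sS w)

variable {ρ : SpecialLinearGroup (Fin 3) F →* (V →ₗ[ℂ] V)} {ν : Fˣ →* ℂ} {w : V}

lemma SW.smul (hw : SW ρ ν w) {c : ℂ} (hc : c ≠ 0) : SW ρ ν (c • w) where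
  ne := smul_ne_zero hc hw.ne
  u a b d := by rw [map_smul, hw.u]
  d a b := by rw [map_smul, hw.d, smul_comm]
  nu := hw.nu
  st := by
    simp only [map_smul]
    rw [← Finset.smul_sum, ← smul_add, hw.st, smul_zero]

lemma SW.sum (hw : SW ρ ν w) : ∑ x, ff ρ w x = -w := by
  rw [eq_neg_iff_add_eq_zero, add_comm]; exact hw.st

lemma ff_zero : ff ρ w 0 = ρ sS w := by rw [ff, ux_zero, rho_one]

lemma ff_u (hw : SW ρ ν w) (a b c x : F) : ρ (ux a b c) (ff ρ w x) = ff ρ w (a + x) := by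
  rw [ff, ff, ← rho_mul, uux, rho_mul, ← rho_mul _ _ sS, ← s_u, rho_mul, hw.u]

lemma ff_d (hw : SW ρ ν w) (t1 t2 : Fˣ) (x : F) :
    ρ (dS t1 t2) (ff ρ w x) = ν (t1 * t2)⁻¹ • ff ρ w (t1 * x * ↑t2⁻¹) := by
  rw [ff, ff, ← rho_mul, dS_ux, rho_mul, ← rho_mul _ _ sS, dS_s, rho_mul, hw.d, map_smul, map_smul,
    mul_comm t2]

lemma ff_s0 : ρ sS (ff ρ w 0) = w := by
  rw [ff_zero, ← rho_mul, ss, rho_one]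

lemma ff_s (hw : SW ρ ν w) (x : Fˣ) : ρ sS (ff ρ w x) = ff ρ w (↑x⁻¹ : F) := by
  rw [ff, ff, ← rho_mul, ← rho_mul, susS, rho_mul, hw.u, rho_mul, hw.d, mul_inv_cancel, inv_one,
    map_one, one_smul, rho_mul]

/-- span of f_x -/
def WW (ρ : SpecialLinearGroup (Fin 3) F →* (V →ₗ[ℂ] V)) (w : V) : Submodule ℂ V :=
  Submodule.span ℂ (Set.range (ff ρ w))

lemma ff_mem (x : F) : ff ρ w x ∈ WW ρ w := Submodule.subset_span ⟨x, rfl⟩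

lemma w_mem (hw : SW ρ ν w) : w ∈ WW ρ w := by
  rw [← neg_neg w, ← hw.sum]
  exact neg_mem (Submodule.sum_mem _ fun x _ => by rw [hw.sum, neg_neg]; exact ff_mem x)

lemma WW_le {g : SpecialLinearGroup (Fin 3) F} (h : ∀ x, ρ g (ff ρ w x) ∈ WW ρ w) :
    ∀ v ∈ WW ρ w, ρ g v ∈ WW ρ w := by
  intro v hv
  have : WW ρ w ≤ (WW ρ w).comap (ρ g) := by
    rw [WW, Submodule.span_le]
    rintro _ ⟨x, rfl⟩
    exact h x
  exact this hv

lemma WW_u (hw : SW ρ ν w) (a b c : F) : ∀ v ∈ WW ρ w, ρ (ux a b c) v ∈ WW ρ w :=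
  WW_le fun x => by rw [ff_u hw]; exact ff_mem _

lemma WW_d (hw : SW ρ ν w) (a b : Fˣ) : ∀ v ∈ WW ρ w, ρ (dS a b) v ∈ WW ρ w :=
  WW_le fun x => by rw [ff_d hw]; exact Submodule.smul_mem _ _ (ff_mem _)

lemma WW_s (hw : SW ρ ν w) : ∀ v ∈ WW ρ w, ρ sS v ∈ WW ρ w :=
  WW_le fun x => by
    by_cases hx : x = 0
    · rw [hx, ff_s0]; exact w_mem hw
    · have := ff_s hw (Units.mk0 x hx)
      rw [Units.val_mk0] at this
      rw [this]; exact ff_mem _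

lemma WW_P (hw : SW ρ ν w) {g : SpecialLinearGroup (Fin 3) F} (hg : g ∈ PS F) :
    ∀ v ∈ WW ρ w, ρ g v ∈ WW ρ w := by
  intro v hv
  rcases PS_or g with ⟨a, b, c, a', b', c', t1, t2, h | h⟩ | ⟨a, b, c, t1, t2, n, p, hn, hp, h⟩
  · rw [h, rho_mul, rho_mul]
    exact WW_u hw _ _ _ _ (WW_d hw _ _ _ (WW_u hw _ _ _ _ hv))
  · rw [h, rho_mul, rho_mul, rho_mul]
    exact WW_u hw _ _ _ _ (WW_d hw _ _ _ (WW_s hw _ (WW_u hw _ _ _ _ hv)))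
  · exfalso
    have hn' : n ∈ PS F := by
      rcases hn with rfl | rfl
      · exact one_mem _
      · exact sS_PS
    rw [h, Subgroup.mul_mem_cancel_right _ hp,
      Subgroup.mul_mem_cancel_left _ (mul_mem (mul_mem (ux_PS _ _ _) (dS_PS _ _)) hn')] at hg
    exact rS_not_PS hg

/-- invariance of a sesquilinear form -/
def Inv (ρ : SpecialLinearGroup (Fin 3) F →* (V →ₗ[ℂ] V)) (h : V →ₗ⋆[ℂ] V →ₗ[ℂ] ℂ) : Prop :=
  ∀ g v v', h (ρ g v) (ρ g v') = h v v'

variable {h : V →ₗ⋆[ℂ] V →ₗ[ℂ] ℂ}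

lemma Inv.adj (hi : Inv ρ h) (g : SpecialLinearGroup (Fin 3) F) (v v' : V) :
    h v (ρ g v') = h (ρ g⁻¹ v) v' := by
  rw [← hi g (ρ g⁻¹ v), ← rho_mul ρ g g⁻¹, mul_inv_cancel, rho_one]

lemma SW.ex (hw : SW ρ ν w) : ∃ t, ν t ≠ 1 := by
  by_contra hc
  push Not at hc
  exact hw.nu (MonoidHom.ext hc)

lemma q_ne : (Fintype.card F : ℂ) ≠ 0 := by exact_mod_cast Fintype.card_ne_zero

lemma wt_zero (hi : Inv ρ h) {g : SpecialLinearGroup (Fin 3) F} {v v' : V} {c : ℂ} (hv : ρ g v = v)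
    (hv' : ρ g v' = c • v') (hc : c ≠ 1) : h v v' = 0 := by
  have := hi g v v'
  rw [hv, hv', map_smul, smul_eq_mul] at this
  have e : (c - 1) * h v v' = 0 := by rw [sub_mul, this]; ring
  exact (mul_eq_zero.1 e).resolve_left (sub_ne_zero.2 hc)

/-- averaging: constant along f_x -/
lemma avg_left (hw : SW ρ ν w) (hi : Inv ρ h) {v : V} (hv : ∀ x, ρ (ux x 0 0) v = v) (x : F) :
    Fintype.card F * h (ff ρ w x) v = - h w v := by
  have e : ∀ y, h (ff ρ w y) v = h (ff ρ w 0) v := by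
    intro y
    conv_lhs => rw [← hv y]
    rw [ff, hi, ff_zero]
  have := congrArg (fun z => h z v) hw.sum
  simp only [map_sum, LinearMap.sum_apply, map_neg, LinearMap.neg_apply] at this
  rw [← this, Finset.sum_congr rfl fun y _ => e y, e x]
  simp

lemma avg_right (hw : SW ρ ν w) (hi : Inv ρ h) {v : V} (hv : ∀ x, ρ (ux x 0 0) v = v) (x : F) :
    Fintype.card F * h v (ff ρ w x) = - h v w := by
  have e : ∀ y, h v (ff ρ w y) = h v (ff ρ w 0) := by
    intro y
    conv_lhs => rw [← hv y]
    rw [ff, hi, ff_zero]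
  have := congrArg (fun z => h v z) hw.sum
  simp only [map_sum, map_neg] at this
  rw [← this, Finset.sum_congr rfl fun y _ => e y, e x]
  simp

lemma h_w_r (hw : SW ρ ν w) (hi : Inv ρ h) : h w (ρ rS w) = 0 := by
  obtain ⟨t, ht⟩ := hw.ex
  refine wt_zero hi (g := dS t⁻¹ t) (c := ν t) ?_ ?_ ht
  · rw [hw.d]; simp
  · rw [← rho_mul, dS_r, rho_mul, hw.d, map_smul]; simp

lemma h_f_r_f (hw : SW ρ ν w) (hi : Inv ρ h) (x y : F) : h (ff ρ w x) (ρ rS (ff ρ w y)) = 0 := by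
  have e1 := avg_left hw hi (v := ρ rS (ff ρ w y)) (fun x => by
    rw [← rho_mul, ← r_u, rho_mul, ff_u hw, zero_add]) x
  have e2 := avg_right hw hi (v := ρ rS w) (fun x => by
    rw [← rho_mul, ← r_u, rho_mul, hw.u]) y
  have e3 : h (ρ rS w) w = 0 := by
    rw [← r_inv, ← hi.adj]; exact h_w_r hw hi
  rw [e3, neg_zero, mul_eq_zero, or_iff_right q_ne] at e2
  rw [hi.adj, r_inv] at e1
  rw [hi.adj, r_inv]
  rw [hi.adj, r_inv, e2, neg_zero, mul_eq_zero, or_iff_right q_ne] at e1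
  exact e1

lemma h_W_r_W (hw : SW ρ ν w) (hi : Inv ρ h) {v v' : V} (hv : v ∈ WW ρ w) (hv' : v' ∈ WW ρ w) :
    h v (ρ rS v') = 0 := by
  induction hv using Submodule.span_induction with
  | mem v hv =>
    obtain ⟨x, rfl⟩ := hv
    induction hv' using Submodule.span_induction with
    | mem v hv =>
      obtain ⟨y, rfl⟩ := hv
      exact h_f_r_f hw hi x y
    | zero => simp
    | add a b _ _ ha hb => rw [map_add, map_add, ha, hb, add_zero]
    | smul c a _ ha => rw [map_smul, map_smul, ha, smul_zero]
  | zero => simp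
  | add a b _ _ ha hb => rw [map_add, LinearMap.add_apply, ha, hb, add_zero]
  | smul c a _ ha => rw [LinearMap.map_smulₛₗ, LinearMap.smul_apply, ha, smul_zero]

lemma h_W_W (hw : SW ρ ν w) (hi : Inv ρ h) {v v' : V} (hv : v ∈ WW ρ w) (hv' : v' ∈ WW ρ w)
    {g : SpecialLinearGroup (Fin 3) F} (hg : g ∉ PS F) : h v (ρ g v') = 0 := by
  rcases PS_or g with ⟨a, b, c, a', b', c', t1, t2, e | e⟩ | ⟨a, b, c, t1, t2, n, p, hn, hp, e⟩
  · exact absurd (by rw [e]; exact mul_mem (mul_mem (ux_PS _ _ _) (dS_PS _ _)) (ux_PS _ _ _)) hg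
  · exact absurd (by
      rw [e]
      exact mul_mem (mul_mem (mul_mem (ux_PS _ _ _) (dS_PS _ _)) sS_PS) (ux_PS _ _ _)) hg
  · have hn' : n ∈ PS F := by
      rcases hn with rfl | rfl
      · exact one_mem _
      · exact sS_PS
    rw [e, rho_mul, rho_mul, hi.adj]
    exact h_W_r_W hw hi (WW_P hw (inv_mem (mul_mem (mul_mem (ux_PS _ _ _) (dS_PS _ _)) hn')) _ hv)
      (WW_P hw hp _ hv')

lemma gram (hw : SW ρ ν w) (hi : Inv ρ h) [DecidableEq F] (x y : F) :
    h (ff ρ w x) (ff ρ w y) =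
      (h w w / Fintype.card F) * ((Fintype.card F + 1) * (if x = y then 1 else 0) - 1) := by
  have e0 : ∀ x y, h (ff ρ w x) (ff ρ w y) = h (ff ρ w 0) (ff ρ w (x + y)) := by
    intro x y
    rw [← hi (ux x 0 0) (ff ρ w x), ff_u hw, ff_u hw, CharTwo.add_self_eq_zero]
  have e1 : h (ff ρ w 0) (ff ρ w 0) = h w w := by rw [ff_zero, hi]
  have e2 : ∀ z, z ≠ 0 → h (ff ρ w 0) (ff ρ w z) = h (ff ρ w 0) (ff ρ w 1) := by
    intro z hz
    obtain ⟨a, ha⟩ := (isSquare_iff_exists_sq z).1 (FiniteField.isSquare_of_char_two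
      (CharP.ringChar_of_prime_eq_zero Nat.prime_two (CharTwo.two_eq_zero)) z)
    have ha0 : a ≠ 0 := by rintro rfl; simp at ha; exact hz ha
    rw [← hi (dS (Units.mk0 a ha0) (Units.mk0 a ha0)⁻¹) (ff ρ w 0) (ff ρ w 1), ff_d hw, ff_d hw]
    simp [ha, sq]
  have e3 := avg_left hw hi (v := w) (fun x => hw.u x 0 0) 0
  have e4 := congrArg (fun z => h (ff ρ w 0) z) hw.sum
  simp only [map_sum, map_neg] at e4
  rw [← Finset.add_sum_erase _ _ (Finset.mem_univ (0 : F)), e1,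
    Finset.sum_congr rfl (g := fun _ => h (ff ρ w 0) (ff ρ w 1))
      (fun z hz => e2 z (Finset.ne_of_mem_erase hz))] at e4
  simp only [Finset.sum_const, Finset.card_erase_of_mem (Finset.mem_univ _), Finset.card_univ,
    nsmul_eq_mul] at e4
  rw [Nat.cast_sub Fintype.card_pos, Nat.cast_one] at e4
  have hq : (Fintype.card F : ℂ) ≠ 0 := q_ne
  have hq1 : (Fintype.card F : ℂ) - 1 ≠ 0 := by
    rw [sub_ne_zero]; exact_mod_cast (Fintype.one_lt_card (α := F)).ne'
  have e5 : h (ff ρ w 0) (ff ρ w 1) = - (h w w / Fintype.card F) := by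
    have : (Fintype.card F : ℂ) * h (ff ρ w 0) w = - h w w := e3
    field_simp
    apply mul_left_cancel₀ hq1
    linear_combination (Fintype.card F : ℂ) * e4 - e3
  rw [e0]
  by_cases hxy : x = y
  · rw [hxy, CharTwo.add_self_eq_zero, e1, if_pos rfl]; field_simp; ring
  · rw [e2 _ (fun h => hxy (CharTwo.add_eq_zero.1 h)), e5, if_neg hxy]; ring

end Cplx


section Cplx2
variable {F : Type} [Field F] [CharP F 2] [Fintype F] [DecidableEq F]
variable {V : Type*} [AddCommGroup V] [Module ℂ V]
variable {ρ : SpecialLinearGroup (Fin 3) F →* (V →ₗ[ℂ] V)} {ν : Fˣ →* ℂ} {w : V}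
variable {h : V →ₗ⋆[ℂ] V →ₗ[ℂ] ℂ}

/-- index type of the basis -/
abbrev II (F : Type) [Field F] := (SpecialLinearGroup (Fin 3) F ⧸ PS F) × F

/-- the basis vectors -/
def bb (ρ : SpecialLinearGroup (Fin 3) F →* (V →ₗ[ℂ] V)) (w : V) (i : II F) : V :=
  ρ i.1.out (ff ρ w i.2)

/-- the block -/
def blk (F : Type) [Fintype F] [DecidableEq F] : Matrix F F ℂ :=
  ((Fintype.card F : ℂ) + 1) • (1 : Matrix F F ℂ) - Matrix.of (fun _ _ => 1)

lemma blk_det : (blk F).det = ((Fintype.card F : ℂ) + 1) ^ (Fintype.card F - 1) := by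
  have hq : ((Fintype.card F : ℂ) + 1) ≠ 0 := Nat.cast_add_one_ne_zero _
  have e : blk F = ((Fintype.card F : ℂ) + 1) • ((1 : Matrix F F ℂ) +
      Matrix.replicateCol Unit (fun _ : F => - ((Fintype.card F : ℂ) + 1)⁻¹) *
      Matrix.replicateRow Unit (fun _ : F => (1 : ℂ))) := by
    ext x y
    simp only [blk, Matrix.sub_apply, Matrix.smul_apply, Matrix.add_apply, Matrix.mul_apply,
      smul_eq_mul, Matrix.of_apply, Matrix.replicateCol_apply, Matrix.replicateRow_apply,
      Finset.univ_unique, Finset.sum_singleton]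
    field_simp; ring
  rw [e, Matrix.det_smul, Matrix.det_one_add_replicateCol_mul_replicateRow]
  have e2 : (fun _ : F => (1 : ℂ)) ⬝ᵥ (fun _ : F => - ((Fintype.card F : ℂ) + 1)⁻¹) =
      - (Fintype.card F * ((Fintype.card F : ℂ) + 1)⁻¹) := by
    simp [dotProduct]
  rw [e2]
  obtain ⟨m, hm⟩ : ∃ m, Fintype.card F = m + 1 := ⟨Fintype.card F - 1, by
    have := Fintype.card_pos (α := F); omega⟩
  have : (Fintype.card F : ℂ) = m + 1 := by rw [hm]; push_cast; ring
  rw [this] at hq ⊢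
  rw [hm, Nat.add_sub_cancel, pow_succ]
  field_simp
  ring

variable [Fintype (SpecialLinearGroup (Fin 3) F ⧸ PS F)]
  [DecidableEq (SpecialLinearGroup (Fin 3) F ⧸ PS F)]

/-- the full Gram matrix -/
def gm (F : Type) [Field F] [Fintype F] [DecidableEq F]
    [DecidableEq (SpecialLinearGroup (Fin 3) F ⧸ PS F)] : Matrix (II F) (II F) ℂ :=
  Matrix.kroneckerMap (· * ·) (1 : Matrix _ _ ℂ) (blk F)

lemma cosets_card : Fintype.card (SpecialLinearGroup (Fin 3) F ⧸ PS F) =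
    Fintype.card F ^ 2 + Fintype.card F + 1 := by
  rw [← PS_index, Subgroup.index, Nat.card_eq_fintype_card]

lemma gm_det : (gm F).det = (((Fintype.card F : ℂ) + 1) ^ (Fintype.card F - 1)) ^
    (Fintype.card F ^ 2 + Fintype.card F + 1) := by
  rw [gm, Matrix.det_kronecker, det_one, one_pow, one_mul, blk_det, cosets_card]

lemma gramB (hw : SW ρ ν w) (hi : Inv ρ h) (i j : II F) :
    h (bb ρ w i) (bb ρ w j) = (h w w / Fintype.card F) * gm F i j := by
  obtain ⟨i, x⟩ := i
  obtain ⟨j, y⟩ := j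
  simp only [bb, gm, Matrix.kroneckerMap_apply]
  by_cases hij : i = j
  · subst hij
    rw [hi, gram hw hi, Matrix.one_apply_eq]
    simp [blk, Matrix.one_apply]
  · rw [Matrix.one_apply_ne hij, zero_mul, mul_zero, ← inv_inv i.out, ← hi.adj, ← rho_mul]
    refine h_W_W hw hi (ff_mem _) (ff_mem _) fun hc => hij ?_
    rw [← QuotientGroup.out_eq' i, ← QuotientGroup.out_eq' j]
    exact QuotientGroup.eq.2 hc

lemma bb_span (hρ : Irr ρ) (hw : SW ρ ν w) : Submodule.span ℂ (Set.range (bb ρ w)) = ⊤ := by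
  refine irr_span hρ hw.ne fun g => ?_
  set i : SpecialLinearGroup (Fin 3) F ⧸ PS F := (g : SpecialLinearGroup (Fin 3) F ⧸ PS F) with hi
  have hp : i.out⁻¹ * g ∈ PS F := by
    rw [← QuotientGroup.eq, QuotientGroup.out_eq']
  have e : ρ g w = ρ i.out (ρ (i.out⁻¹ * g) w) := by rw [← rho_mul, mul_inv_cancel_left]
  rw [e]
  have := WW_P hw hp w (w_mem hw)
  have hle : WW ρ w ≤ (Submodule.span ℂ (Set.range (bb ρ w))).comap (ρ i.out) := by
    rw [WW, Submodule.span_le]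
    rintro _ ⟨x, rfl⟩
    exact Submodule.subset_span ⟨(i, x), rfl⟩
  exact hle this

lemma gm_det_ne : (gm F).det ≠ 0 := by
  rw [gm_det]
  exact pow_ne_zero _ (pow_ne_zero _ (Nat.cast_add_one_ne_zero _))

lemma bb_indep (hw : SW ρ ν w) (hi : Inv ρ h) (h0 : h w w ≠ 0) : LinearIndependent ℂ (bb ρ w) := by
  rw [Fintype.linearIndependent_iff]
  intro c hc i
  have : gm F *ᵥ c = 0 := by
    funext j
    have := congrArg (fun z => h (bb ρ w j) z) hc
    simp only [map_sum, map_smul, map_zero, smul_eq_mul, gramB hw hi] at this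
    have h1 : (h w w / Fintype.card F) * ∑ i, gm F j i * c i = 0 := by
      rw [Finset.mul_sum, ← this]
      exact Finset.sum_congr rfl fun _ _ => by ring
    exact (mul_eq_zero.1 h1).resolve_left (div_ne_zero h0 q_ne)
  exact congrFun (Matrix.eq_zero_of_mulVec_eq_zero gm_det_ne this) i

lemma bb_finrank (hρ : Irr ρ) (hw : SW ρ ν w) (hi : Inv ρ h) (h0 : h w w ≠ 0) :
    Module.finrank ℂ V = Fintype.card F * (Fintype.card F ^ 2 + Fintype.card F + 1) := by
  have b := Module.Basis.mk (bb_indep hw hi h0) (bb_span hρ hw).ge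
  rw [Module.finrank_eq_card_basis b, Fintype.card_prod, cosets_card, mul_comm]

/-- a vector fixed by everything fixing w is orthogonal to translates -/
lemma fix_orth (hw : SW ρ ν w) (hi : Inv ρ h) {v : V} (hv : ∀ g, ρ g w = w → ρ g v = v)
    {g : SpecialLinearGroup (Fin 3) F} (hg : g ∉ PS F) (y : F) : h v (ρ g (ff ρ w y)) = 0 := by
  obtain ⟨t, ht⟩ := hw.ex
  have hu : ∀ a b c, ρ (ux a b c) v = v := fun a b c => hv _ (hw.u a b c)
  have hfx : ∀ {g}, ρ g v = v → ∀ z, h v (ρ g z) = h v z := by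
    intro g hg z
    conv_lhs => rw [← hg]
    exact hi _ _ _
  have ht1 : ρ (dS t⁻¹ t) v = v := hv _ (by rw [hw.d]; simp)
  have ht2 : ρ (dS t t⁻¹) v = v := hv _ (by rw [hw.d]; simp)
  -- the two basic vanishing statements
  have k1 : h v (ρ rS (ρ sS w)) = 0 := by
    refine wt_zero hi ht1 (c := ν t) ?_ ht
    rw [← rho_mul, dS_r, rho_mul, ← rho_mul _ _ sS, dS_s, rho_mul, hw.d, map_smul, map_smul]; simp
  have k2 : h v (ρ sS (ρ rS (ρ sS w))) = 0 := by
    refine wt_zero hi ht2 (c := ν t) ?_ ht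
    rw [← rho_mul, dS_s, rho_mul, ← rho_mul _ _ rS, dS_r, rho_mul, ← rho_mul _ _ sS, dS_s, rho_mul,
      hw.d, map_smul, map_smul, map_smul]; simp
  have ky : ∀ y, ρ rS (ff ρ w y) = ρ (ux 0 y 0) (ρ rS (ρ sS w)) := by
    intro y
    rw [ff, ← rho_mul, r_u, rho_mul]
  have kW1 : ∀ z ∈ WW ρ w, h v (ρ rS z) = 0 := by
    intro z hz
    have : WW ρ w ≤ LinearMap.ker ((h v).comp (ρ rS)) := by
      rw [WW, Submodule.span_le]
      rintro _ ⟨y, rfl⟩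
      change h v (ρ rS (ff ρ w y)) = 0
      rw [ky, hfx (hu _ _ _), k1]
    exact this hz
  have kW2 : ∀ z ∈ WW ρ w, h v (ρ sS (ρ rS z)) = 0 := by
    intro z hz
    have : WW ρ w ≤ LinearMap.ker ((h v).comp ((ρ sS).comp (ρ rS))) := by
      rw [WW, Submodule.span_le]
      rintro _ ⟨y, rfl⟩
      change h v (ρ sS (ρ rS (ff ρ w y))) = 0
      rw [ky, ← rho_mul, s_u, rho_mul, hfx (hu _ _ _), k2]
    exact this hz
  rcases PS_or g with ⟨a, b, c, a', b', c', t1, t2, e | e⟩ | ⟨a, b, c, t1, t2, n, p, hn, hp, e⟩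
  · exact absurd (by rw [e]; exact mul_mem (mul_mem (ux_PS _ _ _) (dS_PS _ _)) (ux_PS _ _ _)) hg
  · exact absurd (by
      rw [e]
      exact mul_mem (mul_mem (mul_mem (ux_PS _ _ _) (dS_PS _ _)) sS_PS) (ux_PS _ _ _)) hg
  · have hz : ∀ z1 z2, ρ (dS z1 z2) (ρ p (ff ρ w y)) ∈ WW ρ w := fun z1 z2 =>
      WW_d hw _ _ _ (WW_P hw hp _ (ff_mem y))
    rcases hn with rfl | rfl
    · rw [e, mul_one, rho_mul, rho_mul, rho_mul, hfx (hu _ _ _), ← rho_mul, dS_r, rho_mul]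
      exact kW1 _ (hz _ _)
    · rw [e, rho_mul, rho_mul, rho_mul, rho_mul, hfx (hu _ _ _), ← rho_mul, dS_s, rho_mul,
        ← rho_mul _ _ rS, dS_r, rho_mul]
      exact kW2 _ (hz _ _)

/-- uniqueness of fixed vectors -/
lemma fix_unique (hρ : Irr ρ) (hw : SW ρ ν w) (hi : Inv ρ h) (hpos : ∀ v, h v v = 0 → v = 0)
    {v : V} (hv : ∀ g, ρ g w = w → ρ g v = v) : ∃ c : ℂ, v = c • w := by
  set Y : Submodule ℂ V := Submodule.span ℂ
    {z | ∃ g, g ∉ PS F ∧ ∃ y, z = ρ g (ff ρ w y)} with hY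
  have htop : WW ρ w ⊔ Y = ⊤ := by
    rw [eq_top_iff, ← bb_span hρ hw, Submodule.span_le]
    rintro _ ⟨⟨i, x⟩, rfl⟩
    by_cases hm : i.out ∈ PS F
    · exact Submodule.mem_sup_left (WW_P hw hm _ (ff_mem _))
    · exact Submodule.mem_sup_right (Submodule.subset_span ⟨_, hm, x, rfl⟩)
  have o1 : ∀ y ∈ Y, h v y = 0 := by
    intro y hy
    have : Y ≤ LinearMap.ker (h v) := by
      rw [hY, Submodule.span_le]
      rintro _ ⟨g, hg, x, rfl⟩
      exact fix_orth hw hi hv hg x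
    exact this hy
  have o2 : ∀ a ∈ WW ρ w, ∀ y ∈ Y, h a y = 0 := by
    intro a ha y hy
    have : Y ≤ LinearMap.ker (h a) := by
      rw [hY, Submodule.span_le]
      rintro _ ⟨g, hg, x, rfl⟩
      exact h_W_W hw hi ha (ff_mem _) hg
    exact this hy
  obtain ⟨a, ha, y, hy, hay⟩ := Submodule.mem_sup.1 (htop ▸ Submodule.mem_top : v ∈ WW ρ w ⊔ Y)
  have hy0 : y = 0 := by
    apply hpos
    have := o1 y hy
    rwa [← hay, map_add, LinearMap.add_apply, o2 a ha y hy, zero_add] at this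
  rw [hy0, add_zero] at hay
  rw [hay] at ha
  -- averaging
  have hA : ∀ z ∈ WW ρ w, ∃ c : ℂ, ∑ x : F, ρ (ux x 0 0) z = c • w := by
    intro z hz
    induction hz using Submodule.span_induction with
    | mem z hz =>
      obtain ⟨y, rfl⟩ := hz
      refine ⟨-1, ?_⟩
      rw [neg_one_smul, ← hw.sum]
      exact Fintype.sum_equiv (Equiv.addRight y) _ _ fun x => ff_u hw _ _ _ _
    | zero => exact ⟨0, by simp⟩
    | add a b _ _ ha hb =>
      obtain ⟨c, hc⟩ := ha
      obtain ⟨d, hd⟩ := hb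
      exact ⟨c + d, by simp only [map_add, Finset.sum_add_distrib, hc, hd, add_smul]⟩
    | smul r a _ ha =>
      obtain ⟨c, hc⟩ := ha
      exact ⟨r * c, by simp only [map_smul, ← Finset.smul_sum, hc, smul_smul]⟩
  obtain ⟨c, hc⟩ := hA v ha
  simp only [hv _ (hw.u _ _ _), Finset.sum_const, Finset.card_univ] at hc
  refine ⟨(Fintype.card F : ℂ)⁻¹ * c, ?_⟩
  rw [mul_smul, ← hc, ← Nat.cast_smul_eq_nsmul ℂ, smul_smul, inv_mul_cancel₀ q_ne, one_smul]

end Cplx2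


section Wrap
variable {G : Type} [Group G] {n : ℕ}

/-- matrix representation as linear maps -/
def lr (ρ : G →* GL (Fin n) ℂ) : G →* ((Fin n → ℂ) →ₗ[ℂ] (Fin n → ℂ)) where
  toFun g := Matrix.toLin' (ρ g : Matrix (Fin n) (Fin n) ℂ)
  map_one' := by rw [map_one, Units.val_one, Matrix.toLin'_one]; rfl
  map_mul' g h := by rw [map_mul, Units.val_mul, Matrix.toLin'_mul]; rfl

lemma lr_apply (ρ : G →* GL (Fin n) ℂ) (g : G) (v : Fin n → ℂ) :
    lr ρ g v = (ρ g : Matrix (Fin n) (Fin n) ℂ) *ᵥ v := rfl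

lemma lr_trace (ρ : G →* GL (Fin n) ℂ) (g : G) :
    LinearMap.trace ℂ (Fin n → ℂ) (lr ρ g) = charOf ρ g :=
  Matrix.trace_toLin'_eq _

lemma lr_irr {ρ : G →* GL (Fin n) ℂ} (h : IsIrredRep ρ) : Irr (lr ρ) := by
  obtain ⟨h0, h⟩ := h
  haveI : Nonempty (Fin n) := ⟨⟨0, h0⟩⟩
  exact ⟨inferInstance, h⟩

lemma charOf_one (ρ : G →* GL (Fin n) ℂ) : charOf ρ 1 = n := by
  simp [charOf]

lemma irr_transfer [Fintype G] {m : ℕ} {ρ0 : G →* GL (Fin m) ℂ} (h0 : IsIrredRep ρ0)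
    {ρ : G →* GL (Fin n) ℂ} (he : charOf ρ0 = charOf ρ)
    (hc : ∀ g, charOf ρ g⁻¹ = (starRingEnd ℂ) (charOf ρ g)) : n = m ∧ IsIrredRep ρ := by
  have hnm : n = m := by
    have := congrFun he 1
    rw [charOf_one, charOf_one] at this
    exact_mod_cast this.symm
  subst hnm
  refine ⟨rfl, h0.1, ?_⟩
  -- intertwiner
  let T : Matrix (Fin n) (Fin n) ℂ → Matrix (Fin n) (Fin n) ℂ := fun A =>
    ∑ g, (ρ g).val * A * (ρ0 g⁻¹).val
  have hT : ∀ A g, (ρ g).val * T A = T A * (ρ0 g).val := by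
    intro A g
    simp only [T, Finset.mul_sum, Finset.sum_mul]
    refine Fintype.sum_equiv (Equiv.mulLeft g) _ _ fun k => ?_
    simp only [Equiv.coe_mulLeft, _root_.mul_inv_rev, map_mul, Units.val_mul, mul_assoc]
    rw [← Units.val_mul (ρ0 g⁻¹), ← map_mul, inv_mul_cancel, map_one, Units.val_one, mul_one]
  have hs : ∑ i, ∑ j, T (Matrix.single i j 1) i j = ∑ g, charOf ρ g * charOf ρ0 g⁻¹ := by
    simp only [T, Matrix.sum_apply]
    rw [Finset.sum_congr rfl fun i _ => Finset.sum_comm, Finset.sum_comm]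
    refine Finset.sum_congr rfl fun g _ => ?_
    simp only [charOf, Matrix.trace, Matrix.diag, Finset.sum_mul_sum]
    refine Finset.sum_congr rfl fun i _ => Finset.sum_congr rfl fun j _ => ?_
    simp [Matrix.mul_apply, Matrix.single, Finset.sum_mul, ite_and]
  have hex : ∃ A, T A ≠ 0 := by
    by_contra hcon
    push Not at hcon
    simp only [hcon, Matrix.zero_apply, Finset.sum_const_zero] at hs
    rw [he] at hs
    have h2 : (∑ g, Complex.normSq (charOf ρ g)) = 0 := by
      have : ((∑ g, Complex.normSq (charOf ρ g) : ℝ) : ℂ) = 0 := by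
        rw [hs, Complex.ofReal_sum]
        refine Finset.sum_congr rfl fun g _ => ?_
        rw [hc, Complex.mul_conj]
      exact_mod_cast this
    rw [Finset.sum_eq_zero_iff_of_nonneg fun g _ => Complex.normSq_nonneg _] at h2
    have := Complex.normSq_eq_zero.1 (h2 1 (Finset.mem_univ _))
    rw [charOf_one] at this
    exact h0.1.ne' (by exact_mod_cast this)
  obtain ⟨A, hA⟩ := hex
  set X := T A with hX
  have hinj : LinearMap.ker (Matrix.toLin' X) = ⊥ := by
    rcases h0.2 (LinearMap.ker (Matrix.toLin' X)) (by
      intro g v hv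
      rw [LinearMap.mem_ker, Matrix.toLin'_apply] at hv ⊢
      rw [Matrix.mulVec_mulVec, ← hT, ← Matrix.mulVec_mulVec, hv, Matrix.mulVec_zero]) with h | h
    · exact h
    · exfalso
      apply hA
      rw [LinearMap.ker_eq_top] at h
      exact (LinearEquiv.map_eq_zero_iff _).1 h
  have hsurj : LinearMap.range (Matrix.toLin' X) = ⊤ := LinearMap.ker_eq_bot_iff_range_eq_top.1 hinj
  intro W hW
  have hWm : (W.comap (Matrix.toLin' X)).map (Matrix.toLin' X) = W := by
    rw [Submodule.map_comap_eq, hsurj, top_inf_eq]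
  rcases h0.2 (W.comap (Matrix.toLin' X)) (by
    intro g v hv
    rw [Submodule.mem_comap, Matrix.toLin'_apply] at hv ⊢
    rw [Matrix.mulVec_mulVec, ← hT, ← Matrix.mulVec_mulVec]
    exact hW g _ hv) with h | h
  · left; rw [← hWm, h, Submodule.map_bot]
  · right; rw [← hWm, h, Submodule.map_top, hsurj]

lemma conj_char {ρ : G →* GL (Fin n) ℂ} {H : Matrix (Fin n) (Fin n) ℂ} (hu : IsUnit H.det)
    (hH : ∀ g, (ρ g : Matrix (Fin n) (Fin n) ℂ)ᴴ * H * (ρ g : Matrix (Fin n) (Fin n) ℂ) = H) (g : G) :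
    charOf ρ g⁻¹ = (starRingEnd ℂ) (charOf ρ g) := by
  have e : (ρ g : Matrix (Fin n) (Fin n) ℂ)ᴴ * H = H * (ρ g⁻¹).val := by
    conv_rhs => rw [← hH g]
    rw [mul_assoc _ _ (ρ g⁻¹).val, ← Units.val_mul, ← map_mul, mul_inv_cancel, map_one, Units.val_one,
      mul_one]
  have e2 : (ρ g : Matrix (Fin n) (Fin n) ℂ)ᴴ = H * (ρ g⁻¹).val * H⁻¹ := by
    rw [← e, mul_assoc, Matrix.mul_nonsing_inv _ hu, mul_one]
  have e3 := congrArg Matrix.trace e2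
  rw [Matrix.trace_conjTranspose, Matrix.trace_mul_comm, ← mul_assoc, Matrix.nonsing_inv_mul _ hu,
    one_mul] at e3
  exact e3.symm

lemma conj_mem {χ : G → ℂ} (h : ∀ g, χ g⁻¹ = (starRingEnd ℂ) (χ g)) {z : ℂ}
    (hz : z ∈ charField χ) : (starRingEnd ℂ) z ∈ charField χ := by
  have : charField χ ≤ (charField χ).comap (starRingEnd ℂ) := by
    rw [charField, Subfield.closure_le]
    rintro _ ⟨g, rfl⟩
    change (starRingEnd ℂ) (χ g) ∈ charField χ
    rw [← h]
    exact Subfield.subset_closure ⟨_, rfl⟩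
  exact this hz

lemma not_real {χ : G → ℂ} (h : NotReal χ) : ¬ ∀ g, (starRingEnd ℂ) (χ g) = χ g := by
  intro hc
  apply h
  rw [charField, Subfield.closure_le]
  rintro _ ⟨g, rfl⟩
  obtain ⟨r, hr⟩ := Complex.conj_eq_iff_real.1 (hc g)
  rw [hr]
  exact Subfield.subset_closure ⟨r, rfl⟩

end Wrap

section Fin
variable {F : Type} [Field F] [CharP F 2] [Fintype F]

lemma char_real' {V : Type*} [AddCommGroup V] [Module ℂ V] [FiniteDimensional ℂ V]
    {ρ : SpecialLinearGroup (Fin 3) F →* (V →ₗ[ℂ] V)} (hρ : Irr ρ)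
    (w0 : V) (hw0 : w0 ≠ 0) (h1 : ∀ a b c, ρ (ux a b c) w0 = w0) (h2 : ∀ a b, ρ (dS a b) w0 = w0)
    (g : SpecialLinearGroup (Fin 3) F) :
    (starRingEnd ℂ) (LinearMap.trace ℂ V (ρ g)) = LinearMap.trace ℂ V (ρ g) := by
  classical
  letI i1 : NormedAddCommGroup V := (avgCore ρ).toNormedAddCommGroup
  letI i2 : InnerProductSpace ℂ V := InnerProductSpace.ofCore (avgCore ρ).toCore
  have hu : Unt ρ := fun g v w => avgCore_inv ρ g v w
  exact char_real hρ hu w0 hw0 h1 h2 g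

/-- existence of the special vector -/
lemma exists_SW {n : ℕ} {ρ : SpecialLinearGroup (Fin 3) F →* GL (Fin n) ℂ} (hρ : IsIrredRep ρ)
    (hq : Even (Fintype.card F)) (hn : Even n) (hr : NotReal (charOf ρ)) :
    ∃ w ν, SW (lr ρ) ν w := by
  have hI := lr_irr hρ
  obtain ⟨w, ν, h1, h2, h3, h4 | ⟨h4, h5⟩⟩ := sl_main hI hq (by simpa using hn)
  · exfalso
    refine not_real hr fun g => ?_
    have := char_real' hI w h1 h2 (fun a b => by rw [h3, h4]; simp) g
    rwa [lr_trace] at this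
  · exact ⟨w, ν, ⟨h1, h2, h3, h4, h5⟩⟩

/-- a positive definite invariant form -/
lemma exists_form {V : Type*} [AddCommGroup V] [Module ℂ V] [FiniteDimensional ℂ V]
    (ρ : SpecialLinearGroup (Fin 3) F →* (V →ₗ[ℂ] V)) :
    ∃ h : V →ₗ⋆[ℂ] V →ₗ[ℂ] ℂ, Inv ρ h ∧ ∀ v, h v v = 0 → v = 0 := by
  classical
  letI i1 : NormedAddCommGroup V := (avgCore ρ).toNormedAddCommGroup
  letI i2 : InnerProductSpace ℂ V := InnerProductSpace.ofCore (avgCore ρ).toCore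
  have hu : Unt ρ := fun g v w => avgCore_inv ρ g v w
  exact ⟨innerₛₗ ℂ, hu, fun v hv => inner_self_eq_zero.1 hv⟩

end Fin


section Disc
variable {F : Type} [Field F] [CharP F 2] [Fintype F]

/-- the sesquilinear form of a matrix -/
def hf {n : ℕ} (H : Matrix (Fin n) (Fin n) ℂ) : (Fin n → ℂ) →ₗ⋆[ℂ] (Fin n → ℂ) →ₗ[ℂ] ℂ :=
  LinearMap.mk₂'ₛₗ (starRingEnd ℂ) (RingHom.id ℂ) (fun v v' => star v ⬝ᵥ (H *ᵥ v'))
    (fun a b c => by rw [star_add, add_dotProduct])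
    (fun c a b => by rw [star_smul, smul_dotProduct]; rfl)
    (fun a b c => by rw [mulVec_add, dotProduct_add])
    (fun c a b => by rw [mulVec_smul, dotProduct_smul]; rfl)

lemma hf_apply {n : ℕ} (H : Matrix (Fin n) (Fin n) ℂ) (v v' : Fin n → ℂ) :
    hf H v v' = star v ⬝ᵥ (H *ᵥ v') := rfl

lemma det_mem {n : ℕ} (L : Subfield ℂ) (A : Matrix (Fin n) (Fin n) ℂ) (h : ∀ i j, A i j ∈ L) :
    A.det ∈ L := by
  rw [Matrix.det_apply']
  exact sum_mem fun σ _ => mul_mem (intCast_mem _ _) (prod_mem fun i _ => h _ _)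

lemma mulVec_mem {n : ℕ} (L : Subfield ℂ) {A : Matrix (Fin n) (Fin n) ℂ} (h : ∀ i j, A i j ∈ L)
    {v : Fin n → ℂ} (hv : ∀ i, v i ∈ L) (i : Fin n) : (A *ᵥ v) i ∈ L := by
  change ∑ j, A i j * v j ∈ L
  exact sum_mem fun j _ => mul_mem (h _ _) (hv _)

/-- an L-rational special vector -/
lemma rat_SW {n : ℕ} {ρ : SpecialLinearGroup (Fin 3) F →* GL (Fin n) ℂ} (hρ : Irr (lr ρ))
    (L : Subfield ℂ) (hL : ∀ g i j, (ρ g : Matrix (Fin n) (Fin n) ℂ) i j ∈ L)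
    {w : Fin n → ℂ} {ν : Fˣ →* ℂ} (hw : SW (lr ρ) ν w) :
    ∃ v : Fin n → ℂ, (∀ i, v i ∈ L) ∧ SW (lr ρ) ν v := by
  classical
  let Q : Subgroup (SpecialLinearGroup (Fin 3) F) :=
    { carrier := {g | lr ρ g w = w}
      one_mem' := rho_one _ _
      mul_mem' := by
        intro a b ha hb
        change lr ρ (a * b) w = w
        rw [rho_mul, hb, ha]
      inv_mem' := by
        intro a ha
        change lr ρ a⁻¹ w = w
        have := rho_inv_cancel (lr ρ) a w
        rwa [show lr ρ a w = w from ha] at this }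
  letI : Fintype Q := Fintype.ofFinite _
  letI : Fintype (SpecialLinearGroup (Fin 3) F ⧸ PS F) := Fintype.ofFinite _
  let E : Matrix (Fin n) (Fin n) ℂ := ∑ g : Q, (ρ g.1).val
  have hE : ∀ g, lr ρ g w = w → (ρ g).val * E = E := by
    intro g hg
    simp only [E, Finset.mul_sum]
    refine Fintype.sum_equiv (Equiv.mulLeft (⟨g, hg⟩ : Q)) _ _ fun k => ?_
    rw [← Units.val_mul, ← map_mul]; rfl
  have hEw : E *ᵥ w = (Fintype.card Q : ℂ) • w := by
    simp only [E, Matrix.sum_mulVec]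
    rw [Finset.sum_congr rfl (g := fun _ => w) (fun g _ => g.2)]
    simp [Nat.cast_smul_eq_nsmul]
  have hE0 : E ≠ 0 := by
    intro h0
    rw [h0, zero_mulVec] at hEw
    exact smul_ne_zero (by exact_mod_cast Fintype.card_ne_zero) hw.ne hEw.symm
  obtain ⟨i, j, hij⟩ : ∃ i j, E i j ≠ 0 := by
    by_contra hc
    push Not at hc
    exact hE0 (Matrix.ext hc)
  have hv : ∀ g, lr ρ g w = w → lr ρ g (fun i => E i j) = fun i => E i j := by
    intro g hg
    have := hE g hg
    funext i
    exact congrFun (congrFun this i) j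
  obtain ⟨h, hi, hpos⟩ := exists_form (lr ρ)
  obtain ⟨c, hc⟩ := fix_unique hρ hw hi hpos hv
  refine ⟨fun i => E i j, fun i => ?_, ?_⟩
  · change E i j ∈ L
    simp only [E, Matrix.sum_apply]
    exact sum_mem fun g _ => hL _ _ _
  · rw [hc]
    refine hw.smul ?_
    rintro rfl
    rw [zero_smul] at hc
    exact hij (congrFun hc i)

lemma dim_eq {n : ℕ} {ρ : SpecialLinearGroup (Fin 3) F →* GL (Fin n) ℂ} (hρ : Irr (lr ρ))
    {w : Fin n → ℂ} {ν : Fˣ →* ℂ} (hw : SW (lr ρ) ν w) :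
    n = Fintype.card F * (Fintype.card F ^ 2 + Fintype.card F + 1) := by
  classical
  letI : Fintype (SpecialLinearGroup (Fin 3) F ⧸ PS F) := Fintype.ofFinite _
  obtain ⟨h, hi, hpos⟩ := exists_form (lr ρ)
  have := bb_finrank hρ hw hi (fun h0 => hw.ne (hpos _ h0))
  simpa using this

lemma disc {n : ℕ} {ρ : SpecialLinearGroup (Fin 3) F →* GL (Fin n) ℂ} (hρ : Irr (lr ρ))
    (hq : Even (Fintype.card F))
    (L : Subfield ℂ) (hL : ∀ g i j, (ρ g : Matrix (Fin n) (Fin n) ℂ) i j ∈ L)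
    (hconj : ∀ z ∈ L, (starRingEnd ℂ) z ∈ L)
    {w : Fin n → ℂ} {ν : Fˣ →* ℂ} (hw : SW (lr ρ) ν w)
    (H : Matrix (Fin n) (Fin n) ℂ) (hHL : ∀ i j, H i j ∈ L) (hu : IsUnit H.det) (hH : Hᴴ = H)
    (hinv : ∀ g, (ρ g : Matrix (Fin n) (Fin n) ℂ)ᴴ * H * (ρ g : Matrix (Fin n) (Fin n) ℂ) = H) :
    ∃ z ∈ L, z ≠ 0 ∧ H.det = ((Fintype.card F : ℂ) + 1) * (z * (starRingEnd ℂ) z) := by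
  classical
  letI : Fintype (SpecialLinearGroup (Fin 3) F ⧸ PS F) := Fintype.ofFinite _
  obtain ⟨v, hvL, hv⟩ := rat_SW hρ L hL hw
  have hn := dim_eq hρ hw
  have hcard : Fintype.card (II F) = n := by
    rw [Fintype.card_prod, cosets_card, mul_comm, hn]
  let e : Fin n ≃ II F := Fintype.equivOfCardEq (by rw [hcard, Fintype.card_fin])
  have hi : Inv (lr ρ) (hf H) := by
    intro g a b
    rw [hf_apply, hf_apply, lr_apply, lr_apply, star_mulVec, mulVec_mulVec, dotProduct_mulVec,
      vecMul_vecMul, ← mul_assoc, hinv, ← dotProduct_mulVec]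
  obtain ⟨h, hhi, hpos⟩ := exists_form (lr ρ)
  let B : Matrix (Fin n) (Fin n) ℂ := Matrix.of fun k i => bb (lr ρ) v (e i) k
  have hBL : ∀ i j, B i j ∈ L := by
    intro i j
    change bb (lr ρ) v (e j) i ∈ L
    rw [bb, ff, lr_apply, lr_apply, lr_apply]
    exact mulVec_mem L (hL _) (mulVec_mem L (hL _) (mulVec_mem L (hL _) hvL)) i
  have hBdet : B.det ≠ 0 := by
    have h1 := (bb_indep hv hhi (fun h0 => hv.ne (hpos _ h0))).comp e e.injective
    have h2 : IsUnit B := Matrix.linearIndependent_cols_iff_isUnit.1 h1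
    exact ((Matrix.isUnit_iff_isUnit_det _).1 h2).ne_zero
  set c : ℂ := hf H v v / Fintype.card F with hc
  have hBHB : Bᴴ * H * B = c • (gm F).submatrix e e := by
    ext i j
    have := gramB hv hi (e i) (e j)
    rw [Matrix.smul_apply, Matrix.submatrix_apply, smul_eq_mul, hc, ← this, hf_apply, mul_assoc,
      Matrix.mul_apply_eq_vecMul]
    rfl
  have hdet := congrArg Matrix.det hBHB
  rw [Matrix.det_mul, Matrix.det_mul, Matrix.det_conjTranspose, Matrix.det_smul,
    Matrix.det_submatrix_equiv_self, gm_det, Fintype.card_fin, ← pow_mul] at hdet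
  have hcr : (starRingEnd ℂ) c = c := by
    rw [hc, map_div₀, map_natCast]
    congr 1
    rw [hf_apply]
    have h1 : star v ⬝ᵥ (H *ᵥ v) = star (star (H *ᵥ v) ⬝ᵥ v) := star_dotProduct _ _
    rw [star_mulVec, hH, ← dotProduct_mulVec] at h1
    exact h1.symm
  have hcL : c ∈ L := by
    rw [hc]
    refine div_mem ?_ (natCast_mem _ _)
    change ∑ i, (starRingEnd ℂ) (v i) * (H *ᵥ v) i ∈ L
    exact sum_mem fun i _ => mul_mem (hconj _ (hvL i)) (mulVec_mem L hHL hvL i)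
  have hqpos : 0 < Fintype.card F := Fintype.card_pos
  have hn0 : 0 < n := by rw [hn]; positivity
  have hc0 : c ≠ 0 := by
    intro h0
    rw [h0, zero_pow hn0.ne', zero_mul] at hdet
    exact mul_ne_zero (mul_ne_zero (star_ne_zero.2 hBdet) hu.ne_zero) hBdet hdet
  obtain ⟨m, hm⟩ : ∃ m, n = 2 * m := by
    obtain ⟨r, hr⟩ := hq
    exact ⟨r * (Fintype.card F ^ 2 + Fintype.card F + 1), by rw [hn]; nlinarith⟩
  obtain ⟨r, hr⟩ : ∃ r, (Fintype.card F - 1) * (Fintype.card F ^ 2 + Fintype.card F + 1) =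
      2 * r + 1 := by
    have h1 : Odd (Fintype.card F - 1) := Nat.Even.sub_odd hqpos hq odd_one
    have h2 : Odd (Fintype.card F ^ 2 + Fintype.card F + 1) :=
      Even.add_one (Even.add (hq.pow_of_ne_zero two_ne_zero) hq)
    exact h1.mul h2
  have hq1 : ((Fintype.card F : ℂ) + 1) ≠ 0 := Nat.cast_add_one_ne_zero _
  refine ⟨c ^ m * ((Fintype.card F : ℂ) + 1) ^ r / B.det, ?_, ?_, ?_⟩
  · exact div_mem (mul_mem (pow_mem hcL _) (pow_mem (add_mem (natCast_mem _ _) (one_mem _)) _))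
      (det_mem L B hBL)
  · exact div_ne_zero (mul_ne_zero (pow_ne_zero _ hc0) (pow_ne_zero _ hq1)) hBdet
  · rw [map_div₀, map_mul, map_pow, map_pow, hcr, map_add, map_natCast, map_one]
    have hs : (starRingEnd ℂ) B.det ≠ 0 := star_ne_zero.2 hBdet
    have hcn : c ^ n = (c ^ m) ^ 2 := by rw [← pow_mul, mul_comm m 2, ← hm]
    rw [hr, hcn] at hdet
    change (starRingEnd ℂ) B.det * H.det * B.det = _ at hdet
    field_simp
    rw [pow_succ _ (2 * r), mul_comm 2 r, pow_mul] at hdet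
    linear_combination hdet

end Disc

/-- for `q` a power of 2, every even-degree irreducible complex
character of `SL₃(F_q)` with non-real character field has degree `q(q²+q+1)`
and unitary discriminant `(-1)^q·(q+1)`. -/
theorem stmt4 (k : ℕ) (hk : 0 < k)
    (F : Type) [Field F] [Fintype F] (hF : Fintype.card F = 2 ^ k)
    (q : ℕ) (hq : q = 2 ^ k)
    (χ : Matrix.SpecialLinearGroup (Fin 3) F → ℂ) (hχ : IsIrrChar χ)
    (heven : ∃ m : ℕ, χ 1 = 2 * (m : ℂ))
    (hnr : NotReal χ) :
    χ 1 = (q : ℂ) * ((q : ℂ) ^ 2 + q + 1) ∧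
    HasUnitaryDisc χ ((-1 : ℂ) ^ q * ((q : ℂ) + 1)) := by
  classical
  haveI : CharP F 2 := by
    obtain ⟨p, hp⟩ := CharP.exists F
    haveI := hp
    haveI : Fact p.Prime := ⟨CharP.char_is_prime F p⟩
    obtain ⟨m, hm1, hm2⟩ := FiniteField.card F p
    rw [hF] at hm2
    have h2 : p ∣ 2 ^ k := hm2 ▸ dvd_pow_self p m.pos.ne'
    have h3 : p = 2 := (Nat.prime_dvd_prime_iff_eq Fact.out Nat.prime_two).1
      ((Fact.out : p.Prime).dvd_of_dvd_pow h2)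
    exact h3 ▸ hp
  have hcq : Fintype.card F = q := by rw [hF, hq]
  have hqe : Even (Fintype.card F) := by
    rw [hF]; exact (Nat.even_pow.2 ⟨even_two, hk.ne'⟩)
  obtain ⟨n0, ρ0, h0, rfl⟩ := hχ
  have hne : Even n0 := by
    obtain ⟨m, hm⟩ := heven
    rw [charOf_one] at hm
    rw [even_iff_two_dvd]
    exact ⟨m, by exact_mod_cast hm⟩
  obtain ⟨w0, ν0, hw0⟩ := exists_SW h0 hqe hne hnr
  have hdim := dim_eq (lr_irr h0) hw0
  rw [hcq] at hdim
  refine ⟨by rw [charOf_one, hdim]; push_cast; ring, ?_⟩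
  intro n ρ hρ hL H hHL hu hH hinv
  have hcc := conj_char hu hinv
  obtain ⟨rfl, hirr⟩ := irr_transfer h0 hρ hcc
  obtain ⟨w, ν, hw⟩ := exists_SW hirr hqe hne (hρ ▸ hnr)
  rw [hρ] at hL hHL ⊢
  obtain ⟨z, hz, hz0, hzd⟩ := disc (lr_irr hirr) hqe (charField (charOf ρ)) hL
    (fun z hz => conj_mem hcc hz) hw H hHL hu hH hinv
  refine ⟨z, hz, hz0, ?_⟩
  rw [hcq] at hzd hqe
  have hk2 : 2 ≤ k := by
    by_contra hc
    have hk1 : k = 1 := by omega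
    obtain ⟨t, ht⟩ := hw.ex
    apply ht
    have : Fintype.card Fˣ = 1 := by rw [Fintype.card_units, hF, hk1]; rfl
    have := Fintype.card_le_one_iff_subsingleton.1 this.le
    rw [Subsingleton.elim t 1, map_one]
  have hsign : Even (n * (n - 1) / 2) := by
    obtain ⟨j, rfl⟩ : ∃ j, k = j + 2 := ⟨k - 2, by omega⟩
    have : n = 2 * (2 * (2 ^ j * (q ^ 2 + q + 1))) := by
      rw [hdim]
      conv_lhs => rw [show q * (q ^ 2 + q + 1) = 2 ^ (j + 2) * (q ^ 2 + q + 1) by rw [← hq]]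
      ring
    rw [even_iff_two_dvd]
    refine ⟨(2 ^ j * (q ^ 2 + q + 1)) * (n - 1), ?_⟩
    apply Nat.div_eq_of_eq_mul_right two_pos
    have h4 : ∀ s, n * s = 2 * (2 * ((2 ^ j * (q ^ 2 + q + 1)) * s)) := by
      intro s
      calc n * s = 2 * (2 * (2 ^ j * (q ^ 2 + q + 1))) * s := by rw [← this]
        _ = _ := by ring
    exact h4 _
  rw [hsign.neg_one_pow, hqe.neg_one_pow, one_mul, one_mul, hzd]

end Paper
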